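/- Let q be a power of an odd prime. Every irreducible complex character of SU_3(q) of degree (q−1)(q²−q+1) whose character field is not contained in ℝ has unitary discriminant q if q ≡ 1 (mod 4) and −q if q ≡ 3 (mod 4). -/

import Mathlib

open Matrix

noncomputable section

namespace Paper

/-- The character of a matrix representation. -/
def charOf {G : Type} [Group G] {n : ℕ} (ρ : G →* GL (Fin n) ℂ) : G → ℂ :=
  fun g => Matrix.trace ((ρ g : Matrix (Fin n) (Fin n) ℂ))

/-- Irreducibility of a complex matrix representation. -/
def IsIrredRep {G : Type} [Group G] {n : ℕ} (ρ : G →* GL (Fin n) ℂ) : Prop :=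
  0 < n ∧ ∀ W : Submodule ℂ (Fin n → ℂ),
    (∀ (g : G), ∀ v ∈ W, (ρ g : Matrix (Fin n) (Fin n) ℂ).mulVec v ∈ W) → W = ⊥ ∨ W = ⊤

/-- `χ` is an irreducible complex character of `G`. -/
def IsIrrChar {G : Type} [Group G] (χ : G → ℂ) : Prop :=
  ∃ (n : ℕ) (ρ : G →* GL (Fin n) ℂ), IsIrredRep ρ ∧ χ = charOf ρ

/-- The character field `ℚ(χ)`, as a subfield of `ℂ`. -/
def charField {G : Type} [Group G] (χ : G → ℂ) : Subfield ℂ :=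
  Subfield.closure (Set.range χ)

/-- The subfield of real numbers inside `ℂ`. -/
def realsIn : Subfield ℂ := Subfield.closure (Set.range ((↑) : ℝ → ℂ))

/-- The character field of `χ` is not contained in `ℝ`. -/
def NotReal {G : Type} [Group G] (χ : G → ℂ) : Prop := ¬ charField χ ≤ realsIn

/-- `χ` has unitary discriminant `d`. -/
def HasUnitaryDisc {G : Type} [Group G] (χ : G → ℂ) (d : ℂ) : Prop :=
  ∀ (n : ℕ) (ρ : G →* GL (Fin n) ℂ),
    χ = charOf ρ →
    (∀ g i j, ((ρ g : Matrix (Fin n) (Fin n) ℂ)) i j ∈ charField χ) →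
    ∀ H : Matrix (Fin n) (Fin n) ℂ,
      (∀ i j, H i j ∈ charField χ) →
      IsUnit H.det →
      H.conjTranspose = H →
      (∀ g, ((ρ g : Matrix (Fin n) (Fin n) ℂ)).conjTranspose * H *
        (ρ g : Matrix (Fin n) (Fin n) ℂ) = H) →
      ∃ z ∈ charField χ, z ≠ 0 ∧
        (-1 : ℂ) ^ (n * (n - 1) / 2) * H.det = d * (z * (starRingEnd ℂ) z)

/-- `χ` has orthogonal discriminant `d`. -/
def HasOrthDisc {G : Type} [Group G] (χ : G → ℂ) (d : ℂ) : Prop :=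
  ∀ (n : ℕ) (ρ : G →* GL (Fin n) ℂ),
    χ = charOf ρ →
    (∀ g i j, ((ρ g : Matrix (Fin n) (Fin n) ℂ)) i j ∈ charField χ) →
    ∀ H : Matrix (Fin n) (Fin n) ℂ,
      (∀ i j, H i j ∈ charField χ) →
      IsUnit H.det →
      H.transpose = H →
      (∀ g, ((ρ g : Matrix (Fin n) (Fin n) ℂ)).transpose * H *
        (ρ g : Matrix (Fin n) (Fin n) ℂ) = H) →
      ∃ z ∈ charField χ, z ≠ 0 ∧
        (-1 : ℂ) ^ (n * (n - 1) / 2) * H.det = d * z ^ 2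

/-- `χ` is a rational character. -/
def IsRationalChar {G : Type} [Group G] (χ : G → ℂ) : Prop :=
  ∀ g, ∃ r : ℚ, χ g = (r : ℂ)

/-- `χ` is the character of a representation over `ℚ`. -/
def RealizableOverQ {G : Type} [Group G] (χ : G → ℂ) : Prop :=
  ∃ (n : ℕ) (ρ : G →* GL (Fin n) ℂ), χ = charOf ρ ∧
    ∀ g i j, ∃ r : ℚ, ((ρ g : Matrix (Fin n) (Fin n) ℂ)) i j = (r : ℂ)

end Paper

namespace Paper

variable (p k : ℕ) (F : Type) [Field F] [Fintype F] [ExpChar F p]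

/-- The Gram matrix `Ω` (anti-diagonal ones). -/
def Om : Matrix (Fin 3) (Fin 3) F :=
  Matrix.of fun i j => if (i : ℕ) + (j : ℕ) = 2 then 1 else 0

/-- Entrywise `q`-power Frobenius `Φ` on `3×3` matrices, where `q = p^k`. -/
def Phi : Matrix (Fin 3) (Fin 3) F →+* Matrix (Fin 3) (Fin 3) F :=
  (iterateFrobenius F p k).mapMatrix

/-- The special unitary group `SU₃(q) = {g ∈ SL₃(F_{q²}) : Φ(g)ᵀ·Ω·g = Ω}`. -/
def SU3 : Subgroup (Matrix.SpecialLinearGroup (Fin 3) F) where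
  carrier := {g | (Phi p k F g.val)ᵀ * Om F * g.val = Om F}
  one_mem' := by
    show (Phi p k F (1 : Matrix.SpecialLinearGroup (Fin 3) F).val)ᵀ * Om F *
        (1 : Matrix.SpecialLinearGroup (Fin 3) F).val = Om F
    simp
  mul_mem' := by
    intro a b ha hb
    show (Phi p k F (a.val * b.val))ᵀ * Om F * (a.val * b.val) = Om F
    have ha' : (Phi p k F a.val)ᵀ * Om F * a.val = Om F := ha
    have hb' : (Phi p k F b.val)ᵀ * Om F * b.val = Om F := hb
    calc (Phi p k F (a.val * b.val))ᵀ * Om F * (a.val * b.val)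
        = (Phi p k F b.val)ᵀ * ((Phi p k F a.val)ᵀ * Om F * a.val) * b.val := by
          rw [_root_.map_mul, Matrix.transpose_mul]; simp only [Matrix.mul_assoc]
      _ = (Phi p k F b.val)ᵀ * Om F * b.val := by rw [ha']
      _ = Om F := hb'
  inv_mem' := by
    intro a ha
    show (Phi p k F (a⁻¹).val)ᵀ * Om F * (a⁻¹).val = Om F
    have ha' : (Phi p k F a.val)ᵀ * Om F * a.val = Om F := ha
    have h1 : a.val * (a⁻¹).val = 1 := by
      rw [← Matrix.SpecialLinearGroup.coe_mul, mul_inv_cancel,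
        Matrix.SpecialLinearGroup.coe_one]
    nth_rewrite 1 [← ha']
    calc (Phi p k F (a⁻¹).val)ᵀ * ((Phi p k F a.val)ᵀ * Om F * a.val) * (a⁻¹).val
        = (Phi p k F a.val * Phi p k F (a⁻¹).val)ᵀ * Om F * (a.val * (a⁻¹).val) := by
          rw [Matrix.transpose_mul]; simp only [Matrix.mul_assoc]
      _ = Om F := by rw [← _root_.map_mul, h1, _root_.map_one, Matrix.transpose_one,
            Matrix.one_mul, Matrix.mul_one]

end Paper

namespace Paper

variable (p k : ℕ) (F : Type) [Field F] [Fintype F] [ExpChar F p]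

/-- The Borel subgroup of `SU₃(q)`: the upper triangular matrices in `SU₃(q)`. -/
def Borel : Subgroup ↥(SU3 p k F) where
  carrier := {g | Matrix.BlockTriangular ((g : Matrix.SpecialLinearGroup (Fin 3) F) :
    Matrix (Fin 3) (Fin 3) F) id}
  one_mem' := by
    show Matrix.BlockTriangular ((1 : Matrix.SpecialLinearGroup (Fin 3) F) :
      Matrix (Fin 3) (Fin 3) F) id
    rw [Matrix.SpecialLinearGroup.coe_one]
    exact Matrix.blockTriangular_one
  mul_mem' := by
    intro a b ha hb
    exact Matrix.BlockTriangular.mul ha hb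
  inv_mem' := by
    intro a ha
    show Matrix.BlockTriangular (((a⁻¹ : ↥(SU3 p k F)) : Matrix.SpecialLinearGroup (Fin 3) F) :
      Matrix (Fin 3) (Fin 3) F) id
    have hcoe : (((a⁻¹ : ↥(SU3 p k F)) : Matrix.SpecialLinearGroup (Fin 3) F) :
        Matrix (Fin 3) (Fin 3) F)
        = (((a : ↥(SU3 p k F)) : Matrix.SpecialLinearGroup (Fin 3) F) :
          Matrix (Fin 3) (Fin 3) F)⁻¹ := by
      rw [show ((a⁻¹ : ↥(SU3 p k F)) : Matrix.SpecialLinearGroup (Fin 3) F)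
        = ((a : ↥(SU3 p k F)) : Matrix.SpecialLinearGroup (Fin 3) F)⁻¹ from rfl]
      rw [Matrix.SpecialLinearGroup.coe_inv, Matrix.inv_def,
        ((a : ↥(SU3 p k F)) : Matrix.SpecialLinearGroup (Fin 3) F).2]
      simp
    rw [hcoe]
    haveI : Invertible (((a : ↥(SU3 p k F)) : Matrix.SpecialLinearGroup (Fin 3) F) :
        Matrix (Fin 3) (Fin 3) F) := by
      apply Matrix.invertibleOfIsUnitDet
      rw [((a : ↥(SU3 p k F)) : Matrix.SpecialLinearGroup (Fin 3) F).2]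
      exact isUnit_one
    exact Matrix.blockTriangular_inv_of_blockTriangular ha

end Paper

/-!
Restrict the representation to the Borel subgroup `U ⋊ T` of `SU₃(q)`, and let `Z` be the center of
`U`, of order `q`. Over `E = L(ζ_p)` the restriction to `U` splits by Fourier idempotents: `e_y` for
the characters of `Z`, and `f_s` for the characters of `U / Z` on the `Z`-fixed space `e_0`. The
degree, the bound `|χ(z)|² ≤ |C(z)|` for `z ∈ Z` and the Bruhat decomposition force `f_0 = 0` and
`dim e_0 = q² - 1`; each of the `q - 1` other `e_y` then has dimension `q (q - 2)`.

A generator `t` of `T` permutes the `e_y` with `y ≠ 0`. It interchanges the two halves of `e_0`,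
the sums of the `f_s` over the squares and over the nonsquares `s`, and it has determinant `-1` on
`e_0` and on the sum of the other `e_y`. Let `P` be the matrix with columns `X, tX, b, tb, …`, where
`X` is a basis of the first half, fixed by `Gal(E/L)`, and `b` is a basis of one of the `e_y`. The
isotypic parts are orthogonal for `H`, so `det H` is a square times a `(q - 1)`-st power up to the
norm of `det P`. An element of `Gal(E/L)` acting on `ζ_p` like conjugation by the torus element of
parameter `x` multiplies `det P` by the quadratic character of `x` and by the `(q - 1)`-st power of
a cocycle. Hilbert 90 removes the cocycle, and a quadratic Gauss sum, of norm `q`, removes the sign;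
this is how the factor `q` enters. The sign `(-1) ^ (n (n - 1) / 2)` is read off from
`n ≡ q - 1 mod 4`.
-/

namespace Paper

section Idempotent

variable {E : Type*} [Field E] {n r : ℕ} {e : Matrix (Fin n) (Fin n) E}
  {b : Matrix (Fin n) (Fin r) E} {b' : Matrix (Fin r) (Fin n) E}

theorem exists_factor_of_isIdempotentElem (he : IsIdempotentElem e) :
    ∃ r, ∃ b : Matrix (Fin n) (Fin r) E, ∃ b' : Matrix (Fin r) (Fin n) E,
      b * b' = e ∧ b' * b = 1 := by
  let f := toLin' e
  let φ := (Module.finBasis E (LinearMap.range f)).equivFun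
  have hf : ∀ w : LinearMap.range f, f.rangeRestrict w = w := by
    rintro ⟨_, v, rfl⟩
    exact Subtype.ext <| by simp [f, mulVec_mulVec, he.eq]
  refine ⟨_, LinearMap.toMatrix' ((LinearMap.range f).subtype ∘ₗ φ.symm.toLinearMap),
    LinearMap.toMatrix' (φ.toLinearMap ∘ₗ f.rangeRestrict), ?_, ?_⟩
  · have h : ((LinearMap.range f).subtype ∘ₗ φ.symm.toLinearMap) ∘ₗ
        (φ.toLinearMap ∘ₗ f.rangeRestrict) = f := LinearMap.ext fun v => by simp
    rw [← LinearMap.toMatrix'_comp, h, LinearMap.toMatrix'_toLin']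
  · have h : (φ.toLinearMap ∘ₗ f.rangeRestrict) ∘ₗ
        ((LinearMap.range f).subtype ∘ₗ φ.symm.toLinearMap) = LinearMap.id :=
      LinearMap.ext fun v => by simp [hf]
    rw [← LinearMap.toMatrix'_comp, h, LinearMap.toMatrix'_id]

theorem trace_eq_natCast_of_factor (hbb' : b * b' = e) (hb'b : b' * b = 1) : e.trace = r := by
  rw [← hbb', trace_mul_comm, hb'b, trace_one, Fintype.card_fin]

theorem exists_natCast_eq_trace_of_isIdempotentElem (he : IsIdempotentElem e) :
    ∃ r : ℕ, e.trace = r :=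
  let ⟨r, _, _, hbb', hb'b⟩ := exists_factor_of_isIdempotentElem he
  ⟨r, trace_eq_natCast_of_factor hbb' hb'b⟩

theorem exists_factor_of_trace_eq [CharZero E] (he : IsIdempotentElem e) (hr : e.trace = r) :
    ∃ b : Matrix (Fin n) (Fin r) E, ∃ b' : Matrix (Fin r) (Fin n) E,
      b * b' = e ∧ b' * b = 1 := by
  obtain ⟨m, b, b', hbb', hb'b⟩ := exists_factor_of_isIdempotentElem he
  obtain rfl : r = m := by
    exact_mod_cast hr.symm.trans (trace_eq_natCast_of_factor hbb' hb'b)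
  exact ⟨b, b', hbb', hb'b⟩

theorem eq_zero_of_trace_eq_zero [CharZero E] (he : IsIdempotentElem e) (h0 : e.trace = 0) :
    e = 0 := by
  obtain ⟨b, b', rfl, -⟩ := exists_factor_of_trace_eq (r := 0) he (by simpa using h0)
  ext i j
  simp [mul_apply]

theorem det_mul_add_one_sub_of_factor (hbb' : b * b' = e) (hb'b : b' * b = 1)
    (M : Matrix (Fin n) (Fin n) E) : (M * e + (1 - e)).det = (b' * M * b).det := by
  have h : M * e + (1 - e) = 1 + ((M - 1) * b) * b' := by
    rw [Matrix.mul_assoc, hbb']; noncomm_ring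
  rw [h, det_one_add_mul_comm, ← Matrix.mul_assoc, Matrix.mul_sub, Matrix.sub_mul, Matrix.mul_one,
    hb'b, add_sub_cancel]

variable [CharZero E]

theorem det_one_add_smul_of_isIdempotentElem (he : IsIdempotentElem e) (hr : e.trace = r) (c : E) :
    (1 + (c - 1) • e).det = c ^ r := by
  obtain ⟨b, b', hbb', hb'b⟩ := exists_factor_of_trace_eq he hr
  have h : 1 + (c - 1) • e = (c • 1) * e + (1 - e) := by
    simp only [sub_smul, one_smul, Matrix.smul_mul, Matrix.one_mul]; abel
  rw [h, det_mul_add_one_sub_of_factor hbb' hb'b]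
  simp [hb'b]

theorem det_one_add_sum_smul_of_orthogonal {ι : Type*} {e : ι → Matrix (Fin n) (Fin n) E}
    {r : ι → ℕ} (he : OrthogonalIdempotents e) (hr : ∀ s, (e s).trace = r s) (c : ι → E)
    (S : Finset ι) : (1 + ∑ s ∈ S, (c s - 1) • e s).det = ∏ s ∈ S, c s ^ r s := by
  classical
  induction S using Finset.induction_on with
  | empty => simp
  | insert a S ha ih =>
    have h0 : e a * ∑ s ∈ S, (c s - 1) • e s = 0 := by
      rw [Finset.mul_sum]
      refine Finset.sum_eq_zero fun s hs => ?_
      rw [Matrix.mul_smul, he.ortho (ne_of_mem_of_not_mem hs ha).symm, smul_zero]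
    have hmul : 1 + ∑ s ∈ insert a S, (c s - 1) • e s =
        (1 + (c a - 1) • e a) * (1 + ∑ s ∈ S, (c s - 1) • e s) := by
      simp only [Finset.sum_insert ha, add_mul, smul_mul_assoc, mul_add, h0, one_mul, mul_one,
        add_zero, smul_zero]
      abel
    rw [Finset.prod_insert ha, ← ih, hmul, det_mul,
      det_one_add_smul_of_isIdempotentElem (he.idem a) (hr a)]

end Idempotent

section Fourier

variable {E : Type*} [Field E] {R : Type*} [CommRing R] [Fintype R]

/-- The Fourier coefficient at `s` of a function `M` on a finite ring `R`, with respect to the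
additive character `ψ`. When `M` is additive-to-multiplicative and `ψ` is primitive, these are the
orthogonal projections onto the isotypic components of `M`, `M b` acting by `ψ (s * b)` on the one
of index `s`. -/
def fourierCoeff {A : Type*} [Ring A] [Algebra E A] (ψ : AddChar R E) (M : R → A) (s : R) : A :=
  (Fintype.card R : E)⁻¹ • ∑ a, ψ (-(s * a)) • M a

section Algebra

variable {A : Type*} [Ring A] [Algebra E A] {ψ : AddChar R E} {M : R → A}

theorem mul_fourierCoeff (hM : ∀ a b, M (a + b) = M a * M b) (b s : R) :
    M b * fourierCoeff ψ M s = ψ (s * b) • fourierCoeff ψ M s := by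
  rw [fourierCoeff, mul_smul_comm, smul_comm (ψ (s * b))]
  congr 1
  rw [Finset.mul_sum, Finset.smul_sum,
    ← Equiv.sum_comp (Equiv.addLeft b) (fun a => ψ (s * b) • ψ (-(s * a)) • M a)]
  refine Finset.sum_congr rfl fun a _ => ?_
  rw [Equiv.coe_addLeft, hM, mul_smul_comm, smul_smul, ← AddChar.map_add_eq_mul]
  ring_nf

theorem fourierCoeff_mul (hM : ∀ a b, M (a + b) = M a * M b) (b s : R) :
    fourierCoeff ψ M s * M b = ψ (s * b) • fourierCoeff ψ M s := by
  rw [← mul_fourierCoeff hM, fourierCoeff, mul_smul_comm, smul_mul_assoc, Finset.mul_sum,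
    Finset.sum_mul]
  congr 1
  refine Finset.sum_congr rfl fun a _ => ?_
  rw [mul_smul_comm, smul_mul_assoc, ← hM, ← hM, add_comm]

theorem map_zero_mul_fourierCoeff (hM : ∀ a b, M (a + b) = M a * M b) (s : R) :
    M 0 * fourierCoeff ψ M s = fourierCoeff ψ M s := by
  simp [mul_fourierCoeff hM]

theorem fourierCoeff_mul_map_zero (hM : ∀ a b, M (a + b) = M a * M b) (s : R) :
    fourierCoeff ψ M s * M 0 = fourierCoeff ψ M s := by
  simp [fourierCoeff_mul hM]

theorem mul_fourierCoeff_mul {A₁ A₂ : A} (c : Rˣ) (h : ∀ a, A₁ * M a * A₂ = M (c * a)) (s : R) :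
    A₁ * fourierCoeff ψ M s * A₂ = fourierCoeff ψ M (s * ↑c⁻¹) := by
  rw [fourierCoeff, fourierCoeff, mul_smul_comm, smul_mul_assoc, Finset.mul_sum, Finset.sum_mul,
    ← Equiv.sum_comp (Units.mulLeft c) (fun a => ψ (-(s * ↑c⁻¹ * a)) • M a)]
  congr 1
  refine Finset.sum_congr rfl fun a _ => ?_
  rw [mul_smul_comm, smul_mul_assoc, h]
  simp [mul_assoc]

variable [CharZero E]

theorem fourierCoeff_mul_fourierCoeff [DecidableEq R] (hψ : ψ.IsPrimitive)
    (hM : ∀ a b, M (a + b) = M a * M b) (s s' : R) :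
    fourierCoeff ψ M s * fourierCoeff ψ M s' = if s = s' then fourierCoeff ψ M s else 0 := by
  have hcard : (Fintype.card R : E) ≠ 0 := by exact_mod_cast Fintype.card_ne_zero
  have key : fourierCoeff ψ M s * fourierCoeff ψ M s' =
      ((Fintype.card R : E)⁻¹ * ∑ a, ψ (a * (s' - s))) • fourierCoeff ψ M s' := by
    conv_lhs => rw [fourierCoeff]
    rw [smul_mul_assoc, Finset.sum_mul, mul_smul, Finset.sum_smul]
    congr 1
    refine Finset.sum_congr rfl fun a _ => ?_
    rw [smul_mul_assoc, mul_fourierCoeff hM, smul_smul, ← AddChar.map_add_eq_mul]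
    ring_nf
  rw [key, AddChar.sum_mulShift _ hψ]
  rcases eq_or_ne s s' with rfl | h
  · simp [hcard]
  · simp [h, sub_ne_zero.mpr h.symm]

theorem orthogonalIdempotents_fourierCoeff (hψ : ψ.IsPrimitive)
    (hM : ∀ a b, M (a + b) = M a * M b) : OrthogonalIdempotents (fourierCoeff ψ M) := by
  classical
  exact OrthogonalIdempotents.iff_mul_eq.mpr fun s s' =>
    (fourierCoeff_mul_fourierCoeff hψ hM s s').trans (by rfl)

theorem sum_fourierCoeff (hψ : ψ.IsPrimitive) : ∑ s, fourierCoeff ψ M s = M 0 := by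
  classical
  have hcard : (Fintype.card R : E) ≠ 0 := by exact_mod_cast Fintype.card_ne_zero
  have hsum : ∀ a, ∑ s, ψ (-(s * a)) • M a =
      if a = 0 then (Fintype.card R : E) • M 0 else 0 := fun a => by
    have h := AddChar.sum_mulShift (-a) hψ
    simp only [mul_neg, neg_eq_zero] at h
    rw [← Finset.sum_smul, h]
    split_ifs with h0
    · rw [h0]
    · rw [Nat.cast_zero, zero_smul]
  simp only [fourierCoeff]
  rw [← Finset.smul_sum, Finset.sum_comm, Finset.sum_congr rfl fun a _ => hsum a]
  simp [smul_smul, hcard]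

end Algebra

section Matrix

variable {n : ℕ} {ψ : AddChar R E} {M : R → Matrix (Fin n) (Fin n) E}

theorem trace_fourierCoeff (s : R) : (fourierCoeff ψ M s).trace =
    (Fintype.card R : E)⁻¹ * ∑ a, ψ (-(s * a)) * (M a).trace := by
  simp [fourierCoeff, trace_sum]

theorem map_fourierCoeff {E' : Type*} [Field E'] (f : E →+* E') {ψ' : AddChar R E'}
    (hψ' : ∀ a, ψ' a = f (ψ a)) (s : R) :
    (fourierCoeff ψ M s).map f = fourierCoeff ψ' (fun a => (M a).map f) s := by
  ext i j
  simp [fourierCoeff, Matrix.sum_apply, hψ']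

end Matrix

end Fourier

section CyclicGroup

theorem pow_mod_mul_eq_pow_mul {A : Type*} [Monoid A] {S e : A} {l : ℕ} (hS : S ^ l * e = e)
    (j : ℕ) : S ^ (j % l) * e = S ^ j * e := by
  have h : ∀ d, S ^ (l * d) * e = e := fun d => by
    induction d with
    | zero => simp
    | succ d ih => rw [mul_add_one, pow_add, mul_assoc, hS, ih]
  conv_rhs => rw [← Nat.mod_add_div j l, pow_add, mul_assoc, h]

theorem pow_val_mul_add {A : Type*} [Monoid A] {S e : A} {l : ℕ} [NeZero l] (he : e * e = e)
    (hSe : Commute S e) (hS : S ^ l * e = e) (a b : ZMod l) :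
    S ^ (a + b).val * e = S ^ a.val * e * (S ^ b.val * e) := by
  rw [ZMod.val_add, pow_mod_mul_eq_pow_mul hS, pow_add, mul_assoc, mul_assoc, ← mul_assoc e,
    ← (hSe.pow_left b.val).eq, mul_assoc _ e, he]

theorem stdAddChar_one_pow_half {d : ℕ} [NeZero (2 * d)] :
    ZMod.stdAddChar (1 : ZMod (2 * d)) ^ d = -1 := by
  have hd : 0 < 2 * d := Nat.pos_of_ne_zero (NeZero.ne _)
  have hsq : (ZMod.stdAddChar (1 : ZMod (2 * d)) ^ d) ^ 2 = 1 := by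
    rw [← pow_mul, ← AddChar.map_nsmul_eq_pow, nsmul_one, mul_comm d, ZMod.natCast_self,
      AddChar.map_zero_eq_one]
  refine (sq_eq_one_iff.mp hsq).resolve_left ?_
  rw [← AddChar.map_nsmul_eq_pow, nsmul_one,
    ← (ZMod.stdAddChar (N := 2 * d)).map_zero_eq_one,
    ZMod.injective_stdAddChar.eq_iff, ZMod.natCast_eq_zero_iff]
  exact fun h => by have := Nat.le_of_dvd (by lia) h; lia

theorem prod_stdAddChar_of_even {l : ℕ} [NeZero l] (hl : Even l) :
    ∏ s : ZMod l, ZMod.stdAddChar s = -1 := by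
  obtain ⟨d, rfl⟩ := even_iff_two_dvd.mp hl
  have hd : 0 < d := by have := NeZero.ne (2 * d); lia
  have hrange : ∏ s : ZMod (2 * d), ZMod.stdAddChar s =
      ∏ i ∈ Finset.range (2 * d), ZMod.stdAddChar (1 : ZMod (2 * d)) ^ i := by
    refine Finset.prod_bij' (fun s _ => s.val) (fun i _ => (i : ZMod (2 * d)))
      (fun a _ => by simpa using ZMod.val_lt a) (by simp) (by simp)
      (fun a ha => ZMod.val_cast_of_lt (by simpa using ha)) fun a _ => ?_
    rw [← AddChar.map_nsmul_eq_pow]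
    simp
  rw [hrange, Finset.prod_pow_eq_pow_sum, Finset.sum_range_id, mul_assoc, Nat.mul_div_cancel_left _
    two_pos, pow_mul, stdAddChar_one_pow_half]
  exact Odd.neg_one_pow ⟨d - 1, by lia⟩

/- By the trace hypotheses every `l`-th root of unity is an eigenvalue of `S` on the image of `e`
with the same multiplicity `K`. -/
theorem det_of_trace_pow_eq_zero {n l K : ℕ} [NeZero l] (hl : Even l)
    {S e : Matrix (Fin n) (Fin n) ℂ} (he : e * e = e) (hSe : Commute S e) (hS : S ^ l * e = e)
    (ht : ∀ j, 0 < j → j < l → (S ^ j * e).trace = 0) (hK : e.trace = (l * K : ℕ)) :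
    (S * e + (1 - e)).det = (-1) ^ K := by
  let M : ZMod l → Matrix (Fin n) (Fin n) ℂ := fun j => S ^ j.val * e
  let P := fourierCoeff ZMod.stdAddChar M
  have hM : ∀ a b, M (a + b) = M a * M b := pow_val_mul_add he hSe hS
  have hM0 : M 0 = e := by simp [M]
  have hM1 : M 1 = S * e := by
    simp only [M]
    rw [ZMod.val_one_eq_one_mod, pow_mod_mul_eq_pow_mul hS, pow_one]
  have hψ := ZMod.isPrimitive_stdAddChar l
  have htr : ∀ s, (P s).trace = K := fun s => by
    rw [trace_fourierCoeff, Finset.sum_eq_single 0 _ (by simp), hM0, hK]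
    · have hl0 : (l : ℂ) ≠ 0 := NeZero.ne _
      simp [ZMod.card, hl0]
    · intro b _ hb
      rw [ht _ (Nat.pos_of_ne_zero (by simpa using hb)) (ZMod.val_lt b), mul_zero]
  have hsum : S * e + (1 - e) = 1 + ∑ s, (ZMod.stdAddChar s - 1) • P s := by
    have h1 : S * e = ∑ s, ZMod.stdAddChar s • P s := by
      rw [← hM1, ← add_zero (1 : ZMod l), hM, ← sum_fourierCoeff (M := M) hψ, Finset.mul_sum]
      simp only [mul_fourierCoeff hM, mul_one, P]
    simp only [sub_smul, one_smul, Finset.sum_sub_distrib]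
    rw [← h1, sum_fourierCoeff hψ, hM0]
    abel
  rw [hsum, det_one_add_sum_smul_of_orthogonal (orthogonalIdempotents_fourierCoeff hψ hM) htr,
    Finset.prod_pow, prod_stdAddChar_of_even hl]

end CyclicGroup

theorem sq_sub_one_eq_mul (q : ℕ) : q ^ 2 - 1 = (q + 1) * (q - 1) := by
  simpa using Nat.sq_sub_sq q 1

/-- `F` is a field with `q²` elements, `q` odd; then `a ↦ a ^ q` is the involution of `F` defining
`SU₃(q)`. -/
structure HasOddSquareCard (q : ℕ) (F : Type*) [Field F] [Fintype F] : Prop where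
  odd : Odd q
  card : Fintype.card F = q ^ 2

namespace HasOddSquareCard

open Finset

variable {q : ℕ} {F : Type*} [Field F] [Fintype F] (hF : HasOddSquareCard q F)

include hF

theorem three_le : 3 ≤ q := by
  have h1 : 1 < q ^ 2 := hF.card ▸ Fintype.one_lt_card
  have h2 : q ≠ 1 := by rintro rfl; simp at h1
  have h3 : q ≠ 0 := by rintro rfl; simp at h1
  have h4 : q ≠ 2 := by rintro rfl; exact absurd hF.odd (by decide)
  lia

theorem ringChar_ne_two : ringChar F ≠ 2 := by
  rw [Ne, FiniteField.even_card_iff_char_two, hF.card, ← Nat.even_iff, Nat.not_even_iff_odd]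
  exact hF.odd.pow

theorem two_ne_zero : (2 : F) ≠ 0 := Ring.two_ne_zero hF.ringChar_ne_two

theorem add_pow (a b : F) : (a + b) ^ q = a ^ q + b ^ q := by
  obtain ⟨p, hp⟩ := CharP.exists F
  obtain ⟨m, hp', hm⟩ := FiniteField.card F p
  have hdvd : q ∣ p ^ (m : ℕ) := by rw [← hm, hF.card]; exact dvd_pow_self q (by decide)
  obtain ⟨j, -, rfl⟩ := (Nat.dvd_prime_pow hp').mp hdvd
  have := Fact.mk hp'
  exact add_pow_char_pow a b p j

theorem pow_pow (a : F) : (a ^ q) ^ q = a := by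
  rw [← pow_mul, ← sq, ← hF.card, FiniteField.pow_card]

theorem neg_pow (a : F) : (-a) ^ q = -a ^ q := hF.odd.neg_pow a

theorem sub_pow (a b : F) : (a - b) ^ q = a ^ q - b ^ q := by
  rw [sub_eq_add_neg, hF.add_pow, hF.neg_pow, sub_eq_add_neg]

theorem two_pow : (2 : F) ^ q = 2 := by
  rw [← one_add_one_eq_two, hF.add_pow, one_pow]

theorem norm_pow (x : F) : (x ^ (q + 1)) ^ q = x ^ (q + 1) := by
  rw [pow_succ, mul_pow, hF.pow_pow, mul_comm]

section Card

theorem natCard_pow_eq_mul_le (c : F) : Nat.card {a : F // a ^ q = c * a} ≤ q := by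
  classical
  have hq := hF.three_le
  let P : Polynomial F := .X ^ q - .C c * .X
  have hdeg : P.natDegree = q := by
    refine Polynomial.natDegree_eq_of_degree_eq_some ?_
    rw [Polynomial.degree_sub_eq_left_of_degree_lt, Polynomial.degree_X_pow]
    rw [Polynomial.degree_X_pow]
    exact (Polynomial.degree_C_mul_X_le c).trans_lt (by exact_mod_cast (by lia : 1 < q))
  have hP : P ≠ 0 := by
    intro h
    rw [h, Polynomial.natDegree_zero] at hdeg
    lia
  have hroots : univ.filter (fun a : F => a ^ q = c * a) ⊆ P.roots.toFinset := fun a ha => by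
    simpa [hP, P, sub_eq_zero] using ha
  calc Nat.card {a : F // a ^ q = c * a}
      = #{a : F | a ^ q = c * a} := by rw [Nat.card_eq_fintype_card, Fintype.card_subtype]
    _ ≤ #P.roots.toFinset := card_le_card hroots
    _ ≤ q := (Multiset.toFinset_card_le _).trans (P.card_roots'.trans hdeg.le)

/-- The additive endomorphism `a ↦ a - a ^ q` of `F`. -/
def subConj : F →+ F :=
  AddMonoidHom.mk' (fun a => a - a ^ q) fun a b => by rw [hF.add_pow]; ring

/- `a ↦ a - a ^ q` has kernel `{a | a ^ q = a}` and range inside `{a | a ^ q = -a}`; neither set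
has more than `q` elements, while the product of the cardinalities of kernel and range is `q²`. -/
theorem natCard_pow_eq_self_and_neg :
    Nat.card {a : F // a ^ q = a} = q ∧ Nat.card {a : F // a ^ q = -a} = q := by
  have hself := hF.natCard_pow_eq_mul_le 1
  have hneg := hF.natCard_pow_eq_mul_le (-1)
  simp only [one_mul, neg_one_mul] at hself hneg
  have hker : Nat.card hF.subConj.ker ≤ Nat.card {a : F // a ^ q = a} :=
    Nat.card_mono (s := {a | a ∈ hF.subConj.ker}) (t := {a | a ^ q = a}) (Set.toFinite _)
      fun a ha => (sub_eq_zero.mp ha).symm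
  have hrange : Nat.card hF.subConj.range ≤ Nat.card {a : F // a ^ q = -a} :=
    Nat.card_mono (s := {a | a ∈ hF.subConj.range}) (t := {a | a ^ q = -a}) (Set.toFinite _) <| by
      rintro _ ⟨a, rfl⟩
      change (a - a ^ q) ^ q = -(a - a ^ q)
      rw [hF.sub_pow, hF.pow_pow, neg_sub]
  have hprod : Nat.card hF.subConj.ker * Nat.card hF.subConj.range = q ^ 2 := by
    rw [← AddSubgroup.index_ker, AddSubgroup.card_mul_index, Nat.card_eq_fintype_card, hF.card]
  have hle := hprod.symm.trans_le (Nat.mul_le_mul hker hrange)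
  have hq := hF.three_le
  constructor <;> nlinarith

theorem exists_ne_zero_pow_eq_neg : ∃ b : F, b ≠ 0 ∧ b ^ q = -b := by
  have hone : 1 < Nat.card {a : F // a ^ q = -a} := by
    rw [hF.natCard_pow_eq_self_and_neg.2]
    exact one_lt_two.trans hF.three_le
  obtain ⟨⟨a, ha⟩, ⟨b, hb⟩, hab⟩ := (Finite.one_lt_card_iff_nontrivial.mp hone).exists_pair_ne
  rcases eq_or_ne a 0 with rfl | ha0
  · exact ⟨b, fun hb0 => hab (Subtype.ext hb0.symm), hb⟩
  · exact ⟨a, ha0, ha⟩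

theorem pow_ne_self_of_pow_eq_neg {b : F} (hb0 : b ≠ 0) (hb : b ^ q = -b) : b ^ q ≠ b := by
  rw [hb]
  intro h
  exact (mul_ne_zero hF.two_ne_zero hb0) (by linear_combination -h)

variable [DecidableEq F]

theorem card_filter_pow_eq_self : #{a : F | a ^ q = a} = q := by
  rw [← Fintype.card_subtype, ← Nat.card_eq_fintype_card, hF.natCard_pow_eq_self_and_neg.1]

theorem card_filter_pow_eq_neg : #{a : F | a ^ q = -a} = q := by
  rw [← Fintype.card_subtype, ← Nat.card_eq_fintype_card, hF.natCard_pow_eq_self_and_neg.2]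

end Card

section Units

theorem orderOf_eq_of_forall_mem_powers {x₀ : Fˣ} (hx₀ : ∀ x, x ∈ Submonoid.powers x₀) :
    orderOf x₀ = q ^ 2 - 1 := by
  classical
  rw [orderOf_eq_card_of_forall_mem_zpowers fun x => mem_powers_iff_mem_zpowers.mp (hx₀ x),
    Nat.card_eq_fintype_card, Fintype.card_units, hF.card]

theorem exists_norm_eq {a : F} (ha : a ≠ 0) (haq : a ^ q = a) :
    ∃ x : Fˣ, (x : F) ^ (q + 1) = a := by
  have hq := hF.three_le
  obtain ⟨x₀, hx₀⟩ := IsCyclic.exists_monoid_generator (α := Fˣ)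
  obtain ⟨j, hj⟩ := hx₀ (Units.mk0 a ha)
  have hval : (x₀ : F) ^ j = a := by simpa using congrArg Units.val hj
  have hone : x₀ ^ (j * (q - 1)) = 1 := by
    ext
    refine mul_right_cancel₀ ha ?_
    rw [pow_mul, Units.val_pow_eq_pow_val, Units.val_pow_eq_pow_val, hval, ← pow_succ,
      Nat.sub_add_cancel (by lia), haq, Units.val_one, one_mul]
  have hdvd := orderOf_dvd_of_pow_eq_one hone
  rw [hF.orderOf_eq_of_forall_mem_powers hx₀, sq_sub_one_eq_mul] at hdvd
  obtain ⟨i, rfl⟩ := Nat.dvd_of_mul_dvd_mul_right (by lia) hdvd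
  exact ⟨x₀ ^ i, by rw [Units.val_pow_eq_pow_val, ← pow_mul, mul_comm, hval]⟩

theorem even_sq_sub_one : Even (q ^ 2 - 1) :=
  Nat.Odd.sub_odd hF.odd.pow odd_one

/- `x₀ ^ 2 / x₀ ^ q` has order `(q² - 1) / gcd (q² - 1, q - 2)`, and the `gcd` divides
`3 = (q² - 1) - (q + 2) (q - 2)`. -/
theorem exists_dvd_three_orderOf_mul {x₀ : Fˣ} (hx₀ : orderOf x₀ = q ^ 2 - 1) :
    ∃ K, K ∣ 3 ∧ orderOf (x₀ ^ 2 / x₀ ^ q) * K = q ^ 2 - 1 := by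
  have hq := hF.three_le
  let K := (q ^ 2 - 1).gcd (q - 2)
  have hK3 : K ∣ 3 := by
    obtain ⟨r, rfl⟩ : ∃ r, q = r + 2 := ⟨q - 2, by lia⟩
    have h3 : (r + 2) ^ 2 - 1 = (r + 4) * (r + 2 - 2) + 3 := by
      rw [Nat.sub_eq_iff_eq_add (Nat.one_le_pow _ _ (by lia)), Nat.add_sub_cancel]; ring
    exact (Nat.dvd_add_right ((Nat.gcd_dvd_right ..).mul_left (r + 4))).mp
      (h3 ▸ Nat.gcd_dvd_left ((r + 2) ^ 2 - 1) (r + 2 - 2))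
  refine ⟨K, hK3, ?_⟩
  have hinv : x₀ ^ 2 / x₀ ^ q = (x₀ ^ (q - 2))⁻¹ := by
    rw [← inv_div, pow_sub _ (by lia : 2 ≤ q), div_eq_mul_inv]
  rw [hinv, orderOf_inv, orderOf_pow, hx₀, Nat.div_mul_cancel (Nat.gcd_dvd_left ..)]

theorem even_orderOf_sq_div_pow {x₀ : Fˣ} (hx₀ : orderOf x₀ = q ^ 2 - 1) :
    Even (orderOf (x₀ ^ 2 / x₀ ^ q)) := by
  obtain ⟨K, hK, hmul⟩ := hF.exists_dvd_three_orderOf_mul hx₀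
  have h := hF.even_sq_sub_one
  rw [← hmul, Nat.even_mul] at h
  exact h.resolve_right (Nat.not_even_iff_odd.mpr (.of_dvd_nat (by decide) hK))

end Units

section GaussSum

/-- The fixed field of `a ↦ a ^ q`, the subfield of `F` with `q` elements. -/
def fixedSubfield : Subfield F where
  carrier := {a | a ^ q = a}
  mul_mem' {a b} ha hb := by rw [Set.mem_ofPred_eq, mul_pow, ha, hb]
  one_mem' := one_pow q
  add_mem' {a b} ha hb := by rw [Set.mem_ofPred_eq, hF.add_pow, ha, hb]
  zero_mem' := zero_pow (by have := hF.three_le; lia)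
  neg_mem' {a} ha := by rw [Set.mem_ofPred_eq, hF.neg_pow, ha]
  inv_mem' a ha := by rw [Set.mem_ofPred_eq, inv_pow, ha]

theorem mem_fixedSubfield {a : F} : a ∈ hF.fixedSubfield ↔ a ^ q = a := Iff.rfl

theorem natCard_fixedSubfield : Nat.card hF.fixedSubfield = q := hF.natCard_pow_eq_self_and_neg.1

instance : Fintype hF.fixedSubfield := Fintype.ofFinite _

theorem ringChar_fixedSubfield_ne_two : ringChar hF.fixedSubfield ≠ 2 := fun h => by
  have h2 := ringChar.Nat.cast_ringChar (R := hF.fixedSubfield)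
  rw [h] at h2
  exact hF.two_ne_zero (congrArg Subtype.val h2)

/- By Euler's criterion both sides are `x ^ ((q² - 1) / 2)`. -/
theorem quadraticChar_fixedSubfield_norm [DecidableEq F] (x : Fˣ) {y : hF.fixedSubfield}
    (hy : (y : F) = x ^ (q + 1)) :
    quadraticChar hF.fixedSubfield y = quadraticChar F x := by
  have hcard : Fintype.card hF.fixedSubfield = q := by
    rw [← Nat.card_eq_fintype_card, hF.natCard_fixedSubfield]
  have hdiv : q ^ 2 / 2 = (q + 1) * (q / 2) := by
    obtain ⟨m, rfl⟩ := hF.odd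
    rw [show (2 * m + 1) ^ 2 = 2 * (2 * m * (m + 1)) + 1 by ring]
    have h1 : (2 * (2 * m * (m + 1)) + 1) / 2 = 2 * m * (m + 1) := by lia
    have h2 : (2 * m + 1) / 2 = m := by lia
    rw [h1, h2]
    ring
  have hy0 : y ≠ 0 := by
    rintro rfl
    exact pow_ne_zero (q + 1) x.ne_zero hy.symm
  have heuler : ((quadraticChar hF.fixedSubfield y : ℤ) : F) = (quadraticChar F x : ℤ) := by
    have h := congrArg hF.fixedSubfield.subtype
      (quadraticChar_eq_pow_of_char_ne_two' hF.ringChar_fixedSubfield_ne_two y)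
    rw [map_intCast, map_pow, Subfield.subtype_apply, hy, hcard, ← pow_mul, ← hdiv] at h
    rw [h, quadraticChar_eq_pow_of_char_ne_two' hF.ringChar_ne_two, hF.card]
  have hne : (1 : F) ≠ -1 := (Ring.neg_one_ne_one_of_char_ne_two hF.ringChar_ne_two).symm
  rcases quadraticChar_dichotomy hy0 with h | h <;>
    rcases quadraticChar_dichotomy x.ne_zero with h' | h' <;>
    rw [h, h'] at heuler ⊢ <;> simp [hne, hne.symm] at heuler

variable {E : Type*} [Field E]

/- The restriction of `ψ` to the fixed field is nontrivial because `a ↦ a / 2 + (a / 2) ^ q` lands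
in that field and does not change the value of `ψ`. -/
theorem isPrimitive_restrict_fixedSubfield {ψ : AddChar F E} (hψ : ψ.IsPrimitive)
    (hfr : ∀ a, ψ (a ^ q) = ψ a) :
    (ψ.compAddMonoidHom (hF.fixedSubfield.subtype : hF.fixedSubfield →+ F)).IsPrimitive := by
  refine AddChar.IsPrimitive.of_ne_one fun hφ => hψ one_ne_zero ?_
  ext a
  have hmem : a / 2 + (a / 2) ^ q ∈ hF.fixedSubfield := by
    rw [mem_fixedSubfield, hF.add_pow, hF.pow_pow, add_comm]
  have h1 : ψ (a / 2 + (a / 2) ^ q) = 1 := DFunLike.congr_fun hφ ⟨_, hmem⟩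
  have : NeZero (2 : F) := ⟨hF.two_ne_zero⟩
  rw [AddChar.map_add_eq_mul, hfr, ← AddChar.map_add_eq_mul, add_halves] at h1
  simpa using h1

/-- The quadratic Gauss sum of the subfield of order `q`. -/
def quadraticGaussSum [DecidableEq F] (ψ : AddChar F E) : E :=
  gaussSum ((quadraticChar hF.fixedSubfield).ringHomComp (Int.castRingHom E))
    (ψ.compAddMonoidHom (hF.fixedSubfield.subtype : hF.fixedSubfield →+ F))

theorem quadraticGaussSum_mul_star [DecidableEq F] [CharZero E] [StarRing E] {ψ : AddChar F E}
    (hψ : ψ.IsPrimitive) (hfr : ∀ a, ψ (a ^ q) = ψ a) (hstar : ∀ a, star (ψ a) = ψ (-a)) :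
    hF.quadraticGaussSum ψ * star (hF.quadraticGaussSum ψ) = q := by
  let η := (quadraticChar hF.fixedSubfield).ringHomComp (Int.castRingHom E)
  let φ := ψ.compAddMonoidHom (hF.fixedSubfield.subtype : hF.fixedSubfield →+ F)
  have hη : η ≠ 1 := fun h => quadraticChar_ne_one hF.ringChar_fixedSubfield_ne_two <|
    MulChar.injective_ringHomComp (RingHom.injective_int (Int.castRingHom E)) <|
      h.trans (by ext; simp)
  have hηinv : η⁻¹ = η := ((quadraticChar_isQuadratic _).comp _).inv
  have hconj : star (gaussSum η φ) = gaussSum η⁻¹ φ⁻¹ := by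
    rw [hηinv, gaussSum, gaussSum, star_sum]
    refine Finset.sum_congr rfl fun a _ => ?_
    rw [star_mul', AddChar.inv_apply]
    simp [η, φ, hstar]
  change gaussSum η φ * star (gaussSum η φ) = q
  rw [hconj, gaussSum_mul_gaussSum_eq_card hη (hF.isPrimitive_restrict_fixedSubfield hψ hfr),
    ← Nat.card_eq_fintype_card, hF.natCard_fixedSubfield]

theorem map_quadraticGaussSum [DecidableEq F] {ψ : AddChar F E} (τ : E →+* E) (x : Fˣ)
    (hτ : ∀ a, τ (ψ a) = ψ (x ^ (q + 1) * a)) :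
    τ (hF.quadraticGaussSum ψ) = (quadraticChar F x : E) * hF.quadraticGaussSum ψ := by
  let η := (quadraticChar hF.fixedSubfield).ringHomComp (Int.castRingHom E)
  let φ := ψ.compAddMonoidHom (hF.fixedSubfield.subtype : hF.fixedSubfield →+ F)
  let y : hF.fixedSubfieldˣ := Units.mk0 ⟨x ^ (q + 1), hF.norm_pow x⟩
    fun h => pow_ne_zero (q + 1) x.ne_zero (congrArg Subtype.val h)
  have hη : η y = quadraticChar F x :=
    congrArg (Int.cast : ℤ → E) (hF.quadraticChar_fixedSubfield_norm x rfl)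
  have hshift : τ (gaussSum η φ) = gaussSum η (φ.mulShift y) := by
    rw [gaussSum, gaussSum, map_sum]
    refine Finset.sum_congr rfl fun a _ => ?_
    rw [map_mul, AddChar.mulShift_apply]
    simp [η, φ, hτ, y]
  have hsq : (quadraticChar F x : E) * quadraticChar F x = 1 := by
    rw [← sq, ← Int.cast_pow, quadraticChar_sq_one x.ne_zero, Int.cast_one]
  change τ (gaussSum η φ) = _ * gaussSum η φ
  rw [hshift, ← gaussSum_mulShift η φ y, hη, ← mul_assoc, hsq, one_mul]

end GaussSum

end HasOddSquareCard

section Representation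

variable {G E : Type*} [Group G] [Field E] {n : ℕ} (ρ : G →* Matrix (Fin n) (Fin n) E)

theorem trace_map_mul_mul_map_inv (g : G) (M : Matrix (Fin n) (Fin n) E) :
    (ρ g * M * ρ g⁻¹).trace = M.trace := by
  rw [trace_mul_cycle, map_mul_eq_one ρ (inv_mul_cancel g), Matrix.one_mul]

theorem trace_eq_zero_of_map_mul_eq_smul {g : G} {M : Matrix (Fin n) (Fin n) E} {c : E}
    (h : ρ g * M = c • (M * ρ g)) (hc : c ≠ 1) : M.trace = 0 := by
  have htrace : M.trace = c * M.trace := by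
    conv_lhs => rw [← trace_map_mul_mul_map_inv ρ g, h, Matrix.smul_mul, Matrix.mul_assoc,
      map_mul_eq_one ρ (mul_inv_cancel g), Matrix.mul_one, trace_smul, smul_eq_mul]
  exact (mul_eq_zero.mp (by linear_combination htrace : (1 - c) * M.trace = 0)).resolve_left
    (sub_ne_zero.mpr hc.symm)

end Representation

/-- The Borel subgroup of `SU₃(q)` by generators and relations: `u` enumerates the unipotent radical
modulo its center, `z` is the center, and `t` is the torus. The center is isomorphic to
`{c | c ^ q = -c}`, but is parametrized here by all of `F` through `c = a - a ^ q`, so that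
its characters become characters of `F`. -/
structure BorelData (q : ℕ) (F G : Type*) [Field F] [Group G] where
  z : F → G
  u : F → G
  t : Fˣ →* G
  z_add : ∀ a b, z (a + b) = z a * z b
  z_eq_one_iff : ∀ a, z a = 1 ↔ a ^ q = a
  u_mul_u : ∀ a b, u a * u b = z (b * a ^ q / 2) * u (a + b)
  z_mul_u : ∀ a b, z a * u b = u b * z a
  t_mul_z : ∀ x a, t x * z a = z (x ^ (q + 1) * a) * t x
  t_mul_u : ∀ x a, t x * u a = u ((x ^ 2 / x ^ q : Fˣ) * a) * t x

namespace BorelData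

variable {q : ℕ} {F G : Type*} [Field F] [Group G] (D : BorelData q F G)

/-- The unipotent radical. -/
def unipotent : Set G := {g | ∃ b a, g = D.z b * D.u a}

/-- The double coset `U w t(x) U` of the unipotent radical `U`. -/
def bigCell (w : G) (x : Fˣ) : Set G :=
  {g | ∃ v ∈ D.unipotent, ∃ v' ∈ D.unipotent, g = v * w * D.t x * v'}

theorem z_zero : D.z 0 = 1 := by
  simpa using D.z_add 0 0

theorem u_zero : D.u 0 = 1 := by
  simpa [D.z_zero] using D.u_mul_u 0 0

theorem map_z_add {A : Type*} [Ring A] (ρ : G →* A) (a b : F) :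
    ρ (D.z (a + b)) = ρ (D.z a) * ρ (D.z b) := by
  rw [D.z_add, map_mul]

theorem exists_mul_t_eq_t_mul {v : G} (hv : v ∈ D.unipotent) (x : Fˣ) :
    ∃ v' ∈ D.unipotent, v * D.t x = D.t x * v' := by
  obtain ⟨b, a, rfl⟩ := hv
  refine ⟨_, ⟨((x : F) ^ (q + 1))⁻¹ * b, ↑(x ^ 2 / x ^ q)⁻¹ * a, rfl⟩, ?_⟩
  rw [← mul_assoc (D.t x), D.t_mul_z, mul_assoc _ (D.t x), D.t_mul_u,
    mul_inv_cancel_left₀ (pow_ne_zero _ x.ne_zero), Units.mul_inv_cancel_left, mul_assoc]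

theorem u_mul_u_comm [Fintype F] (hF : HasOddSquareCard q F) (a b : F) :
    D.u a * D.u b = D.z (b * a ^ q) * (D.u b * D.u a) := by
  have h2 := hF.two_ne_zero
  have hsplit : b * a ^ q + a * b ^ q / 2 = (b * a ^ q + (b * a ^ q) ^ q) / 2 + b * a ^ q / 2 := by
    rw [mul_pow, hF.pow_pow]
    field_simp
    ring
  rw [D.u_mul_u, D.u_mul_u, ← mul_assoc, ← D.z_add, add_comm b a, hsplit, D.z_add,
    (D.z_eq_one_iff ((b * a ^ q + (b * a ^ q) ^ q) / 2)).mpr, one_mul]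
  rw [div_pow, hF.two_pow, hF.add_pow, hF.pow_pow, add_comm]

section Projections

variable [Fintype F] {E A : Type*} [Field E] [Ring A] [Algebra E A] (ρ : G →* A) (ψ : AddChar F E)

/-- The projection onto the part of `ρ` on which the center `z` of the unipotent radical acts
through the character `a ↦ ψ (y * a)`. -/
def centerProj (y : F) : A := fourierCoeff ψ (fun a => ρ (D.z a)) y

/-- The projection onto the part of the `z`-fixed space of `ρ` on which the unipotent radical acts
through the character `u a ↦ ψ (s * a)`. -/
def uniProj (s : F) : A := fourierCoeff ψ (fun a => ρ (D.u a) * D.centerProj ρ ψ 0) s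

theorem map_z_mul_centerProj (a y : F) :
    ρ (D.z a) * D.centerProj ρ ψ y = ψ (y * a) • D.centerProj ρ ψ y :=
  mul_fourierCoeff (M := fun a => ρ (D.z a)) (D.map_z_add ρ) a y

theorem centerProj_mul_map_z (a y : F) :
    D.centerProj ρ ψ y * ρ (D.z a) = ψ (y * a) • D.centerProj ρ ψ y :=
  fourierCoeff_mul (M := fun a => ρ (D.z a)) (D.map_z_add ρ) a y

theorem map_z_mul_centerProj_zero (a : F) :
    ρ (D.z a) * D.centerProj ρ ψ 0 = D.centerProj ρ ψ 0 := by
  simp [map_z_mul_centerProj]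

theorem centerProj_zero_mul_map_z (a : F) :
    D.centerProj ρ ψ 0 * ρ (D.z a) = D.centerProj ρ ψ 0 := by
  simp [centerProj_mul_map_z]

theorem commute_map_u_centerProj (a y : F) : Commute (ρ (D.u a)) (D.centerProj ρ ψ y) := by
  have h : ∀ b, Commute (ρ (D.u a)) (ρ (D.z b)) := fun b => by
    rw [Commute, SemiconjBy, ← map_mul, ← map_mul, D.z_mul_u]
  exact .smul_right (.sum_right _ _ _ fun b _ => (h b).smul_right _) _

theorem map_t_mul_centerProj_mul (x : Fˣ) (y : F) :
    ρ (D.t x) * D.centerProj ρ ψ y * ρ (D.t x)⁻¹ =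
      D.centerProj ρ ψ (y * ↑(x ^ (q + 1))⁻¹) :=
  mul_fourierCoeff_mul (x ^ (q + 1)) (fun a => by
    rw [← map_mul, D.t_mul_z, ← map_mul, mul_inv_cancel_right, Units.val_pow_eq_pow_val]) y

theorem map_t_mul_centerProj (x : Fˣ) (y : F) :
    ρ (D.t x) * D.centerProj ρ ψ y =
      D.centerProj ρ ψ (y * ↑(x ^ (q + 1))⁻¹) * ρ (D.t x) := by
  rw [← map_t_mul_centerProj_mul, mul_assoc _ _ (ρ (D.t x)),
    map_mul_eq_one ρ (inv_mul_cancel _), mul_one]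

theorem commute_map_t_centerProj_zero (x : Fˣ) : Commute (ρ (D.t x)) (D.centerProj ρ ψ 0) := by
  simpa [Commute, SemiconjBy] using D.map_t_mul_centerProj ρ ψ x 0

theorem centerProj_eq_zero (hF : HasOddSquareCard q F) {ψ : AddChar F E} (hψ : ψ.IsPrimitive)
    (hfr : ∀ a, ψ (a ^ q) = ψ a) {y : F} (hy : y ^ q ≠ -y) : D.centerProj ρ ψ y = 0 := by
  obtain ⟨a, ha⟩ := AddChar.ne_one_iff.mp
    (hψ fun h => hy (by linear_combination h) : ψ.mulShift (y + y ^ q) ≠ 1)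
  have hψa : ψ (y * (a + a ^ q)) = ψ ((y + y ^ q) * a) := by
    rw [mul_add, add_mul, AddChar.map_add_eq_mul, AddChar.map_add_eq_mul, ← hfr (y * a ^ q),
      mul_pow, hF.pow_pow]
  have hfix := D.map_z_mul_centerProj ρ ψ (a + a ^ q) y
  rw [(D.z_eq_one_iff _).mpr (by rw [hF.add_pow, hF.pow_pow, add_comm]), map_one, one_mul,
    hψa] at hfix
  refine (smul_eq_zero.mp (?_ : (1 - ψ ((y + y ^ q) * a)) • D.centerProj ρ ψ y = 0)).resolve_left
    (sub_ne_zero.mpr (Ne.symm ha))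
  rw [sub_smul, one_smul, ← hfix, sub_self]

variable [CharZero E] {ψ : AddChar F E} (hψ : ψ.IsPrimitive)

include hψ

theorem orthogonalIdempotents_centerProj : OrthogonalIdempotents (D.centerProj ρ ψ) :=
  orthogonalIdempotents_fourierCoeff hψ (D.map_z_add ρ)

theorem sum_centerProj : ∑ y, D.centerProj ρ ψ y = 1 :=
  (sum_fourierCoeff hψ).trans (by rw [D.z_zero, map_one])

theorem map_u_add_mul_centerProj_zero (a b : F) :
    ρ (D.u (a + b)) * D.centerProj ρ ψ 0 =
      ρ (D.u a) * D.centerProj ρ ψ 0 * (ρ (D.u b) * D.centerProj ρ ψ 0) := by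
  rw [mul_assoc, ← mul_assoc (D.centerProj ρ ψ 0), ← (D.commute_map_u_centerProj ρ ψ b 0).eq,
    mul_assoc (ρ (D.u b)), ((D.orthogonalIdempotents_centerProj ρ hψ).idem 0).eq,
    ← mul_assoc, ← map_mul, D.u_mul_u, D.z_mul_u, map_mul, mul_assoc, D.map_z_mul_centerProj_zero]

theorem orthogonalIdempotents_uniProj : OrthogonalIdempotents (D.uniProj ρ ψ) :=
  orthogonalIdempotents_fourierCoeff hψ (D.map_u_add_mul_centerProj_zero ρ hψ)

theorem sum_uniProj : ∑ s, D.uniProj ρ ψ s = D.centerProj ρ ψ 0 :=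
  (sum_fourierCoeff hψ).trans (by rw [D.u_zero, map_one, one_mul])

theorem centerProj_zero_mul_uniProj (s : F) :
    D.centerProj ρ ψ 0 * D.uniProj ρ ψ s = D.uniProj ρ ψ s := by
  simpa [uniProj, D.u_zero] using
    map_zero_mul_fourierCoeff (ψ := ψ) (M := fun a => ρ (D.u a) * D.centerProj ρ ψ 0)
      (D.map_u_add_mul_centerProj_zero ρ hψ) s

theorem uniProj_mul_centerProj_zero (s : F) :
    D.uniProj ρ ψ s * D.centerProj ρ ψ 0 = D.uniProj ρ ψ s := by
  simpa [uniProj, D.u_zero] using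
    fourierCoeff_mul_map_zero (ψ := ψ) (M := fun a => ρ (D.u a) * D.centerProj ρ ψ 0)
      (D.map_u_add_mul_centerProj_zero ρ hψ) s

theorem map_u_mul_uniProj (s a : F) :
    ρ (D.u a) * D.uniProj ρ ψ s = ψ (s * a) • D.uniProj ρ ψ s := by
  rw [← D.centerProj_zero_mul_uniProj ρ hψ s, ← mul_assoc, D.centerProj_zero_mul_uniProj ρ hψ]
  exact mul_fourierCoeff (M := fun a => ρ (D.u a) * D.centerProj ρ ψ 0)
    (D.map_u_add_mul_centerProj_zero ρ hψ) a s

theorem uniProj_mul_map_u (s a : F) :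
    D.uniProj ρ ψ s * ρ (D.u a) = ψ (s * a) • D.uniProj ρ ψ s := by
  rw [← D.uniProj_mul_centerProj_zero ρ hψ s, mul_assoc,
    ← (D.commute_map_u_centerProj ρ ψ a 0).eq, D.uniProj_mul_centerProj_zero ρ hψ]
  exact fourierCoeff_mul (M := fun a => ρ (D.u a) * D.centerProj ρ ψ 0)
    (D.map_u_add_mul_centerProj_zero ρ hψ) a s

theorem map_mul_uniProj_zero {v : G} (hv : v ∈ D.unipotent) :
    ρ v * D.uniProj ρ ψ 0 = D.uniProj ρ ψ 0 := by
  obtain ⟨b, a, rfl⟩ := hv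
  rw [map_mul, mul_assoc, D.map_u_mul_uniProj ρ hψ, zero_mul, AddChar.map_zero_eq_one, one_smul,
    ← D.centerProj_zero_mul_uniProj ρ hψ, ← mul_assoc, D.map_z_mul_centerProj_zero]

theorem uniProj_zero_mul_map {v : G} (hv : v ∈ D.unipotent) :
    D.uniProj ρ ψ 0 * ρ v = D.uniProj ρ ψ 0 := by
  obtain ⟨b, a, rfl⟩ := hv
  rw [D.z_mul_u, map_mul, ← mul_assoc, D.uniProj_mul_map_u ρ hψ, zero_mul,
    AddChar.map_zero_eq_one, one_smul, ← D.uniProj_mul_centerProj_zero ρ hψ, mul_assoc,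
    D.centerProj_zero_mul_map_z]

omit [CharZero E] hψ in
theorem map_t_mul_uniProj_mul (x : Fˣ) (s : F) :
    ρ (D.t x) * D.uniProj ρ ψ s * ρ (D.t x)⁻¹ = D.uniProj ρ ψ (s * ↑(x ^ 2 / x ^ q)⁻¹) :=
  mul_fourierCoeff_mul (x ^ 2 / x ^ q) (fun a => by
    rw [← mul_assoc, ← map_mul, D.t_mul_u, map_mul, mul_assoc (ρ (D.u _)),
      (D.commute_map_t_centerProj_zero ρ ψ x).eq, mul_assoc, mul_assoc (D.centerProj ρ ψ 0),
      map_mul_eq_one ρ (mul_inv_cancel _), mul_one]) s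

omit [CharZero E] hψ in
theorem map_t_mul_uniProj (x : Fˣ) (s : F) :
    ρ (D.t x) * D.uniProj ρ ψ s = D.uniProj ρ ψ (s * ↑(x ^ 2 / x ^ q)⁻¹) * ρ (D.t x) := by
  rw [← map_t_mul_uniProj_mul, mul_assoc _ _ (ρ (D.t x)),
    map_mul_eq_one ρ (inv_mul_cancel _), mul_one]

end Projections

section Trace

variable [Fintype F] {E : Type*} [Field E] {n : ℕ} (ρ : G →* Matrix (Fin n) (Fin n) E)
  (hF : HasOddSquareCard q F) {ψ : AddChar F E}

include hF

theorem trace_centerProj_eq {y y' : F} (hy0 : y ≠ 0) (hy0' : y' ≠ 0) (hy : y ^ q = -y)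
    (hy' : y' ^ q = -y') : (D.centerProj ρ ψ y).trace = (D.centerProj ρ ψ y').trace := by
  obtain ⟨x, hx⟩ := hF.exists_norm_eq (div_ne_zero hy0 hy0') (by
    rw [div_pow, hy, hy', neg_div_neg_eq])
  have hyx : y * ↑(x ^ (q + 1))⁻¹ = y' := by
    rw [Units.val_inv_eq_inv_val, Units.val_pow_eq_pow_val, hx]
    field_simp
  rw [← hyx, ← D.map_t_mul_centerProj_mul, trace_map_mul_mul_map_inv]

variable (hψ : ψ.IsPrimitive)

include hψ

theorem trace_map_u_mul_centerProj_eq_zero {y a : F} (hy : y ≠ 0) (ha : a ≠ 0) :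
    (ρ (D.u a) * D.centerProj ρ ψ y).trace = 0 := by
  obtain ⟨b, hb⟩ := AddChar.ne_one_iff.mp (hψ (mul_ne_zero hy ha))
  rw [AddChar.mulShift_apply] at hb
  refine trace_eq_zero_of_map_mul_eq_smul ρ (g := D.u (b ^ q)) ?_ hb
  rw [← Matrix.mul_assoc, ← map_mul, D.u_mul_u_comm hF, hF.pow_pow, ← mul_assoc, D.z_mul_u,
    mul_assoc, D.z_mul_u, ← mul_assoc, map_mul, map_mul, Matrix.mul_assoc,
    D.map_z_mul_centerProj, Matrix.mul_smul, Matrix.mul_assoc,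
    (D.commute_map_u_centerProj ρ ψ _ y).eq, ← Matrix.mul_assoc, ← mul_assoc]

variable [CharZero E]

/- The elements `u (a + a ^ q)` commute with each other, and all the isotypic components of this
group on the image of `centerProj ρ ψ y` have the same dimension. -/
theorem exists_trace_centerProj_eq_mul {y : F} (hy : y ≠ 0) :
    ∃ r : ℕ, (D.centerProj ρ ψ y).trace = (q * r : ℕ) := by
  classical
  let M : F → Matrix (Fin n) (Fin n) E := fun a => ρ (D.u (a + a ^ q)) * D.centerProj ρ ψ y
  have hu : ∀ a b, D.u (a + b + (a + b) ^ q) = D.u (a + a ^ q) * D.u (b + b ^ q) := fun a b => by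
    rw [D.u_mul_u, (D.z_eq_one_iff _).mpr, one_mul, hF.add_pow]
    · congr 1
      ring
    · simp only [div_pow, hF.two_pow, mul_pow, hF.add_pow, hF.pow_pow]
      ring
  have hM : ∀ a b, M (a + b) = M a * M b := fun a b => by
    simp only [M]
    rw [hu, map_mul, Matrix.mul_assoc, Matrix.mul_assoc, ← Matrix.mul_assoc (D.centerProj ρ ψ y),
      ← (D.commute_map_u_centerProj ρ ψ _ y).eq, Matrix.mul_assoc _ _ (D.centerProj ρ ψ y),
      ((D.orthogonalIdempotents_centerProj ρ hψ).idem y).eq]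
  have htrace : ∀ a, (M a).trace = if a ^ q = -a then (D.centerProj ρ ψ y).trace else 0 :=
    fun a => by
      split_ifs with h
      · simp [M, h, D.u_zero]
      · exact D.trace_map_u_mul_centerProj_eq_zero ρ hF hψ hy fun h0 =>
          h (by linear_combination h0)
  obtain ⟨r, hr⟩ := exists_natCast_eq_trace_of_isIdempotentElem
    ((orthogonalIdempotents_fourierCoeff hψ hM).idem 0)
  have hq : (q : E) ≠ 0 := by exact_mod_cast (by have := hF.three_le; lia : q ≠ 0)
  refine ⟨r, ?_⟩
  simp only [trace_fourierCoeff, zero_mul, neg_zero, AddChar.map_zero_eq_one, one_mul, htrace] at hr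
  rw [← Finset.sum_filter, Finset.sum_const, hF.card_filter_pow_eq_neg, hF.card,
    nsmul_eq_mul] at hr
  push_cast at hr ⊢
  rw [← hr]
  field_simp

theorem natCast_eq_trace_centerProj_zero_add (hfr : ∀ a, ψ (a ^ q) = ψ a) {y : F} (hy0 : y ≠ 0)
    (hy : y ^ q = -y) :
    (n : E) = (D.centerProj ρ ψ 0).trace + ((q - 1 : ℕ) : E) * (D.centerProj ρ ψ y).trace := by
  classical
  have hq := hF.three_le
  have hsum := congrArg trace (D.sum_centerProj ρ hψ)
  rw [trace_sum, trace_one, Fintype.card_fin, ← Finset.add_sum_erase _ _ (Finset.mem_univ 0)]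
    at hsum
  have htrace : ∀ s ∈ Finset.univ.erase (0 : F), (D.centerProj ρ ψ s).trace =
      if s ^ q = -s then (D.centerProj ρ ψ y).trace else 0 := fun s hs => by
    split_ifs with h
    · exact D.trace_centerProj_eq ρ hF (Finset.ne_of_mem_erase hs) hy0 h hy
    · rw [D.centerProj_eq_zero ρ hF hψ hfr h, trace_zero]
  rw [← hsum, Finset.sum_congr rfl htrace, ← Finset.sum_filter, Finset.sum_const, nsmul_eq_mul,
    Finset.filter_erase, Finset.card_erase_of_mem (by simp; lia), hF.card_filter_pow_eq_neg]

end Trace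

end BorelData

/-- The Borel subgroup of `SU₃(q)` together with a Weyl element `w`, the Bruhat decomposition, and
the centralizer information about `z` and the center of the group. -/
structure BruhatData (q : ℕ) (F G : Type*) [Field F] [Group G] extends BorelData q F G where
  w : G
  w_mul_w : w * w = 1
  bruhat : ∀ g, (∃ v ∈ toBorelData.unipotent, ∃ x, g = v * t x) ∨
    ∃ x, g ∈ toBorelData.bigCell w x
  exists_w_mul_w_mem_bigCell : ∀ a b, a ≠ 0 ∨ b ^ q ≠ b →
    ∃ x, w * (z b * u a) * w ∈ toBorelData.bigCell w x
  exists_mem_bigCell : ∀ x, ∃ v ∈ toBorelData.unipotent, w * v * w ∈ toBorelData.bigCell w x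
  exists_eq_mul_t_of_mul_z_eq : ∀ a b g, b ^ q ≠ b → g * z b = z a * g →
    ∃ v ∈ toBorelData.unipotent, ∃ x, g = v * t x
  commute_t : ∀ x : Fˣ, x ^ 2 / x ^ q = 1 → ∀ g, Commute (t x) g

namespace SU3

variable {p k q : ℕ} {F : Type} [Field F] [ExpChar F p]

/-- The underlying matrix of an element of `SU₃(q)`. -/
def toMatrix : SU3 p k F →* Matrix (Fin 3) (Fin 3) F where
  toFun g := g.1.1
  map_one' := rfl
  map_mul' _ _ := rfl

theorem toMatrix_injective : Function.Injective (toMatrix : SU3 p k F → _) :=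
  fun _ _ h => Subtype.ext (Subtype.ext h)

theorem det_toMatrix (g : SU3 p k F) : (toMatrix g).det = 1 := g.1.2

theorem transpose_Phi_mul_Om_mul_eq_iff (hq : q = p ^ k) (M : Matrix (Fin 3) (Fin 3) F) :
    (Phi p k F M)ᵀ * Om F * M = Om F ↔ ∀ i j, M 0 i ^ q * M 2 j + M 1 i ^ q * M 1 j +
      M 2 i ^ q * M 0 j = Om F i j := by
  have h : ∀ i j, ((Phi p k F M)ᵀ * Om F * M) i j = M 0 i ^ q * M 2 j + M 1 i ^ q * M 1 j +
      M 2 i ^ q * M 0 j := fun i j => by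
    simp [Phi, Om, mul_apply, Fin.sum_univ_three, iterateFrobenius_def, hq]
    ring
  simp only [← Matrix.ext_iff, h]

theorem toMatrix_form (hq : q = p ^ k) (g : SU3 p k F) (i j : Fin 3) :
    toMatrix g 0 i ^ q * toMatrix g 2 j + toMatrix g 1 i ^ q * toMatrix g 1 j +
      toMatrix g 2 i ^ q * toMatrix g 0 j = Om F i j :=
  (transpose_Phi_mul_Om_mul_eq_iff hq _).mp g.2 i j

/-- The element of `SU₃(q)` with a given matrix. -/
def ofMatrix (hq : q = p ^ k) (M : Matrix (Fin 3) (Fin 3) F) (hdet : M.det = 1)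
    (hM : ∀ i j, M 0 i ^ q * M 2 j + M 1 i ^ q * M 1 j + M 2 i ^ q * M 0 j = Om F i j) :
    SU3 p k F :=
  ⟨⟨M, hdet⟩, (transpose_Phi_mul_Om_mul_eq_iff hq M).mpr hM⟩

theorem toMatrix_ofMatrix (hq : q = p ^ k) (M : Matrix (Fin 3) (Fin 3) F) (hdet hM) :
    toMatrix (ofMatrix (p := p) hq M hdet hM) = M := rfl

variable [Fintype F] (hq : q = p ^ k) (hF : HasOddSquareCard q F)

/-- The upper unitriangular elements of `SU₃(q)`. -/
def unitriangular (a b : F) (hab : b + b ^ q + a * a ^ q = 0) : SU3 p k F :=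
  ofMatrix hq !![1, a, b; 0, 1, -a ^ q; 0, 0, 1] (by simp [det_fin_three]) (by
    have hq0 : q ≠ 0 := by have := hF.three_le; lia
    have ha : (-a ^ q) ^ q = -a := by rw [hF.neg_pow, hF.pow_pow]
    intro i j
    fin_cases i <;> fin_cases j <;> simp [Om, hq0, ha]
    linear_combination hab)

theorem toMatrix_unitriangular (a b : F) (hab) : toMatrix (unitriangular (p := p) hq hF a b hab) =
    !![1, a, b; 0, 1, -a ^ q; 0, 0, 1] := rfl

theorem unitriangular_congr {a b a' b' : F} (hab hab') (ha : a = a') (hb : b = b') :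
    unitriangular (p := p) hq hF a b hab = unitriangular hq hF a' b' hab' := by
  subst ha hb
  rfl

theorem unitriangular_mul (a b a' b' : F) (hab hab') :
    unitriangular (p := p) hq hF a b hab * unitriangular hq hF a' b' hab' =
      unitriangular hq hF (a + a') (b + b' - a * a' ^ q) (by
        rw [hF.sub_pow, hF.add_pow, hF.add_pow, mul_pow, hF.pow_pow]
        linear_combination hab + hab') := by
  apply toMatrix_injective
  simp only [map_mul, toMatrix_unitriangular, hF.add_pow]
  ext i j
  fin_cases i <;> fin_cases j <;> simp [mul_apply, Fin.sum_univ_three] <;> ring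

theorem unitriangular_eq_one {a b : F} (hab) (ha : a = 0) (hb : b = 0) :
    unitriangular (p := p) hq hF a b hab = 1 := by
  have hq0 : q ≠ 0 := by have := hF.three_le; lia
  subst ha hb
  apply toMatrix_injective
  rw [toMatrix_unitriangular, map_one]
  ext i j
  fin_cases i <;> fin_cases j <;> simp [hq0]

/-- The diagonal elements of `SU₃(q)`. -/
def torus : Fˣ →* SU3 p k F where
  toFun x := ofMatrix hq !![(x : F), 0, 0; 0, (x : F) ^ q / x, 0; 0, 0, 1 / (x : F) ^ q]
    (by simp [det_fin_three]; field_simp) (by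
    have hq0 : q ≠ 0 := by have := hF.three_le; lia
    intro i j
    fin_cases i <;> fin_cases j <;> simp [Om, hq0, hF.pow_pow, div_pow])
  map_one' := by
    apply toMatrix_injective
    rw [toMatrix_ofMatrix, map_one]
    ext i j
    fin_cases i <;> fin_cases j <;> simp
  map_mul' x y := by
    apply toMatrix_injective
    simp only [map_mul, toMatrix_ofMatrix]
    ext i j
    fin_cases i <;> fin_cases j <;> simp [mul_apply, Fin.sum_univ_three] <;> ring

theorem toMatrix_torus (x : Fˣ) : toMatrix (torus (p := p) hq hF x) =
    !![(x : F), 0, 0; 0, (x : F) ^ q / x, 0; 0, 0, 1 / (x : F) ^ q] := rfl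

/-- The Weyl element of `SU₃(q)`. -/
def weyl : SU3 p k F :=
  ofMatrix hq !![0, 0, 1; 0, -1, 0; 1, 0, 0] (by simp [det_fin_three]) (by
    have hq0 : q ≠ 0 := by have := hF.three_le; lia
    have hneg := hF.neg_pow 1
    intro i j
    fin_cases i <;> fin_cases j <;> simp_all [Om])

theorem toMatrix_weyl : toMatrix (weyl (p := p) hq hF) = !![0, 0, 1; 0, -1, 0; 1, 0, 0] := rfl

theorem weyl_mul_weyl : weyl (p := p) hq hF * weyl hq hF = 1 := by
  apply toMatrix_injective
  simp only [map_mul, toMatrix_weyl, map_one]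
  ext i j
  fin_cases i <;> fin_cases j <;> simp [mul_apply, Fin.sum_univ_three]

theorem torus_mul_unitriangular (x : Fˣ) {a b a' b' : F} (hab hab')
    (ha : a' = (x ^ 2 / x ^ q : Fˣ) * a) (hb : b' = x ^ (q + 1) * b) :
    torus (p := p) hq hF x * unitriangular hq hF a b hab =
      unitriangular hq hF a' b' hab' * torus hq hF x := by
  have hx := x.ne_zero
  subst ha hb
  apply toMatrix_injective
  simp only [map_mul, toMatrix_torus, toMatrix_unitriangular]
  ext i j
  fin_cases i <;> fin_cases j <;>
    simp [mul_apply, Fin.sum_univ_three, mul_pow, div_pow, hF.pow_pow, pow_succ] <;> field_simp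

include hF in
theorem half_pow (a : F) : (a / 2) ^ q = a ^ q / 2 := by
  rw [div_pow, hF.two_pow]

/-- The Borel subgroup of `SU₃(q)`. -/
def borelData : BorelData q F (SU3 p k F) where
  z c := unitriangular hq hF 0 (c - c ^ q) (by rw [hF.sub_pow, hF.pow_pow]; ring)
  u a := unitriangular hq hF a (-(a * a ^ q / 2)) (by
    have := hF.two_ne_zero
    rw [hF.neg_pow, half_pow hF, mul_pow, hF.pow_pow]
    field_simp
    ring)
  t := torus hq hF
  z_add a b := by
    rw [unitriangular_mul]
    exact unitriangular_congr _ _ _ _ (by ring) (by rw [hF.add_pow]; ring)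
  z_eq_one_iff a := by
    refine ⟨fun h => ?_, fun h => unitriangular_eq_one _ _ _ rfl (by rw [h, sub_self])⟩
    have h02 := congrFun (congrFun (congrArg toMatrix h) 0) 2
    rw [toMatrix_unitriangular, map_one] at h02
    exact (sub_eq_zero.mp (by simpa using h02)).symm
  u_mul_u a b := by
    have := hF.two_ne_zero
    rw [unitriangular_mul, unitriangular_mul]
    refine unitriangular_congr _ _ _ _ (by ring) ?_
    rw [half_pow hF, mul_pow, hF.pow_pow, hF.add_pow]
    field_simp
    ring
  z_mul_u a b := by
    have hq0 : q ≠ 0 := by have := hF.three_le; lia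
    rw [unitriangular_mul, unitriangular_mul]
    exact unitriangular_congr _ _ _ _ (by ring) (by simp [hq0]; ring)
  t_mul_z x a := torus_mul_unitriangular hq hF x _ _ (by ring) (by
    rw [mul_pow, hF.norm_pow]
    ring)
  t_mul_u x a := torus_mul_unitriangular hq hF x _ _ rfl (by
    have hx := x.ne_zero
    have hsq : ((x : F) ^ 2) ^ q = ((x : F) ^ q) ^ 2 := by rw [← pow_mul, ← pow_mul, mul_comm]
    rw [Units.val_div_eq_div_val, Units.val_pow_eq_pow_val, Units.val_pow_eq_pow_val, mul_pow,
      div_pow, hsq, hF.pow_pow, pow_succ (x : F) q]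
    field_simp)

theorem unitriangular_mem_unipotent (a b : F) (hab) :
    unitriangular hq hF a b hab ∈ (borelData (p := p) hq hF).unipotent := by
  have := hF.two_ne_zero
  refine ⟨(b + a * a ^ q / 2) / 2, a, ?_⟩
  simp only [borelData, unitriangular_mul]
  refine unitriangular_congr _ _ _ _ (by ring) ?_
  rw [half_pow hF, hF.add_pow, half_pow hF, mul_pow, hF.pow_pow]
  field_simp
  linear_combination 2 * hab

theorem exists_eq_unitriangular {g : SU3 p k F} (h00 : toMatrix g 0 0 = 1)
    (h20 : toMatrix g 2 0 = 0) : ∃ a b hab, g = unitriangular hq hF a b hab := by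
  have hq0 : q ≠ 0 := by have := hF.three_le; lia
  have hform := toMatrix_form hq g
  have hdet := det_toMatrix g
  generalize hM : toMatrix g = M at *
  have h10 : M 1 0 = 0 := by simpa [h20, hq0, Om] using hform 0 0
  have h21 : M 2 1 = 0 := by simpa [h20, h10, h00, hq0, Om] using hform 0 1
  have h22 : M 2 2 = 1 := by simpa [h20, h10, h00, hq0, Om] using hform 0 2
  have h11 : M 1 1 = 1 := by simpa [det_fin_three, h00, h10, h20, h21, h22] using hdet
  have h12 : M 1 2 = -M 0 1 ^ q := by
    have h := hform 1 2
    simp [h21, h22, h11, hq0, Om] at h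
    linear_combination h
  have h02 : M 0 2 + M 0 2 ^ q + M 0 1 * M 0 1 ^ q = 0 := by
    have h := hform 2 2
    simp [h22, h12, hF.neg_pow, hF.pow_pow, Om] at h
    linear_combination h
  refine ⟨M 0 1, M 0 2, h02, toMatrix_injective ?_⟩
  rw [hM, toMatrix_unitriangular]
  ext i j
  fin_cases i <;> fin_cases j <;> simp [*]

theorem exists_eq_mul_torus {g : SU3 p k F} (h20 : toMatrix g 2 0 = 0) :
    ∃ v ∈ (borelData (p := p) hq hF).unipotent, ∃ x : Fˣ,
      g = v * torus hq hF x ∧ (x : F) = toMatrix g 0 0 := by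
  have h00 : toMatrix g 0 0 ≠ 0 := fun h00 => by
    have hq0 : q ≠ 0 := by have := hF.three_le; lia
    have h10 : toMatrix g 1 0 = 0 := by simpa [h20, hq0, Om] using toMatrix_form hq g 0 0
    simpa [det_fin_three, h00, h10, h20] using det_toMatrix g
  let x := Units.mk0 _ h00
  have hentry : ∀ i, toMatrix (g * torus hq hF x⁻¹) i 0 = toMatrix g i 0 * (toMatrix g 0 0)⁻¹ :=
    fun i => by
      rw [map_mul, toMatrix_torus]
      simp [mul_apply, Fin.sum_univ_three, x]
  obtain ⟨a, b, hab, hg⟩ := exists_eq_unitriangular hq hF (g := g * torus hq hF x⁻¹)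
    (by rw [hentry, mul_inv_cancel₀ h00]) (by rw [hentry, h20, zero_mul])
  exact ⟨_, unitriangular_mem_unipotent hq hF a b hab, x, by rw [← hg]; simp, rfl⟩

/- Left multiplication by a suitable unitriangular element and then by `w` moves the first column
of `g` to a multiple of the first basis vector. -/
theorem exists_mem_bigCell_weyl {g : SU3 p k F} (h20 : toMatrix g 2 0 ≠ 0) :
    ∃ x : Fˣ, g ∈ (borelData (p := p) hq hF).bigCell (weyl hq hF) x ∧
      (x : F) = toMatrix g 2 0 := by
  set A := toMatrix g 0 0 with hA
  set B := toMatrix g 1 0 with hB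
  set C := toMatrix g 2 0 with hC
  have hCq : C ^ q ≠ 0 := pow_ne_zero _ h20
  have hform : A ^ q * C + B ^ q * B + C ^ q * A = 0 := by
    simpa [Om] using toMatrix_form hq g 0 0
  have hv : A / C + (A / C) ^ q + -(B / C) ^ q * (-(B / C) ^ q) ^ q = 0 := by
    rw [hF.neg_pow, hF.pow_pow, div_pow, div_pow]
    field_simp
    linear_combination hform
  let v : SU3 p k F := unitriangular hq hF (-(B / C) ^ q) (A / C) hv
  let v' : SU3 p k F := unitriangular hq hF ((B / C) ^ q) ((A / C) ^ q) (by
    rw [hF.neg_pow] at hv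
    rw [hF.pow_pow]
    linear_combination hv)
  have hvv' : v * v' = 1 := by
    rw [unitriangular_mul]
    refine unitriangular_eq_one _ _ _ (by ring) ?_
    rw [hF.neg_pow, hF.pow_pow] at hv
    rw [hF.pow_pow]
    linear_combination hv
  have hmat : toMatrix (weyl hq hF * (v' * g)) = !![0, 0, 1; 0, -1, 0; 1, 0, 0] *
      (!![1, (B / C) ^ q, (A / C) ^ q; 0, 1, -((B / C) ^ q) ^ q; 0, 0, 1] * toMatrix g) := rfl
  obtain ⟨y, hy, x, hyx, hx⟩ := exists_eq_mul_torus hq hF (g := weyl hq hF * (v' * g)) (by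
    rw [hmat]
    simp only [mul_apply, Fin.sum_univ_three]
    simp [← hA, ← hB, ← hC, div_pow]
    field_simp
    linear_combination hform)
  obtain ⟨y', hy', hyy'⟩ := (borelData hq hF).exists_mul_t_eq_t_mul hy x
  refine ⟨x, ⟨v, unitriangular_mem_unipotent .., y', hy', ?_⟩, ?_⟩
  · calc g = v * weyl hq hF * (weyl hq hF * (v' * g)) := by
          rw [mul_assoc, ← mul_assoc (weyl hq hF), weyl_mul_weyl, one_mul, ← mul_assoc, hvv',
            one_mul]
      _ = v * weyl hq hF * (borelData hq hF).t x * y' := by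
          rw [hyx, mul_assoc, mul_assoc _ _ y', ← hyy', mul_assoc]; rfl
  · rw [hx, hmat]
    simp only [mul_apply, Fin.sum_univ_three]
    simp [← hC]

theorem toMatrix_weyl_mul_mul_weyl (a b : F) :
    toMatrix (weyl hq hF * ((borelData hq hF).z b * (borelData hq hF).u a) *
      weyl (p := p) hq hF) 2 0 = b - b ^ q - a * a ^ q / 2 := by
  simp only [borelData, unitriangular_mul, map_mul, toMatrix_weyl, toMatrix_unitriangular]
  simp [mul_apply, Fin.sum_univ_three]
  ring

include hF in
theorem sub_pow_sub_ne_zero {a b : F} (hab : a ≠ 0 ∨ b ^ q ≠ b) :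
    b - b ^ q - a * a ^ q / 2 ≠ 0 := by
  intro h
  have hq0 : q ≠ 0 := by have := hF.three_le; lia
  have hpow : b ^ q - b - a ^ q * a / 2 = 0 := by
    have := congrArg (· ^ q) h
    simpa [hF.sub_pow, hF.pow_pow, half_pow hF, mul_pow, hq0] using this
  have ha : a * a ^ q = 0 := by
    have := hF.two_ne_zero
    field_simp at h hpow
    exact (mul_eq_zero.mp (by linear_combination -h - hpow : 2 * (a * a ^ q) = 0)).resolve_left this
  have ha0 : a = 0 := by simpa [hq0] using ha
  refine hab.elim (· ha0) fun hb => hb ?_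
  linear_combination hpow + (1 / 2) * ha

include hF in
theorem exists_mul_pow_eq (x : F) : ∃ a, a * a ^ q = -(x + x ^ q) := by
  by_cases h : x + x ^ q = 0
  · exact ⟨0, by simp [h]⟩
  · obtain ⟨y, hy⟩ := hF.exists_norm_eq (neg_ne_zero.mpr h) (by
      rw [hF.neg_pow, hF.add_pow, hF.pow_pow, add_comm])
    exact ⟨y, by rw [← hy, pow_succ, mul_comm]⟩

theorem toMatrix_torus_of_sq_div_pow_eq_one {x : Fˣ} (hx : x ^ 2 / x ^ q = 1) :
    toMatrix (torus (p := p) hq hF x) = (x : F) • 1 := by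
  have hx0 := x.ne_zero
  have hxq : (x : F) ^ q = (x : F) ^ 2 := by
    simpa using congrArg Units.val (div_eq_one.mp hx).symm
  have hx3 : (x : F) ^ 3 = 1 := by
    have h := hF.pow_pow (x : F)
    rw [hxq, ← pow_mul, mul_comm 2 q, pow_mul, hxq] at h
    exact mul_left_cancel₀ hx0 (by linear_combination h)
  rw [toMatrix_torus]
  ext i j
  fin_cases i <;> fin_cases j <;> simp [hxq]
  · field_simp
  · field_simp
    exact hx3.symm

/-- The Borel subgroup and the Bruhat decomposition of `SU₃(q)`. -/
def bruhatData : BruhatData q F (SU3 p k F) where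
  __ := borelData hq hF
  w := weyl hq hF
  w_mul_w := weyl_mul_weyl hq hF
  bruhat g := by
    by_cases h : toMatrix g 2 0 = 0
    · obtain ⟨v, hv, x, hg, -⟩ := exists_eq_mul_torus hq hF h
      exact .inl ⟨v, hv, x, hg⟩
    · obtain ⟨x, hx, -⟩ := exists_mem_bigCell_weyl hq hF h
      exact .inr ⟨x, hx⟩
  exists_w_mul_w_mem_bigCell a b hab :=
    (exists_mem_bigCell_weyl hq hF (by
      rw [toMatrix_weyl_mul_mul_weyl]
      exact sub_pow_sub_ne_zero hF hab)).imp fun _ hx => hx.1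
  exists_mem_bigCell x := by
    obtain ⟨a, ha⟩ := exists_mul_pow_eq hF (x : F)
    have hentry := toMatrix_weyl_mul_mul_weyl (p := p) hq hF a ((x : F) / 2)
    have htwo := hF.two_ne_zero
    rw [half_pow hF, ha, show (x : F) / 2 - x ^ q / 2 - -((x : F) + x ^ q) / 2 = x by
      field_simp; ring] at hentry
    obtain ⟨y, hy, hyx⟩ := exists_mem_bigCell_weyl hq hF (hentry.trans_ne x.ne_zero)
    obtain rfl : y = x := Units.ext (hyx.trans hentry)
    exact ⟨_, ⟨_, a, rfl⟩, hy⟩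
  exists_eq_mul_t_of_mul_z_eq a b g hb hg := by
    have h22 := congrFun (congrFun (congrArg toMatrix hg) 2) 2
    have hq0 : q ≠ 0 := by have := hF.three_le; lia
    simp only [borelData, map_mul, toMatrix_unitriangular] at h22
    simp [mul_apply, Fin.sum_univ_three, hq0] at h22
    obtain ⟨v, hv, x, h, -⟩ := exists_eq_mul_torus hq hF
      (h22.resolve_right fun h => hb (sub_eq_zero.mp h).symm)
    exact ⟨v, hv, x, h⟩
  commute_t x hx g := toMatrix_injective (by
    simp [borelData, toMatrix_torus_of_sq_div_pow_eq_one hq hF hx])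

end SU3

open scoped Finset

theorem addChar_apply_eq_one_of_apply_neg_eq {F M : Type*} [Field F] [Monoid M] (h2 : (2 : F) ≠ 0)
    (φ : AddChar F M) (hφ : ∀ a, φ (-a) = φ a) (a : F) : φ a = 1 := by
  have : NeZero (2 : F) := ⟨h2⟩
  calc φ a = φ (a / 2) * φ (a / 2) := by rw [← φ.map_add_eq_mul, add_halves]
    _ = φ (-(a / 2)) * φ (a / 2) := by rw [hφ]
    _ = 1 := by rw [← φ.map_add_eq_mul, neg_add_cancel, φ.map_zero_eq_one]

theorem natCard_mul_le_natCard_centralizer_mul_sum {G : Type*} [Group G] [Fintype G] {f : G → ℝ}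
    (hf : ∀ g h, f (g * h * g⁻¹) = f h) (hf0 : ∀ g, 0 ≤ f g) (h : G) :
    Nat.card G * f h ≤ Nat.card (Subgroup.centralizer {h}) * ∑ g, f g := by
  classical
  have hconj : ∀ g ∈ (MulAction.orbit (ConjAct G) h).toFinset, f g = f h := fun g hg => by
    obtain ⟨c, rfl⟩ := Set.mem_toFinset.mp hg
    exact hf _ _
  have horbit : (Nat.card (MulAction.orbit (ConjAct G) h) : ℝ) * f h ≤ ∑ g, f g := calc
    _ = ∑ g ∈ (MulAction.orbit (ConjAct G) h).toFinset, f g := by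
      rw [Finset.sum_congr rfl hconj, Finset.sum_const, Set.toFinset_card, nsmul_eq_mul,
        Nat.card_eq_fintype_card]
    _ ≤ ∑ g, f g := Finset.sum_le_univ_sum_of_nonneg hf0
  have hcard : Nat.card G = Nat.card (Subgroup.centralizer {h}) *
      Nat.card (MulAction.orbit (ConjAct G) h) := by
    rw [Subgroup.nat_card_centralizer_nat_card_stabilizer, mul_comm, ← Nat.card_prod,
      Nat.card_congr (MulAction.orbitProdStabilizerEquivGroup (ConjAct G) h)]
    rfl
  rw [hcard, Nat.cast_mul, mul_assoc]
  exact mul_le_mul_of_nonneg_left horbit (Nat.cast_nonneg _)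

/- With `m = q - 1 - i`, the hypotheses give `A = (q - 1) (1 + q i)` and
`c = q² (i - 1) + 2 q - 1`, and the bound on `c` leaves only `i ≤ 1`. -/
theorem eq_sub_one_or_eq_sq_sub_one {q n A m : ℕ} {c : ℂ} (hq : 3 ≤ q)
    (hn : n = (q - 1) * (q ^ 2 - q + 1)) (hA : n = A + (q - 1) * (q * m))
    (hc : (q : ℂ) * A = n + (q - 1) * c)
    (hbound : ‖c‖ ^ 2 ≤ (q ^ 3 * (q + 1) : ℕ)) : A = q - 1 ∨ A = q ^ 2 - 1 := by
  subst hn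
  obtain ⟨r, rfl⟩ : ∃ r, q = r + 1 := ⟨q - 1, by lia⟩
  have hsub : (r + 1) ^ 2 - (r + 1) = r * (r + 1) := by
    rw [sq, ← Nat.sub_one_mul, Nat.add_sub_cancel]
  have hsub' : (r + 1) ^ 2 - 1 = (r + 2) * r := sq_sub_one_eq_mul _
  simp only [hsub, hsub', Nat.add_sub_cancel] at hA hc ⊢
  have hmr : m ≤ r := by
    by_contra! hlt
    nlinarith [Nat.mul_le_mul_left (r * (r + 1)) (Nat.succ_le_of_lt hlt), Nat.zero_le A]
  obtain ⟨i, rfl⟩ := Nat.exists_eq_add_of_le hmr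
  have hAi : A = (m + i) * (1 + (m + i + 1) * i) := by nlinarith
  have hci : c = (((m + i + 1) ^ 2 * (i - 1) + 2 * (m + i + 1) - 1 : ℝ) : ℂ) := by
    apply mul_left_cancel₀ (by exact_mod_cast (by lia : m + i ≠ 0) : (m : ℂ) + i ≠ 0)
    push_cast [hAi] at hc ⊢
    linear_combination -hc
  have hi : i < 2 := by
    by_contra! hi
    simp only [hci, Complex.norm_real, Real.norm_eq_abs, sq_abs] at hbound
    have hi' : (2 : ℝ) ≤ i := by exact_mod_cast hi
    push_cast at hbound
    set Q : ℝ := m + i + 1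
    have hQ : 3 ≤ Q := by linarith [m.cast_nonneg (α := ℝ)]
    have hlow : Q ^ 2 + 2 * Q - 1 ≤ Q ^ 2 * (i - 1) + 2 * Q - 1 := by nlinarith [sq_nonneg Q, hQ]
    have hpow : (Q ^ 2 + 2 * Q - 1) ^ 2 ≤ (Q ^ 2 * (i - 1) + 2 * Q - 1) ^ 2 :=
      pow_le_pow_left₀ (by nlinarith) hlow 2
    nlinarith [pow_pos (by linarith : 0 < Q) 3]
  interval_cases i
  · exact .inl (by simp [hAi])
  · exact .inr (by rw [hAi]; ring)

namespace BorelData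

variable {q : ℕ} {F G : Type*} [Field F] [Fintype F] [Group G] (D : BorelData q F G)
  (hF : HasOddSquareCard q F)

include hF

theorem z_sub_pow_div_two (a : F) : D.z ((a - a ^ q) / 2) = D.z a := by
  have h2 := hF.two_ne_zero
  have hfixed : D.z ((a + a ^ q) / 2) = 1 :=
    (D.z_eq_one_iff _).mpr (by rw [div_pow, hF.two_pow, hF.add_pow, hF.pow_pow, add_comm])
  rw [← one_mul (D.z _), ← hfixed, ← D.z_add]
  congr 1
  field_simp
  ring

theorem exists_t_mul_z_mul_t_inv {a b : F} (ha : a ^ q ≠ a) (hb : b ^ q ≠ b) :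
    ∃ x, D.t x * D.z a * (D.t x)⁻¹ = D.z b := by
  have ha' : a - a ^ q ≠ 0 := sub_ne_zero.mpr ha.symm
  have hb' : b - b ^ q ≠ 0 := sub_ne_zero.mpr hb.symm
  obtain ⟨x, hx⟩ := hF.exists_norm_eq (div_ne_zero hb' ha') (by
    rw [div_pow, hF.sub_pow, hF.sub_pow, hF.pow_pow, hF.pow_pow, ← neg_sub, ← neg_sub a,
      neg_div_neg_eq])
  refine ⟨x, ?_⟩
  rw [← D.z_sub_pow_div_two hF a, D.t_mul_z, mul_inv_cancel_right, hx,
    ← D.z_sub_pow_div_two hF b]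
  congr 1
  field_simp

theorem mul_trace_centerProj_zero {E : Type*} [Field E] [CharZero E] {n : ℕ}
    (ρ : G →* Matrix (Fin n) (Fin n) E) (ψ : AddChar F E) {b : F} (hb : b ^ q ≠ b) :
    (q : E) * (D.centerProj ρ ψ 0).trace = n + ((q : E) - 1) * (ρ (D.z b)).trace := by
  classical
  have hq := hF.three_le
  have htrace : ∀ a, (ρ (D.z a)).trace = if a ^ q = a then (n : E) else (ρ (D.z b)).trace :=
    fun a => by
      split_ifs with ha
      · rw [(D.z_eq_one_iff a).mpr ha, map_one, trace_one, Fintype.card_fin]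
      · obtain ⟨x, hx⟩ := D.exists_t_mul_z_mul_t_inv hF ha hb
        rw [← hx, map_mul, map_mul, trace_map_mul_mul_map_inv]
  have hnot := Finset.card_filter_add_card_filter_not (s := Finset.univ) (fun a : F => a ^ q = a)
  rw [hF.card_filter_pow_eq_self, Finset.card_univ, hF.card] at hnot
  rw [centerProj, trace_fourierCoeff]
  simp only [zero_mul, neg_zero, AddChar.map_zero_eq_one, one_mul]
  rw [Finset.sum_congr rfl fun a _ => htrace a, Finset.sum_ite, Finset.sum_const,
    Finset.sum_const, hF.card_filter_pow_eq_self, Nat.eq_sub_of_add_eq' hnot, hF.card,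
    nsmul_eq_mul, nsmul_eq_mul, Nat.cast_sub (by nlinarith : q ≤ q ^ 2)]
  have hq0 : (q : E) ≠ 0 := Nat.cast_ne_zero.mpr (by lia)
  push_cast
  field_simp

end BorelData

namespace BruhatData

variable {q : ℕ} {F G : Type*} [Field F] [Fintype F] [Group G] (D : BruhatData q F G)
  (hF : HasOddSquareCard q F)

include hF

theorem map_z_eq_one {M : Type*} [CommGroup M] (κ : G →* M) (a : F) : κ (D.z a) = 1 := by
  refine addChar_apply_eq_one_of_apply_neg_eq hF.two_ne_zero
    ⟨fun a => κ (D.z a), by rw [D.z_zero, map_one], fun a b => by rw [D.z_add, map_mul]⟩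
    (fun a => ?_) a
  obtain ⟨x, hx⟩ := hF.exists_norm_eq (a := -1) (by norm_num) (by rw [hF.neg_pow, one_pow])
  have h := congrArg κ (D.t_mul_z x a)
  rw [map_mul, map_mul, hx, neg_one_mul, mul_comm] at h
  exact (mul_right_cancel h).symm

theorem map_u_eq_one {M : Type*} [CommGroup M] (κ : G →* M) (a : F) : κ (D.u a) = 1 := by
  refine addChar_apply_eq_one_of_apply_neg_eq hF.two_ne_zero
    ⟨fun a => κ (D.u a), by rw [D.u_zero, map_one], fun a b => by
      rw [← map_mul, D.u_mul_u, map_mul, D.map_z_eq_one hF, one_mul]⟩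
    (fun a => ?_) a
  have h := congrArg κ (D.t_mul_u (-1) a)
  have hval : (((-1) ^ 2 / (-1) ^ q : Fˣ) : F) = -1 := by
    rw [hF.odd.neg_one_pow]
    simp
  rw [map_mul, map_mul, hval, neg_one_mul, mul_comm] at h
  exact (mul_right_cancel h).symm

theorem map_t_eq_one {M : Type*} [CommGroup M] (κ : G →* M) (x : Fˣ) : κ (D.t x) = 1 := by
  have hunip : ∀ v ∈ D.unipotent, κ v = 1 := by
    rintro v ⟨b, a, rfl⟩
    rw [map_mul, D.map_z_eq_one hF, D.map_u_eq_one hF, one_mul]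
  have hw : ∀ y, κ (D.t y) = κ D.w := fun y => by
    obtain ⟨v, hv, v', hv', v'', hv'', h⟩ := D.exists_mem_bigCell y
    have h := congrArg κ h
    simp only [map_mul, hunip v hv, hunip v' hv', hunip v'' hv'', mul_one, one_mul] at h
    exact (mul_left_cancel h).symm
  rw [hw, ← hw 1, map_one, map_one]

theorem det_map_t {E : Type*} [Field E] {n : ℕ} (ρ : G →* Matrix (Fin n) (Fin n) E) (x : Fˣ) :
    (ρ (D.t x)).det = 1 :=
  congrArg Units.val (D.map_t_eq_one hF (detMonoidHom.comp ρ).toHomUnits x)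

theorem pow_eq_one_of_commute_z {b b' a : F} {x : Fˣ} (hb0 : b ≠ 0) (hb : b ^ q = -b)
    (h : Commute (D.z b' * D.u a * D.t x) (D.z b)) : x ^ (q + 1) = 1 := by
  have hcomm : D.z ((x : F) ^ (q + 1) * b) * (D.z b' * D.u a) =
      D.z b' * D.u a * D.z ((x : F) ^ (q + 1) * b) := by
    rw [← mul_assoc, ← D.z_add, add_comm, D.z_add, mul_assoc, D.z_mul_u, ← mul_assoc]
  have hz : D.z ((x : F) ^ (q + 1) * b) = D.z b := by
    have heq := h.eq
    rw [mul_assoc, D.t_mul_z, ← mul_assoc, ← hcomm, mul_assoc] at heq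
    exact mul_right_cancel heq
  have hfixed := (D.z_eq_one_iff ((x : F) ^ (q + 1) * b - b)).mp (by
    rw [← mul_left_inj (D.z b), ← D.z_add, sub_add_cancel, hz, one_mul])
  rw [hF.sub_pow, mul_pow, hF.norm_pow, hb] at hfixed
  ext
  rw [Units.val_pow_eq_pow_val, Units.val_one]
  exact mul_left_cancel₀ (mul_ne_zero hF.two_ne_zero hb0) (by linear_combination -hfixed)

theorem natCard_centralizer_z_le {b : F} (hb0 : b ≠ 0) (hb : b ^ q = -b) :
    Nat.card (Subgroup.centralizer {D.z b}) ≤ q ^ 3 * (q + 1) := by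
  classical
  let S : Finset (F × F × Fˣ) := ({a | a ^ q = -a} : Finset F) ×ˢ (Finset.univ : Finset F) ×ˢ
    ({x | x ^ (q + 1) = 1} : Finset Fˣ)
  have hsub : (Subgroup.centralizer {D.z b} : Set G) ⊆
      ((S.image fun r => D.z r.1 * D.u r.2.1 * D.t r.2.2 : Finset G) : Set G) := fun g hg => by
    have hg : Commute g (D.z b) := (Subgroup.mem_centralizer_singleton_iff.mp hg)
    obtain ⟨v, ⟨b', a, rfl⟩, x, rfl⟩ :=
      D.exists_eq_mul_t_of_mul_z_eq b b g (hF.pow_ne_self_of_pow_eq_neg hb0 hb) hg.eq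
    refine Finset.mem_coe.mpr (Finset.mem_image.mpr ⟨((b' - b' ^ q) / 2, a, x), ?_, ?_⟩)
    · have hb'q : ((b' - b' ^ q) / 2) ^ q = -((b' - b' ^ q) / 2) := by
        rw [div_pow, hF.two_pow, hF.sub_pow, hF.pow_pow]
        ring
      simpa [S, hb'q] using D.pow_eq_one_of_commute_z hF hb0 hb hg
    · simp only [D.z_sub_pow_div_two hF]
  calc Nat.card (Subgroup.centralizer {D.z b})
      ≤ Nat.card ((S.image fun r => D.z r.1 * D.u r.2.1 * D.t r.2.2 : Finset G) : Set G) :=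
        Nat.card_mono (Finset.finite_toSet _) hsub
    _ ≤ #S := by
        rw [Nat.card_coe_set_eq, Set.ncard_coe_finset]
        exact Finset.card_image_le
    _ ≤ q * (q ^ 2 * (q + 1)) := by
        rw [Finset.card_product, Finset.card_product, hF.card_filter_pow_eq_neg, Finset.card_univ,
          hF.card]
        gcongr
        exact IsCyclic.card_pow_eq_one_le q.succ_pos
    _ = q ^ 3 * (q + 1) := by ring

theorem trace_centerProj_zero_eq_or_eq [Fintype G] {n : ℕ} (ρ : G →* Matrix (Fin n) (Fin n) ℂ)
    {ψ : AddChar F ℂ} (hψ : ψ.IsPrimitive) (hfr : ∀ a, ψ (a ^ q) = ψ a)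
    (hn : n = (q - 1) * (q ^ 2 - q + 1)) (hρ : ∑ g, ‖(ρ g).trace‖ ^ 2 = Fintype.card G) :
    (D.centerProj ρ ψ 0).trace = (q - 1 : ℕ) ∨ (D.centerProj ρ ψ 0).trace = (q ^ 2 - 1 : ℕ) := by
  obtain ⟨b, hb0, hb⟩ := hF.exists_ne_zero_pow_eq_neg
  obtain ⟨A, hA⟩ :=
    exists_natCast_eq_trace_of_isIdempotentElem ((D.orthogonalIdempotents_centerProj ρ hψ).idem 0)
  obtain ⟨m, hm⟩ := D.exists_trace_centerProj_eq_mul ρ hF hψ hb0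
  have hdeg := D.natCast_eq_trace_centerProj_zero_add ρ hF hψ hfr hb0 hb
  rw [hA, hm] at hdeg
  have hvalue := D.mul_trace_centerProj_zero hF ρ ψ (hF.pow_ne_self_of_pow_eq_neg hb0 hb)
  have hbound : ‖(ρ (D.z b)).trace‖ ^ 2 ≤ (q ^ 3 * (q + 1) : ℕ) := by
    have h := natCard_mul_le_natCard_centralizer_mul_sum (f := fun g => ‖(ρ g).trace‖ ^ 2)
      (fun g h => by rw [map_mul, map_mul, trace_map_mul_mul_map_inv]) (fun g => by positivity)
      (D.z b)
    rw [hρ, ← Nat.card_eq_fintype_card, mul_comm] at h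
    exact (le_of_mul_le_mul_right h (by exact_mod_cast Nat.card_pos)).trans
      (by exact_mod_cast D.natCard_centralizer_z_le hF hb0 hb)
  rw [hA] at hvalue ⊢
  exact_mod_cast eq_sub_one_or_eq_sq_sub_one hF.three_le hn (by exact_mod_cast hdeg) hvalue hbound

end BruhatData

theorem orderOf_dvd_sum {Γ : Type*} [Group Γ] [Fintype Γ] {c : Γ} {f : Γ → ℕ}
    (hf : ∀ x, f (x * c) = f x) : orderOf c ∣ ∑ x, f x := by
  classical
  have hpow : ∀ (x : Γ) (j : ℕ), f (x * c ^ j) = f x := fun x j => by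
    induction j with
    | zero => rw [pow_zero, mul_one]
    | succ j ih => rw [pow_succ, ← mul_assoc, hf, ih]
  let H := Subgroup.zpowers c
  rw [← Finset.sum_fiberwise (s := Finset.univ) (g := fun x : Γ => (x : Γ ⧸ H))]
  refine Finset.dvd_sum fun Q _ => ?_
  have hfiber : ∀ x ∈ ({x | (x : Γ ⧸ H) = Q} : Finset Γ), f x = f Q.out := fun x hx => by
    have hmem : Q.out⁻¹ * x ∈ H :=
      QuotientGroup.eq.mp ((QuotientGroup.out_eq' Q).trans (Finset.mem_filter.mp hx).2.symm)
    obtain ⟨j, hj⟩ := mem_powers_iff_mem_zpowers.mpr hmem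
    rw [← hpow Q.out j, ← mul_inv_cancel_left Q.out x, ← hj]
  have hcard : Finset.card ({x | (x : Γ ⧸ H) = Q} : Finset Γ) = orderOf c := by
    rw [← Fintype.card_zpowers]
    simpa [H] using QuotientGroup.card_preimage_mk H {Q}
  rw [Finset.sum_congr rfl hfiber, Finset.sum_const, hcard]
  exact dvd_mul_right _ _

section Idempotent

variable {E : Type*} [Field E] {n : ℕ} {e : Matrix (Fin n) (Fin n) E}

theorem trace_eq_finrank_range_toLin' (he : IsIdempotentElem e) :
    e.trace = Module.finrank E (LinearMap.range (toLin' e)) := by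
  rw [← trace_toLin'_eq]
  exact (LinearMap.IsIdempotentElem.isProj_range _ (he.map toLinAlgEquiv')).trace

theorem exists_mulVec_eq_self_and_mulVec_eq_smul [IsAlgClosed E] {T : Matrix (Fin n) (Fin n) E}
    (he : IsIdempotentElem e) (h0 : e ≠ 0) (hT : Commute T e) :
    ∃ v, v ≠ 0 ∧ e *ᵥ v = v ∧ ∃ l : E, T *ᵥ v = l • v := by
  have hmaps : Set.MapsTo (toLin' T) (LinearMap.range (toLin' e)) (LinearMap.range (toLin' e)) := by
    rintro _ ⟨y, rfl⟩
    exact ⟨T *ᵥ y, by simp [mulVec_mulVec, hT.eq]⟩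
  have : Nontrivial (LinearMap.range (toLin' e)) :=
    (Submodule.nontrivial_iff_ne_bot).mpr fun h =>
      h0 (toLin'.map_eq_zero_iff.mp (LinearMap.range_eq_bot.mp h))
  obtain ⟨l, hl⟩ := Module.End.exists_eigenvalue ((toLin' T).restrict hmaps)
  obtain ⟨⟨_, y, rfl⟩, hv⟩ := hl.exists_hasEigenvector
  refine ⟨e *ᵥ y, fun h => hv.2 (Subtype.ext h), by rw [mulVec_mulVec, he.eq], l, ?_⟩
  exact congrArg Subtype.val hv.apply_eq_smul

end Idempotent

section ColumnRep

variable {G E : Type*} [Group G] [Field E] {n : ℕ}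

/-- The linear representation on column vectors given by a matrix representation. -/
def columnRep (ρ : G →* Matrix (Fin n) (Fin n) E) : Representation E G (Fin n → E) :=
  (toLinAlgEquiv' : Matrix (Fin n) (Fin n) E ≃ₐ[E] _).toMonoidHom.comp ρ

variable (ρ : G →* Matrix (Fin n) (Fin n) E)

theorem columnRep_apply (g : G) (v : Fin n → E) : columnRep ρ g v = ρ g *ᵥ v := rfl

theorem span_range_mulVec_eq_top [(columnRep ρ).IsIrreducible] {v : Fin n → E} (hv : v ≠ 0) :
    Submodule.span E (Set.range fun g => ρ g *ᵥ v) = ⊤ := by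
  let W : Subrepresentation (columnRep ρ) :=
    ⟨Submodule.span E (Set.range fun g => ρ g *ᵥ v), fun g y hy => by
      induction hy using Submodule.span_induction with
      | mem y hy =>
        obtain ⟨h, rfl⟩ := hy
        refine Submodule.subset_span ⟨g * h, ?_⟩
        simp only [columnRep_apply, mulVec_mulVec, map_mul]
      | zero => simp
      | add y y' _ _ hy hy' => rw [map_add]; exact Submodule.add_mem _ hy hy'
      | smul c y _ hy => rw [map_smul]; exact Submodule.smul_mem _ c hy⟩
  have hvW : v ∈ W.toSubmodule := Submodule.subset_span ⟨1, by simp⟩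
  rcases IsSimpleOrder.eq_bot_or_eq_top W with h | h
  · rw [h] at hvW
    exact absurd ((Submodule.mem_bot E).mp hvW) hv
  · exact congrArg Subrepresentation.toSubmodule h

end ColumnRep

namespace BruhatData

variable {q : ℕ} {F G E : Type*} [Field F] [Fintype F] [Group G] [Field E] [CharZero E]
  (D : BruhatData q F G) {n : ℕ} (ρ : G →* Matrix (Fin n) (Fin n) E) {ψ : AddChar F E}
  {v : Fin n → E}

/-- Borel eigenvectors: vectors fixed by the unipotent radical (expressed through the averaging
idempotent) on which the torus acts by scalars. -/
structure IsBorelEigenvector (ψ : AddChar F E) (v : Fin n → E) : Prop where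
  ne_zero : v ≠ 0
  uniProj_mulVec : D.uniProj ρ ψ 0 *ᵥ v = v
  exists_map_t_mulVec : ∀ x, ∃ l : E, ρ (D.t x) *ᵥ v = l • v

variable {D ρ}

theorem exists_isBorelEigenvector [IsAlgClosed E] (hψ : ψ.IsPrimitive)
    (h0 : D.uniProj ρ ψ 0 ≠ 0) : ∃ v, D.IsBorelEigenvector ρ ψ v := by
  obtain ⟨x₀, hx₀⟩ := IsCyclic.exists_monoid_generator (α := Fˣ)
  have hcomm : Commute (ρ (D.t x₀)) (D.uniProj ρ ψ 0) := by
    simpa [Commute, SemiconjBy] using D.map_t_mul_uniProj (ψ := ψ) ρ x₀ 0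
  obtain ⟨v, hv0, hv, l, hl⟩ := exists_mulVec_eq_self_and_mulVec_eq_smul
    ((D.orthogonalIdempotents_uniProj ρ hψ).idem 0) h0 hcomm
  refine ⟨v, hv0, hv, fun x => ?_⟩
  obtain ⟨j, rfl⟩ := hx₀ x
  refine ⟨l ^ j, ?_⟩
  induction j with
  | zero => simp
  | succ j ih =>
    simp only at ih ⊢
    rw [pow_succ, map_mul, map_mul, ← mulVec_mulVec, hl, mulVec_smul, ih, smul_smul, pow_succ']

section SupportedOnCenter

variable [DecidableEq F] {M : Type*} [AddCommGroup M] [Module E M]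

omit [CharZero E] in
theorem map_mul_centerProj_zero (hF : HasOddSquareCard q F)
    {P : Matrix (Fin n) (Fin n) E →ₗ[E] M} {x : M}
    (hP : ∀ a b, P (ρ (D.z b * D.u a)) = if a = 0 ∧ b ^ q = b then x else 0) (a : F) :
    P (ρ (D.u a) * D.centerProj ρ ψ 0) =
      if a = 0 then ((Fintype.card F : E)⁻¹ * q) • x else 0 := by
  rw [BorelData.centerProj, fourierCoeff, mul_smul_comm, Finset.mul_sum, map_smul, map_sum]
  simp only [zero_mul, neg_zero, AddChar.map_zero_eq_one, one_smul, ← map_mul, ← D.z_mul_u, hP,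
    ite_and]
  split_ifs
  · rw [← Finset.sum_filter, Finset.sum_const, hF.card_filter_pow_eq_self,
      ← Nat.cast_smul_eq_nsmul E, smul_smul]
  · rw [Finset.sum_const_zero, smul_zero]

/- `P` is supported on `Z ⊆ U`, so averaging over `Z` and over `U` gives different multiples of
`x`, although `e_0 = f_0` says that both averages agree. -/
theorem eq_zero_of_centerProj_eq_uniProj (hF : HasOddSquareCard q F)
    {P : Matrix (Fin n) (Fin n) E →ₗ[E] M} {x : M}
    (hP : ∀ a b, P (ρ (D.z b * D.u a)) = if a = 0 ∧ b ^ q = b then x else 0)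
    (hef : D.centerProj ρ ψ 0 = D.uniProj ρ ψ 0) : x = 0 := by
  let c : E := (Fintype.card F : E)⁻¹ * q
  have hPcenter := map_mul_centerProj_zero (ψ := ψ) hF hP
  have hPuni : P (D.uniProj ρ ψ 0) = (Fintype.card F : E)⁻¹ • c • x := by
    rw [BorelData.uniProj, fourierCoeff, map_smul, map_sum]
    simp [hPcenter, c]
  have hcmp : c • x = (Fintype.card F : E)⁻¹ • c • x := by
    rw [← hPuni, ← hef]
    simpa [D.u_zero] using (hPcenter 0).symm
  have hq := hF.three_le
  have hc : c ≠ 0 := by simp [c, show q ≠ 0 by lia]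
  have hcard : (Fintype.card F : E)⁻¹ ≠ 1 := by
    rw [inv_ne_one, Nat.cast_ne_one, hF.card]
    nlinarith
  have hzero : ((1 - (Fintype.card F : E)⁻¹) * c) • x = 0 := by
    rw [sub_mul, one_mul, sub_smul, mul_smul (_ : E) c, ← hcmp, sub_self]
  exact (smul_eq_zero.mp hzero).resolve_left (mul_ne_zero (sub_ne_zero.mpr hcard.symm) hc)

end SupportedOnCenter

namespace IsBorelEigenvector

variable (hψ : ψ.IsPrimitive) (hv : D.IsBorelEigenvector ρ ψ v)

include hψ hv

theorem map_mulVec {g : G} (hg : g ∈ D.unipotent) : ρ g *ᵥ v = v := by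
  rw [← hv.uniProj_mulVec, mulVec_mulVec, D.map_mul_uniProj_zero ρ hψ hg]

theorem exists_uniProj_mulVec_borel {g : G} (hg : g ∈ D.unipotent) (x : Fˣ) :
    ∃ l : E, D.uniProj ρ ψ 0 *ᵥ (ρ (g * D.t x) *ᵥ v) = l • v := by
  obtain ⟨l, hl⟩ := hv.exists_map_t_mulVec x
  refine ⟨l, ?_⟩
  rw [map_mul, ← mulVec_mulVec, hl, mulVec_smul, mulVec_smul, hv.map_mulVec hψ hg,
    hv.uniProj_mulVec]

theorem exists_uniProj_mulVec_bigCell {g : G} {x : Fˣ} (hg : g ∈ D.bigCell D.w x) :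
    ∃ l : E, D.uniProj ρ ψ 0 *ᵥ (ρ g *ᵥ v) = l • (D.uniProj ρ ψ 0 *ᵥ (ρ D.w *ᵥ v)) := by
  obtain ⟨g₁, hg₁, g₂, hg₂, rfl⟩ := hg
  obtain ⟨l, hl⟩ := hv.exists_map_t_mulVec x
  refine ⟨l, ?_⟩
  rw [map_mul, ← mulVec_mulVec, hv.map_mulVec hψ hg₂, map_mul, ← mulVec_mulVec, hl, mulVec_smul,
    mulVec_smul, map_mul, ← mulVec_mulVec, mulVec_mulVec, D.uniProj_zero_mul_map ρ hψ hg₁]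

theorem range_uniProj_le_span [(columnRep ρ).IsIrreducible] :
    LinearMap.range (toLin' (D.uniProj ρ ψ 0)) ≤
      Submodule.span E {v, D.uniProj ρ ψ 0 *ᵥ (ρ D.w *ᵥ v)} := by
  rw [LinearMap.range_eq_map, ← span_range_mulVec_eq_top ρ hv.ne_zero, Submodule.map_span_le]
  rintro _ ⟨g, rfl⟩
  rw [toLin'_apply, Submodule.mem_span_pair]
  rcases D.bruhat g with ⟨g', hg', x, rfl⟩ | ⟨x, hg⟩
  · obtain ⟨l, hl⟩ := hv.exists_uniProj_mulVec_borel hψ hg' x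
    exact ⟨l, 0, by rw [hl, zero_smul, add_zero]⟩
  · obtain ⟨l, hl⟩ := hv.exists_uniProj_mulVec_bigCell hψ hg
    exact ⟨0, l, by rw [hl, zero_smul, zero_add]⟩

theorem mem_span_of_centerProj_eq_uniProj (hF : HasOddSquareCard q F)
    (hef : D.centerProj ρ ψ 0 = D.uniProj ρ ψ 0) :
    v ∈ Submodule.span E {D.uniProj ρ ψ 0 *ᵥ (ρ D.w *ᵥ v)} := by
  classical
  set S := Submodule.span E {D.uniProj ρ ψ 0 *ᵥ (ρ D.w *ᵥ v)}
  let P : Matrix (Fin n) (Fin n) E →ₗ[E] (Fin n → E) ⧸ S :=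
    S.mkQ ∘ₗ LinearMap.applyₗ v ∘ₗ toLin'.toLinearMap ∘ₗ
      LinearMap.mulLeftRight E (D.uniProj ρ ψ 0 * ρ D.w, ρ D.w)
  have hP : ∀ g, P (ρ g) = S.mkQ (D.uniProj ρ ψ 0 *ᵥ (ρ (D.w * g * D.w) *ᵥ v)) := fun g => by
    simp [P, mulVec_mulVec, Matrix.mul_assoc]
  refine (Submodule.Quotient.mk_eq_zero S).mp
    (eq_zero_of_centerProj_eq_uniProj hF (P := P) (fun a b => ?_) hef)
  rw [hP]
  split_ifs with h
  · rw [h.1, D.u_zero, (D.z_eq_one_iff b).mpr h.2, mul_one, mul_one, D.w_mul_w, map_one,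
      one_mulVec, hv.uniProj_mulVec, Submodule.mkQ_apply]
  · obtain ⟨x, hg⟩ := D.exists_w_mul_w_mem_bigCell a b (not_and_or.mp h)
    obtain ⟨l, hl⟩ := hv.exists_uniProj_mulVec_bigCell hψ hg
    rw [hl, Submodule.mkQ_apply, Submodule.Quotient.mk_eq_zero]
    exact S.smul_mem l (Submodule.mem_span_singleton_self _)

theorem finrank_range_uniProj_le_two [(columnRep ρ).IsIrreducible] :
    Module.finrank E (LinearMap.range (toLin' (D.uniProj ρ ψ 0))) ≤ 2 := by
  classical
  refine (Submodule.finrank_mono (hv.range_uniProj_le_span hψ)).trans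
    ((finrank_span_le_card _).trans ?_)
  rw [Set.toFinset_insert, Set.toFinset_singleton]
  exact Finset.card_le_two

theorem finrank_range_uniProj_le_one [(columnRep ρ).IsIrreducible] (hF : HasOddSquareCard q F)
    (hef : D.centerProj ρ ψ 0 = D.uniProj ρ ψ 0) :
    Module.finrank E (LinearMap.range (toLin' (D.uniProj ρ ψ 0))) ≤ 1 := by
  have hrange := hv.range_uniProj_le_span hψ
  rw [Submodule.span_insert_eq_span (hv.mem_span_of_centerProj_eq_uniProj hψ hF hef)] at hrange
  exact (Submodule.finrank_mono hrange).trans ((finrank_span_le_card _).trans (by simp))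

end IsBorelEigenvector

/- The torus permutes the `f_s` with `s ≠ 0` in regular orbits of its image in `Aut(U/Z)`. -/
theorem exists_trace_centerProj_zero_eq_add_mul (hψ : ψ.IsPrimitive) (x₀ : Fˣ) :
    ∃ j : ℕ, (D.centerProj ρ ψ 0).trace =
        (Module.finrank E (LinearMap.range (toLin' (D.uniProj ρ ψ 0))) +
          orderOf (x₀ ^ 2 / x₀ ^ q) * j : ℕ) ∧
      (j = 0 → D.centerProj ρ ψ 0 = D.uniProj ρ ψ 0) := by
  classical
  let d : F → ℕ := fun s => Module.finrank E (LinearMap.range (toLin' (D.uniProj ρ ψ s)))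
  have hd : ∀ s, (D.uniProj ρ ψ s).trace = d s := fun s =>
    trace_eq_finrank_range_toLin' ((D.orthogonalIdempotents_uniProj ρ hψ).idem s)
  have hinv : ∀ x : Fˣ, d (x * (x₀ ^ 2 / x₀ ^ q) : Fˣ) = d x := fun x => by
    have h := D.map_t_mul_uniProj_mul (ψ := ψ) ρ x₀ (x * (x₀ ^ 2 / x₀ ^ q) : Fˣ)
    rw [← Units.val_mul, mul_inv_cancel_right] at h
    exact_mod_cast (hd _).symm.trans ((trace_map_mul_mul_map_inv ρ _ _).symm.trans
      ((congrArg trace h).trans (hd x)))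
  obtain ⟨j, hj⟩ := orderOf_dvd_sum (f := fun x : Fˣ => d x) hinv
  have hunits : ∑ s, d s = d 0 + ∑ x : Fˣ, d x := by
    rw [Fintype.sum_eq_add_sum_subtype_ne d 0, ← unitsEquivNeZero.sum_comp]
    rfl
  refine ⟨j, ?_, ?_⟩
  · rw [← hj, ← hunits, ← D.sum_uniProj ρ hψ, trace_sum, Nat.cast_sum]
    exact Finset.sum_congr rfl fun s _ => hd s
  · rintro rfl
    rw [← D.sum_uniProj ρ hψ]
    refine Finset.sum_eq_single 0 (fun s _ hs => ?_) (by simp)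
    refine eq_zero_of_trace_eq_zero ((D.orthogonalIdempotents_uniProj ρ hψ).idem s) ?_
    have h0 := (Finset.sum_eq_zero_iff.mp (hj.trans (mul_zero _))) (Units.mk0 s hs)
      (Finset.mem_univ _)
    rw [hd, show d s = 0 from h0, Nat.cast_zero]

theorem uniProj_zero_eq_zero_and_trace_centerProj_zero [IsAlgClosed E] [(columnRep ρ).IsIrreducible]
    (hF : HasOddSquareCard q F) (hψ : ψ.IsPrimitive)
    (htrace : (D.centerProj ρ ψ 0).trace = (q - 1 : ℕ) ∨
      (D.centerProj ρ ψ 0).trace = (q ^ 2 - 1 : ℕ)) :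
    D.uniProj ρ ψ 0 = 0 ∧ (D.centerProj ρ ψ 0).trace = (q ^ 2 - 1 : ℕ) := by
  classical
  obtain ⟨x₀, hx₀⟩ := IsCyclic.exists_monoid_generator (α := Fˣ)
  obtain ⟨K, hK3, hK⟩ := hF.exists_dvd_three_orderOf_mul (hF.orderOf_eq_of_forall_mem_powers hx₀)
  obtain ⟨j, hj, hj0⟩ := exists_trace_centerProj_zero_eq_add_mul (D := D) (ρ := ρ) hψ x₀
  set d := Module.finrank E (LinearMap.range (toLin' (D.uniProj ρ ψ 0))) with hd
  set l := orderOf (x₀ ^ 2 / x₀ ^ q)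
  have hq := hF.three_le
  have hfac := sq_sub_one_eq_mul q
  have hl : q ^ 2 - 1 ≤ 3 * l := by
    rw [← hK, mul_comm]
    exact Nat.mul_le_mul_right l (Nat.le_of_dvd (by lia) hK3)
  have hql : q - 1 < l := by
    have : 4 * (q - 1) ≤ (q + 1) * (q - 1) := Nat.mul_le_mul_right _ (by lia)
    lia
  rw [hj, Nat.cast_inj, Nat.cast_inj] at htrace
  by_cases h0 : D.uniProj ρ ψ 0 = 0
  · have hd0 : d = 0 := by
      rw [hd, h0, map_zero, LinearMap.range_zero, finrank_bot]
    refine ⟨h0, hj.trans (congrArg _ (htrace.resolve_left fun h => ?_))⟩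
    rcases Nat.eq_zero_or_pos j with rfl | hjpos
    · lia
    · nlinarith [Nat.le_mul_of_pos_right l hjpos]
  exfalso
  obtain ⟨v, hv⟩ := exists_isBorelEigenvector hψ h0
  have hd0 : 0 < d := Nat.pos_of_ne_zero fun h => h0 <| toLin'.map_eq_zero_iff.mp <|
    LinearMap.range_eq_bot.mp <| Submodule.finrank_eq_zero.mp h
  rcases htrace with h | h
  · obtain rfl : j = 0 := Nat.eq_zero_of_not_pos fun hjpos => by
      nlinarith [Nat.le_mul_of_pos_right l hjpos]
    have hd1 : d ≤ 1 := hv.finrank_range_uniProj_le_one hψ hF (hj0 rfl)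
    lia
  · have hd2 : d ≤ 2 := hv.finrank_range_uniProj_le_two hψ
    have hdvd : l ∣ d := (Nat.dvd_add_left (dvd_mul_right l j)).mp (h ▸ hK ▸ dvd_mul_right l K)
    have := Nat.le_of_dvd hd0 hdvd
    lia

end BruhatData

section Character

variable {G k : Type*} [Group G] [Field k]

theorem isIrreducible_of_equiv {V W : Type*} [AddCommGroup V] [Module k V] [AddCommGroup W]
    [Module k W] {ρ : Representation k G V} {σ : Representation k G W} [ρ.IsIrreducible]
    (φ : ρ.Equiv σ) : σ.IsIrreducible := by
  rw [Representation.irreducible_iff_isSimpleModule_asModule]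
  let f := Representation.IntertwiningMap.equivLinearMapAsModule σ ρ φ.symm.toIntertwiningMap
  exact IsSimpleModule.congr (LinearEquiv.ofBijective f φ.symm.toLinearEquiv.bijective)

theorem isIrreducible_of_character_eq [IsAlgClosed k] [CharZero k] [Finite G] {V W : Type*}
    [AddCommGroup V] [Module k V] [FiniteDimensional k V] [AddCommGroup W] [Module k W]
    [FiniteDimensional k W] {ρ : Representation k G V} {σ : Representation k G W}
    [ρ.IsIrreducible] (h : σ.character = ρ.character) : σ.IsIrreducible := by
  have := Fintype.ofFinite G
  have : Invertible (Nat.card G : k) := invertibleOfNonzero (by simp)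
  have hhom : Module.finrank k (ρ.IntertwiningMap σ) = 1 := by
    have hρσ := ρ.card_inv_mul_sum_char_mul_char_eq_finrank σ
    rw [h, ρ.card_inv_mul_sum_char_mul_char_eq_finrank ρ,
      Representation.IsIrreducible.finrank_intertwiningMap_self] at hρσ
    exact_mod_cast hρσ.symm
  have hdim : Module.finrank k V = Module.finrank k W := by
    exact_mod_cast ρ.char_one.symm.trans ((congrFun h 1).symm.trans σ.char_one)
  have : Nontrivial (ρ.IntertwiningMap σ) := Module.nontrivial_of_finrank_pos (R := k) (by lia)
  obtain ⟨f, hf⟩ := exists_ne (0 : ρ.IntertwiningMap σ)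
  have hinj := (Representation.IsIrreducible.injective_or_eq_zero f).resolve_right hf
  exact isIrreducible_of_equiv (f.ofBijective
    ⟨hinj, (LinearMap.injective_iff_surjective_of_finrank_eq_finrank hdim).mp hinj⟩)

variable {n : ℕ} (ρ : G →* Matrix (Fin n) (Fin n) k)

theorem character_columnRep (g : G) : (columnRep ρ).character g = (ρ g).trace :=
  trace_toLin'_eq (ρ g)

theorem sum_trace_mul_trace_inv_eq_card [IsAlgClosed k] [CharZero k] [Fintype G]
    [(columnRep ρ).IsIrreducible] :
    ∑ g, (ρ g).trace * (ρ g⁻¹).trace = Fintype.card G := by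
  have : Invertible (Nat.card G : k) := invertibleOfNonzero (by simp)
  have h := (columnRep ρ).card_inv_mul_sum_char_mul_char_eq_finrank (columnRep ρ)
  rw [Representation.IsIrreducible.finrank_intertwiningMap_self, inv_mul_eq_iff_eq_mul₀ (by simp)]
    at h
  simpa [character_columnRep] using h

theorem exists_eq_smul_one_of_commute [IsAlgClosed k] [(columnRep ρ).IsIrreducible]
    {T : Matrix (Fin n) (Fin n) k} (hT : ∀ g, Commute T (ρ g)) : ∃ l : k, T = l • 1 := by
  let f := (toLin' T).intertwiningMap_of_isIntertwiningMap (columnRep ρ) (columnRep ρ)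
    fun g v => by simp only [columnRep_apply, toLin'_apply, mulVec_mulVec, (hT g).eq]
  have hschur : Function.Surjective (algebraMap k ((columnRep ρ).IntertwiningMap (columnRep ρ))) :=
    Representation.IsIrreducible.algebraMap_intertwiningMap_bijective_of_isAlgClosed.2
  obtain ⟨l, hl⟩ := hschur f
  refine ⟨l, toLin'.injective (LinearMap.ext fun v => ?_)⟩
  simpa [f] using (congr($hl v)).symm

theorem star_trace_eq_trace_inv [StarRing k] {H : Matrix (Fin n) (Fin n) k} (hH : IsUnit H.det)
    (hρ : ∀ g, (ρ g)ᴴ * H * ρ g = H) (g : G) : star (ρ g).trace = (ρ g⁻¹).trace := by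
  have h : (ρ g)ᴴ * H = H * ρ g⁻¹ := by
    conv_rhs => rw [← hρ g, Matrix.mul_assoc, ← map_mul, mul_inv_cancel, map_one, Matrix.mul_one]
  rw [← trace_conjTranspose, ← mul_nonsing_inv_cancel_right H (ρ g)ᴴ hH, h, trace_mul_comm,
    nonsing_inv_mul_cancel_left _ _ hH]

end Character

theorem det_of_trace_pow_eq_zero_of_pow_mul_eq_smul {n l K : ℕ} [NeZero l] (hl : Even l)
    (hK0 : K ≠ 0) {T e : Matrix (Fin n) (Fin n) ℂ} {ω : ℂ} (he : e * e = e) (hTe : Commute T e)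
    (hT : T ^ l * e = ω • e) (hω : ω ^ K = 1) (ht : ∀ j, 0 < j → j < l → (T ^ j * e).trace = 0)
    (hK : e.trace = (l * K : ℕ)) : (T * e + (1 - e)).det = (-1) ^ K := by
  have hω0 : ω ≠ 0 := by
    rintro rfl
    exact zero_ne_one ((zero_pow hK0).symm.trans hω)
  obtain ⟨η, hη⟩ := IsAlgClosed.exists_pow_nat_eq ω (NeZero.pos l)
  have hdet := det_of_trace_pow_eq_zero (S := η⁻¹ • T) hl he (hTe.smul_left _)
    (by rw [smul_pow, inv_pow, hη, Matrix.smul_mul, hT, smul_smul, inv_mul_cancel₀ hω0, one_smul])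
    (fun j hj hjl => by rw [smul_pow, Matrix.smul_mul, trace_smul, ht j hj hjl, smul_zero]) hK
  have hscale : η⁻¹ • T * e + (1 - e) = (T * e + (1 - e)) * (1 + (η⁻¹ - 1) • e) := by
    simp only [Matrix.add_mul, Matrix.mul_add, Matrix.mul_one, Matrix.mul_smul, Matrix.mul_assoc,
      he, Matrix.sub_mul, Matrix.one_mul, sub_self, add_zero, Matrix.smul_mul]
    module
  rwa [hscale, det_mul, det_one_add_smul_of_isIdempotentElem he hK, pow_mul, inv_pow, hη, inv_pow,
    hω, inv_one, mul_one] at hdet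

namespace BorelData

variable {q : ℕ} {F G E : Type*} [Field F] [Fintype F] [Group G] [Field E] [CharZero E] {n : ℕ}
  (D : BorelData q F G) (ρ : G →* Matrix (Fin n) (Fin n) E) {ψ : AddChar F E}

theorem trace_map_t_mul_centerProj_zero (hψ : ψ.IsPrimitive) (h0 : D.uniProj ρ ψ 0 = 0) {x : Fˣ}
    (hx : x ^ 2 / x ^ q ≠ 1) : (ρ (D.t x) * D.centerProj ρ ψ 0).trace = 0 := by
  have hf := D.orthogonalIdempotents_uniProj ρ hψ
  rw [← D.sum_uniProj ρ hψ, Finset.mul_sum, trace_sum]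
  refine Finset.sum_eq_zero fun s _ => ?_
  rcases eq_or_ne s 0 with rfl | hs
  · rw [h0, Matrix.mul_zero, trace_zero]
  · have hne : s * ((x ^ 2 / x ^ q)⁻¹ : Fˣ) ≠ s := fun h =>
      hx (inv_eq_one.mp (Units.ext (mul_left_cancel₀ hs (h.trans (mul_one s).symm))))
    rw [← (hf.idem s).eq, ← Matrix.mul_assoc, trace_mul_comm, D.map_t_mul_uniProj,
      ← Matrix.mul_assoc, hf.ortho hne.symm, Matrix.zero_mul, trace_zero]

theorem trace_centerProj_eq_mul_sub_two (hF : HasOddSquareCard q F) (hψ : ψ.IsPrimitive)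
    (hfr : ∀ a, ψ (a ^ q) = ψ a) (hn : n = (q - 1) * (q ^ 2 - q + 1))
    (htrace : (D.centerProj ρ ψ 0).trace = (q ^ 2 - 1 : ℕ)) {y : F} (hy0 : y ≠ 0)
    (hy : y ^ q = -y) : (D.centerProj ρ ψ y).trace = (q * (q - 2) : ℕ) := by
  have hdim := D.natCast_eq_trace_centerProj_zero_add ρ hF hψ hfr hy0 hy
  obtain ⟨r, rfl⟩ := Nat.exists_eq_add_of_le' hF.three_le
  have h2 : (r + 3) ^ 2 - (r + 3) + 1 = (r + 3) * (r + 2) + 1 := by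
    congr 1
    exact Nat.sub_eq_of_eq_add (by ring)
  have hr : (r : E) + 2 ≠ 0 := by exact_mod_cast (r + 1).succ_ne_zero
  rw [htrace, show (n : E) = _ from congrArg _ hn, sq_sub_one_eq_mul, h2,
    show r + 3 - 1 = r + 2 by rfl] at hdim
  rw [show r + 3 - 2 = r + 1 by rfl]
  push_cast at hdim ⊢
  exact mul_left_cancel₀ hr (by linear_combination -hdim)

end BorelData

namespace BruhatData

variable {q : ℕ} {F G : Type*} [Field F] [Fintype F] [Group G] {n : ℕ} (D : BruhatData q F G)
  (hF : HasOddSquareCard q F) (ρ : G →* Matrix (Fin n) (Fin n) ℂ) [(columnRep ρ).IsIrreducible]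
  {ψ : AddChar F ℂ} (hψ : ψ.IsPrimitive) (h0 : D.uniProj ρ ψ 0 = 0)
  (htrace : (D.centerProj ρ ψ 0).trace = (q ^ 2 - 1 : ℕ)) {x₀ : Fˣ} (hx₀ : orderOf x₀ = q ^ 2 - 1)
include hF hψ h0 htrace hx₀

theorem det_map_t_mul_centerProj_zero :
    (ρ (D.t x₀) * D.centerProj ρ ψ 0 + (1 - D.centerProj ρ ψ 0)).det = -1 := by
  obtain ⟨K, hK3, hK⟩ := hF.exists_dvd_three_orderOf_mul hx₀
  have hKodd : Odd K := Odd.of_dvd_nat (by decide) hK3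
  have hpow : ∀ j, ρ (D.t x₀) ^ j = ρ (D.t (x₀ ^ j)) ∧
      (x₀ ^ j) ^ 2 / (x₀ ^ j) ^ q = (x₀ ^ 2 / x₀ ^ q) ^ j := fun j =>
    ⟨by rw [map_pow, map_pow], by rw [div_pow, pow_right_comm, pow_right_comm x₀ q]⟩
  set l := orderOf (x₀ ^ 2 / x₀ ^ q)
  have : NeZero l := ⟨(orderOf_pos _).ne'⟩
  obtain ⟨ω, hω⟩ : ∃ ω : ℂ, ρ (D.t x₀) ^ l = ω • 1 :=
    exists_eq_smul_one_of_commute ρ fun g => by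
      rw [(hpow l).1]
      exact (D.commute_t _ (by rw [(hpow l).2, pow_orderOf_eq_one]) g).map ρ
  have hn : Nonempty (Fin n) := by
    by_contra hn
    have := not_nonempty_iff.mp hn
    have hzero : ((q ^ 2 - 1 : ℕ) : ℂ) = 0 := htrace.symm.trans (by simp [trace])
    have := hF.three_le
    rw [Nat.cast_eq_zero] at hzero
    nlinarith [Nat.sub_eq_zero_iff_le.mp hzero]
  have hωK : ω ^ K = 1 := by
    have h : (ω ^ K) • (1 : Matrix (Fin n) (Fin n) ℂ) = 1 := by
      rw [← one_pow K, ← smul_pow, ← hω, ← pow_mul, hK, (hpow _).1, ← hx₀, pow_orderOf_eq_one,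
        map_one, map_one, one_pow]
    simpa using congrFun (congrFun h hn.some) hn.some
  rw [det_of_trace_pow_eq_zero_of_pow_mul_eq_smul (hF.even_orderOf_sq_div_pow hx₀)
    hKodd.pos.ne' ((D.orthogonalIdempotents_centerProj ρ hψ).idem 0)
    (D.commute_map_t_centerProj_zero ρ ψ x₀) (by rw [hω, Matrix.smul_mul, Matrix.one_mul]) hωK
    (fun j hj hjl => ?_) (by rw [htrace, hK]), hKodd.neg_one_pow]
  rw [(hpow j).1]
  refine D.trace_map_t_mul_centerProj_zero ρ hψ h0 ?_
  rw [(hpow j).2]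
  exact pow_ne_one_of_lt_orderOf hj.ne' hjl

theorem det_map_t_mul_one_sub_centerProj_zero :
    (ρ (D.t x₀) * (1 - D.centerProj ρ ψ 0) + D.centerProj ρ ψ 0).det = -1 := by
  have he := (D.orthogonalIdempotents_centerProj ρ hψ).idem 0
  have hTe := D.commute_map_t_centerProj_zero ρ ψ x₀
  have hdet := D.det_map_t_mul_centerProj_zero hF ρ hψ h0 htrace hx₀
  have hsplit : (ρ (D.t x₀) * (1 - D.centerProj ρ ψ 0) + D.centerProj ρ ψ 0) *
      (ρ (D.t x₀) * D.centerProj ρ ψ 0 + (1 - D.centerProj ρ ψ 0)) = ρ (D.t x₀) := by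
    generalize D.centerProj ρ ψ 0 = e at he hTe
    generalize ρ (D.t x₀) = T at hTe
    have hT : e * (T * e) = T * e := by rw [← Matrix.mul_assoc, ← hTe.eq, Matrix.mul_assoc, he.eq]
    rw [Matrix.add_mul, Matrix.mul_assoc, Matrix.mul_add (1 - e), he.one_sub.eq, Matrix.mul_add e,
      Matrix.sub_mul 1 e (T * e), Matrix.one_mul, hT, sub_self, zero_add, Matrix.mul_sub e,
      Matrix.mul_one, he.eq, sub_self, add_zero, ← Matrix.mul_add, sub_add_cancel, Matrix.mul_one]
  have hprod := congrArg det hsplit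
  rw [det_mul, hdet, D.det_map_t hF] at hprod
  linear_combination -hprod

end BruhatData

section Frame

variable {R : Type*} [CommRing R] {m s t κ ι : Type*}

/-- The horizontal concatenation of a family of blocks: column `(j, i)` is column `j` of `B i`, in
the indexing convention of `Matrix.blockDiagonal`. -/
def concatCols (B : κ → Matrix m s R) : Matrix m (s × κ) R :=
  of fun i j => B j.2 i j.1

theorem mul_concatCols {l : Type*} [Fintype m] (M : Matrix l m R) (B : κ → Matrix m s R) :
    M * concatCols B = concatCols fun i => M * B i := rfl

theorem concatCols_mul_blockDiagonal [Fintype s] [Fintype κ] [DecidableEq κ]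
    (B : κ → Matrix m s R) (C : κ → Matrix s s R) :
    concatCols B * blockDiagonal C = concatCols fun i => B i * C i := by
  ext i ⟨j, j'⟩
  simp [concatCols, mul_apply, Fintype.sum_prod_type, blockDiagonal_apply]

theorem concatCols_mul_transpose_concatCols [Fintype s] [Fintype κ]
    (A : κ → Matrix m s R) (A' : κ → Matrix s m R) :
    concatCols A * (concatCols fun i => (A' i)ᵀ)ᵀ = ∑ i, A i * A' i := by
  ext i j
  simp only [concatCols, mul_apply, Matrix.sum_apply, Fintype.sum_prod_type, transpose_apply,
    of_apply]
  exact Finset.sum_comm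

theorem conjTranspose_concatCols_mul_mul_concatCols [StarRing R] [Fintype m] [DecidableEq κ]
    (H : Matrix m m R) {A : κ → Matrix m s R} {h : Matrix s s R}
    (hA : ∀ i j, (A i)ᴴ * H * A j = if i = j then h else 0) :
    (concatCols A)ᴴ * H * concatCols A = blockDiagonal fun _ => h := by
  ext ⟨a, i⟩ ⟨b, j⟩
  rw [blockDiagonal_apply]
  refine (congrFun₂ (hA i j) a b).trans ?_
  split_ifs <;> rfl

theorem conjTranspose_concatCols_mul_mul_concatCols_eq_zero [StarRing R] [Fintype m]
    (H : Matrix m m R) {A : κ → Matrix m s R} {B : ι → Matrix m t R}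
    (hAB : ∀ i j, (A i)ᴴ * H * B j = 0) : (concatCols A)ᴴ * H * concatCols B = 0 := by
  ext ⟨a, i⟩ ⟨b, j⟩
  exact congrFun₂ (hAB i j) a b

variable [Fintype m] [DecidableEq m] (ε : m ≃ (s × κ) ⊕ (t × ι))
  (A : κ → Matrix m s R) (B : ι → Matrix m t R)

/-- The determinant of the square matrix whose columns are those of the blocks `A i` followed by
those of the blocks `B i`; the bijection `ε` turns the block indexing into that of the rows. -/
def frameDet : R :=
  ((fromCols (concatCols A) (concatCols B)).submatrix id ε).det

theorem frameDet_mul_left (M : Matrix m m R) :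
    frameDet ε (fun i => M * A i) (fun i => M * B i) = M.det * frameDet ε A B := by
  rw [frameDet, frameDet, ← det_mul, ← mul_concatCols, ← mul_concatCols, ← mul_fromCols]
  rfl

theorem map_frameDet {S : Type*} [CommRing S] (τ : R →+* S) :
    τ (frameDet ε A B) = frameDet ε (fun i => (A i).map τ) (fun i => (B i).map τ) := by
  rw [frameDet, frameDet, RingHom.map_det]
  congr 1
  ext i j
  simp only [RingHom.mapMatrix_apply, map_apply, submatrix_apply]
  rcases ε j with _ | _ <;> rfl

theorem frameDet_mul_right [Fintype t] [DecidableEq t] [Fintype ι] (C : ι → Matrix t t R) :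
    frameDet ε A (fun i => B i * C i) = frameDet ε A B * ∏ i, (C i).det := by
  classical
  have : Finite ((s × κ) ⊕ (t × ι)) := Finite.of_equiv m ε
  have : Finite (s × κ) := Finite.of_injective _ (Sum.inl_injective (β := t × ι))
  have := Fintype.ofFinite (s × κ)
  have h : fromCols (concatCols A) (concatCols fun i => B i * C i) =
      fromCols (concatCols A) (concatCols B) *
        (fromBlocks 1 0 0 (blockDiagonal C) : Matrix ((s × κ) ⊕ (t × ι)) _ R) := by
    rw [fromCols_mul_fromBlocks, Matrix.mul_one, Matrix.mul_zero, Matrix.mul_zero, add_zero,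
      zero_add, concatCols_mul_blockDiagonal]
  rw [frameDet, h, ← submatrix_mul_equiv _ _ id ε ε, det_mul, det_submatrix_equiv_self,
    det_fromBlocks_zero₂₁, det_one, one_mul, det_blockDiagonal, frameDet]

theorem frameDet_comp_perm [Fintype t] [Fintype ι] [DecidableEq ι] (π : Equiv.Perm ι) :
    frameDet ε A (B ∘ π) = (Equiv.Perm.sign π : R) ^ Fintype.card t * frameDet ε A B := by
  classical
  have : Finite ((s × κ) ⊕ (t × ι)) := Finite.of_equiv m ε
  have : Finite (s × κ) := Finite.of_injective _ (Sum.inl_injective (β := t × ι))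
  have := Fintype.ofFinite (s × κ)
  let π' : Equiv.Perm m :=
    ε.symm.permCongr (Equiv.Perm.sumCongr 1 (Equiv.prodCongrRight fun _ : t => π))
  have h : (fromCols (concatCols A) (concatCols (B ∘ π))).submatrix id ε =
      ((fromCols (concatCols A) (concatCols B)).submatrix id ε).submatrix id π' := by
    ext i j
    simp only [submatrix_apply, id, π', Equiv.permCongr_apply, Equiv.symm_symm,
      Equiv.apply_symm_apply]
    rcases ε j with _ | _ <;> rfl
  have hsign : Equiv.Perm.sign π' = Equiv.Perm.sign π ^ Fintype.card t := by
    simp only [π', Equiv.Perm.sign_permCongr, Equiv.Perm.sign_sumCongr, Equiv.Perm.sign_one,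
      Equiv.Perm.sign_prodCongrRight, Finset.prod_const, Finset.card_univ, one_mul]
  rw [frameDet, h, det_permute', hsign, frameDet]
  push_cast
  rfl

theorem det_eq_one_of_cyclic [IsDomain R] [Fintype t] [DecidableEq t] {r : ℕ}
    {ε : m ≃ (s × κ) ⊕ (t × Fin (r + 1))} {A : κ → Matrix m s R} {b : Matrix m t R}
    {T N : Matrix m m R} {C : Matrix t t R} (hA : ∀ i, N * A i = A i)
    (hB : ∀ i : ℕ, N * (T ^ i * b) = T ^ (i + 1) * b) (hC : T ^ (r + 1) * b = b * C)
    (hr : Odd r) (ht : Odd (Fintype.card t)) (hN : N.det = -1)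
    (h0 : frameDet ε A (fun i => T ^ (i : ℕ) * b) ≠ 0) : C.det = 1 := by
  let B : Fin (r + 1) → Matrix m t R := fun i => T ^ (i : ℕ) * b
  let C' : Fin (r + 1) → Matrix t t R := fun i => if i = Fin.last r then C else 1
  have hshift : (fun i => N * B i) = fun i => (B ∘ finRotate (r + 1)) i * C' i := by
    funext i
    simp only [B, C', hB, Function.comp_apply]
    split_ifs with h
    · simp [h, hC]
    · rw [coe_finRotate_of_ne_last h, Matrix.mul_one]
  have hprod : ∏ i, (C' i).det = C.det := by
    rw [Finset.prod_eq_single (Fin.last r)] <;> simp +contextual [C']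
  have hdet : -frameDet ε A B = -frameDet ε A B * C.det := by
    calc -frameDet ε A B = frameDet ε (fun i => N * A i) fun i => N * B i := by
          rw [frameDet_mul_left, hN, neg_one_mul]
      _ = frameDet ε A (B ∘ finRotate (r + 1)) * ∏ i, (C' i).det := by
          rw [hshift, frameDet_mul_right, funext hA]
      _ = -frameDet ε A B * C.det := by
          rw [frameDet_comp_perm, hprod, sign_finRotate, Nat.add_sub_cancel, hr.neg_one_pow,
            Units.val_neg, Units.val_one, Int.cast_neg, Int.cast_one, ht.neg_one_pow, neg_one_mul]
  exact mul_left_cancel₀ (neg_ne_zero.mpr h0) ((mul_one _).trans hdet).symm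

variable [Fintype s] [Fintype t] [Fintype κ] [Fintype ι]

theorem frameDet_ne_zero [Nontrivial R] (A' : κ → Matrix s m R) (B' : ι → Matrix t m R)
    (h : ∑ i, A i * A' i + ∑ i, B i * B' i = 1) : frameDet ε A B ≠ 0 := by
  have hinv : (fromCols (concatCols A) (concatCols B)).submatrix id ε *
      (fromRows (concatCols fun i => (A' i)ᵀ)ᵀ (concatCols fun i => (B' i)ᵀ)ᵀ).submatrix ε id =
        1 := by
    rw [submatrix_mul_equiv, fromCols_mul_fromRows, concatCols_mul_transpose_concatCols,
      concatCols_mul_transpose_concatCols, h, submatrix_id_id]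
  exact ((isUnit_iff_isUnit_det _).mp (IsUnit.of_mul_eq_one _ hinv)).ne_zero

theorem det_mul_frameDet_mul_star [StarRing R] [DecidableEq s] [DecidableEq t] [DecidableEq κ]
    [DecidableEq ι] (H : Matrix m m R) {h : Matrix s s R} {k : Matrix t t R}
    (hA : ∀ i j, (A i)ᴴ * H * A j = if i = j then h else 0)
    (hB : ∀ i j, (B i)ᴴ * H * B j = if i = j then k else 0)
    (hAB : ∀ i j, (A i)ᴴ * H * B j = 0) (hBA : ∀ i j, (B i)ᴴ * H * A j = 0) :
    H.det * (frameDet ε A B * star (frameDet ε A B)) =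
      h.det ^ Fintype.card κ * k.det ^ Fintype.card ι := by
  let P := fromCols (concatCols A) (concatCols B)
  have hP : Pᴴ * H * P =
      fromBlocks (blockDiagonal fun _ => h) 0 0 (blockDiagonal fun _ => k) := by
    rw [conjTranspose_fromCols_eq_fromRows_conjTranspose, fromRows_mul, fromRows_mul_fromCols,
      conjTranspose_concatCols_mul_mul_concatCols H hA,
      conjTranspose_concatCols_mul_mul_concatCols H hB,
      conjTranspose_concatCols_mul_mul_concatCols_eq_zero H hAB,
      conjTranspose_concatCols_mul_mul_concatCols_eq_zero H hBA]
  calc H.det * (frameDet ε A B * star (frameDet ε A B))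
      = ((P.submatrix id ε)ᴴ * H * P.submatrix id ε).det := by
        rw [det_mul, det_mul, det_conjTranspose, frameDet]; ring
    _ = ((Pᴴ * H * P).submatrix ε ε).det := rfl
    _ = h.det ^ Fintype.card κ * k.det ^ Fintype.card ι := by
        rw [det_submatrix_equiv_self, hP, det_fromBlocks_zero₂₁, det_blockDiagonal,
          det_blockDiagonal, Finset.prod_const, Finset.prod_const, Finset.card_univ,
          Finset.card_univ]

end Frame

section Hermitian

variable {R : Type*} [Semiring R] [StarRing R] {m s t : Type*} [Fintype m] {H e e' : Matrix m m R}

theorem conjTranspose_mul_mul_eq_zero_of_mul_eq_zero (hH : eᴴ * H = H * e) (hee' : e * e' = 0)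
    {U : Matrix m s R} {V : Matrix m t R} (hU : e * U = U) (hV : e' * V = V) :
    Uᴴ * H * V = 0 := by
  rw [← hU, ← hV, conjTranspose_mul, Matrix.mul_assoc Uᴴ, hH]
  simp only [Matrix.mul_assoc]
  rw [← Matrix.mul_assoc e e', hee', Matrix.zero_mul, Matrix.mul_zero, Matrix.mul_zero]

theorem conjTranspose_mul_mul_mul {g : Matrix m m R} (hg : gᴴ * H * g = H) (U : Matrix m s R)
    (V : Matrix m t R) : (g * U)ᴴ * H * (g * V) = Uᴴ * H * V := by
  conv_rhs => rw [← hg]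
  rw [conjTranspose_mul]
  simp only [Matrix.mul_assoc]

end Hermitian

section FourierCoeff

variable {E : Type*} [Field E] {R : Type*} [CommRing R] [Fintype R] {ψ : AddChar R E} {n : ℕ}
  {M : R → Matrix (Fin n) (Fin n) E}

theorem conjTranspose_fourierCoeff_mul [StarRing E] (hψ : ∀ a, star (ψ a) = ψ (-a))
    {H : Matrix (Fin n) (Fin n) E} (hM : ∀ a, (M a)ᴴ * H = H * M (-a)) (s : R) :
    (fourierCoeff ψ M s)ᴴ * H = H * fourierCoeff ψ M s := by
  rw [fourierCoeff, conjTranspose_smul, conjTranspose_sum, Matrix.smul_mul, Finset.sum_mul,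
    Matrix.mul_smul, Finset.mul_sum, star_inv₀, star_natCast, ← Equiv.sum_comp (Equiv.neg R)]
  congr! 2 with a
  rw [conjTranspose_smul, hψ, Matrix.smul_mul, hM]
  simp

theorem map_fourierCoeff_of_map_eq_mulShift (τ : E →+* E) {c : R} (hτ : ∀ a, τ (ψ a) = ψ (c * a))
    (s : R) : (fourierCoeff ψ M s).map τ = fourierCoeff ψ (fun a => (M a).map τ) (c * s) := by
  rw [map_fourierCoeff τ (ψ' := ψ.mulShift c) fun a => (hτ a).symm]
  simp [fourierCoeff, AddChar.mulShift_apply, mul_assoc]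

end FourierCoeff

section QuadraticChar

variable {F : Type*} [Field F] [Fintype F] [DecidableEq F]

theorem quadraticChar_eq_neg_one_of_forall_mem_powers (hF : ringChar F ≠ 2) {x₀ : Fˣ}
    (hx₀ : ∀ x, x ∈ Submonoid.powers x₀) : quadraticChar F x₀ = -1 := by
  refine (quadraticChar_dichotomy x₀.ne_zero).resolve_left fun h => ?_
  obtain ⟨a, ha⟩ := quadraticChar_exists_neg_one hF
  have ha0 : a ≠ 0 := by rintro rfl; simp at ha
  obtain ⟨j, hj⟩ := hx₀ (Units.mk0 a ha0)
  have hja : (x₀ : F) ^ j = a := by simpa using congrArg Units.val hj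
  rw [← hja, map_pow, h, one_pow] at ha
  norm_num at ha

theorem quadraticChar_pow_of_even (x : Fˣ) {j : ℕ} (hj : Even j) :
    quadraticChar F ((x : F) ^ j) = 1 := by
  obtain ⟨l, rfl⟩ := hj
  rw [← mul_two, pow_mul]
  exact quadraticChar_sq_one' (pow_ne_zero _ x.ne_zero)

theorem quadraticChar_inv_sq_div_pow {q : ℕ} (hq : Odd q) (x : Fˣ) :
    quadraticChar F ↑(x ^ 2 / x ^ q)⁻¹ = quadraticChar F x := by
  obtain ⟨d, rfl⟩ := hq
  have h : (x ^ 2 / x ^ (2 * d + 1))⁻¹ = x * (x ^ d / x) ^ 2 := by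
    rw [inv_div, div_pow, ← pow_mul, mul_comm d, pow_succ', mul_div_assoc]
  rw [h, Units.val_mul, map_mul, Units.val_pow_eq_pow_val, quadraticChar_sq_one' (Units.ne_zero _),
    mul_one]

theorem sum_filter_quadraticChar_eq_mul {M : Type*} [AddCommMonoid M] (f : F → M) (c : Fˣ)
    (ε : ℤ) : ∑ s with quadraticChar F s = ε, f (s * c) =
      ∑ s with quadraticChar F s = quadraticChar F c * ε, f s := by
  refine Finset.sum_equiv c.mulRight (fun s => ?_) fun s _ => rfl
  rw [Finset.mem_filter_univ, Finset.mem_filter_univ, Units.mulRight_apply, map_mul,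
    mul_comm (quadraticChar F s),
    mul_right_inj' (quadraticChar_eq_zero_iff.not.mpr c.ne_zero)]

end QuadraticChar

theorem injective_mul_inv_pow_pow {F : Type*} [Field F] {q : ℕ} {x₀ : Fˣ}
    (hx₀ : orderOf x₀ = q ^ 2 - 1) {y₀ : F} (hy₀ : y₀ ≠ 0) {r : ℕ} (hr : q = r + 2) :
    Function.Injective fun i : Fin (r + 1) => y₀ * ↑((x₀ ^ (i : ℕ)) ^ (q + 1))⁻¹ := by
  intro i j h
  have hlt : ∀ k : Fin (r + 1), (k : ℕ) * (q + 1) < orderOf x₀ := fun k => by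
    rw [hx₀, sq_sub_one_eq_mul, mul_comm]
    exact Nat.mul_lt_mul_of_pos_left (by omega) (Nat.succ_pos q)
  have hpow := inv_injective (Units.ext (mul_left_cancel₀ hy₀ h))
  rw [← pow_mul, ← pow_mul] at hpow
  exact Fin.ext (Nat.eq_of_mul_eq_mul_right (Nat.succ_pos q)
    (pow_injOn_Iio_orderOf (hlt i) (hlt j) hpow))

theorem conjTranspose_map_mul {G E : Type*} [Group G] [CommRing E] [StarRing E] {n : ℕ}
    (ρ : G →* Matrix (Fin n) (Fin n) E) {H : Matrix (Fin n) (Fin n) E}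
    (hH : ∀ g, (ρ g)ᴴ * H * ρ g = H) (g : G) : (ρ g)ᴴ * H = H * ρ g⁻¹ := by
  conv_rhs => rw [← hH g]
  rw [Matrix.mul_assoc, map_mul_eq_one ρ (mul_inv_cancel g), Matrix.mul_one]

namespace BorelData

variable {q : ℕ} {F G : Type*} [Field F] [Group G] (D : BorelData q F G)

section OffFixed

variable [Fintype F] {E A : Type*} [Field E] [CharZero E] [Ring A] [Algebra E A] (ρ : G →* A)
  {ψ : AddChar F E} (hψ : ψ.IsPrimitive)

/-- The torus acting as in `ρ` off the `z`-fixed space, and trivially on that space. -/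
def torusOffFixed : Fˣ →* A where
  toFun x := ρ (D.t x) * (1 - D.centerProj ρ ψ 0) + D.centerProj ρ ψ 0
  map_one' := by simp
  map_mul' x y := by
    have he := ((D.orthogonalIdempotents_centerProj ρ hψ).idem 0).eq
    have hy := (D.commute_map_t_centerProj_zero ρ ψ y).eq
    have hfix : D.centerProj ρ ψ 0 * (ρ (D.t y) * (1 - D.centerProj ρ ψ 0)) = 0 := by
      rw [← mul_assoc, ← hy, mul_assoc, mul_sub, mul_one, he, sub_self, mul_zero]
    have hoff : (1 - D.centerProj ρ ψ 0) * (ρ (D.t y) * (1 - D.centerProj ρ ψ 0)) =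
        ρ (D.t y) * (1 - D.centerProj ρ ψ 0) := by
      rw [sub_mul, one_mul, hfix, sub_zero]
    have hoff' : (1 - D.centerProj ρ ψ 0) * D.centerProj ρ ψ 0 = 0 := by
      rw [sub_mul, one_mul, he, sub_self]
    rw [add_mul, mul_add, mul_add, mul_assoc (ρ (D.t x)), hoff, mul_assoc (ρ (D.t x)), hoff',
      hfix, he, mul_zero, add_zero, zero_add, map_mul, map_mul, mul_assoc]

theorem torusOffFixed_apply (x : Fˣ) : D.torusOffFixed ρ hψ x =
    ρ (D.t x) * (1 - D.centerProj ρ ψ 0) + D.centerProj ρ ψ 0 := rfl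

end OffFixed

section Matrix

variable [Fintype F] {E : Type*} [Field E] {n : ℕ} (ρ : G →* Matrix (Fin n) (Fin n) E)

theorem torusOffFixed_mul_of_fixed [CharZero E] {ψ : AddChar F E} (hψ : ψ.IsPrimitive) {m : ℕ}
    (x : Fˣ) {V : Matrix (Fin n) (Fin m) E} (hV : D.centerProj ρ ψ 0 * V = V) :
    D.torusOffFixed ρ hψ x * V = V := by
  rw [torusOffFixed_apply, Matrix.add_mul, Matrix.mul_assoc, Matrix.sub_mul, hV]
  simp

theorem torusOffFixed_mul_of_centerProj_mul_eq_zero [CharZero E] {ψ : AddChar F E}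
    (hψ : ψ.IsPrimitive) {m : ℕ} (x : Fˣ) {V : Matrix (Fin n) (Fin m) E}
    (hV : D.centerProj ρ ψ 0 * V = 0) : D.torusOffFixed ρ hψ x * V = ρ (D.t x) * V := by
  rw [torusOffFixed_apply, Matrix.add_mul, Matrix.mul_assoc, Matrix.sub_mul, hV]
  simp

theorem det_torusOffFixed [CharZero E] [DecidableEq F] {ψ : AddChar F E} (hψ : ψ.IsPrimitive)
    {x₀ : Fˣ} (hx₀ : ∀ x, x ∈ Submonoid.powers x₀) (hχ : quadraticChar F x₀ = -1)
    (hdet : (D.torusOffFixed ρ hψ x₀).det = -1) (x : Fˣ) :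
    (D.torusOffFixed ρ hψ x).det = (quadraticChar F x : E) := by
  obtain ⟨j, rfl⟩ := hx₀ x
  rw [map_pow, det_pow, hdet, Units.val_pow_eq_pow_val, map_pow, hχ, Int.cast_pow, Int.cast_neg,
    Int.cast_one]

section Star

variable {ψ : AddChar F E} [StarRing E] (hψ : ∀ a, star (ψ a) = ψ (-a))
  {H : Matrix (Fin n) (Fin n) E} (hH : ∀ g, (ρ g)ᴴ * H * ρ g = H)

include hψ hH

theorem conjTranspose_centerProj_mul (y : F) :
    (D.centerProj ρ ψ y)ᴴ * H = H * D.centerProj ρ ψ y :=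
  conjTranspose_fourierCoeff_mul hψ (fun a => by
    rw [conjTranspose_map_mul ρ hH, inv_eq_of_mul_eq_one_right (b := D.z (-a)) (by
      rw [← D.z_add, add_neg_cancel, D.z_zero])]) y

theorem conjTranspose_uniProj_mul (s : F) : (D.uniProj ρ ψ s)ᴴ * H = H * D.uniProj ρ ψ s :=
  conjTranspose_fourierCoeff_mul hψ (fun a => by
    have hinv : (D.u a)⁻¹ = D.u (-a) * D.z (-(-a * a ^ q / 2)) := by
      rw [inv_eq_iff_mul_eq_one, ← mul_assoc, D.u_mul_u, add_neg_cancel, D.u_zero, mul_one,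
        ← D.z_add, add_neg_cancel, D.z_zero]
    rw [conjTranspose_mul, Matrix.mul_assoc, conjTranspose_map_mul ρ hH, ← Matrix.mul_assoc,
      D.conjTranspose_centerProj_mul ρ hψ hH, Matrix.mul_assoc, hinv, map_mul,
      ← Matrix.mul_assoc (D.centerProj ρ ψ 0), ← (D.commute_map_u_centerProj ρ ψ (-a) 0).eq,
      Matrix.mul_assoc, D.centerProj_zero_mul_map_z]) s

end Star

section Galois

variable {ψ : AddChar F E} (τ : E →+* E) (hρ : ∀ g, (ρ g).map τ = ρ g) {c : F}
  (hτ : ∀ a, τ (ψ a) = ψ (c * a))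

include hρ hτ

theorem map_centerProj (y : F) : (D.centerProj ρ ψ y).map τ = D.centerProj ρ ψ (c * y) := by
  rw [centerProj, map_fourierCoeff_of_map_eq_mulShift τ hτ]
  simp only [hρ]
  rfl

theorem map_uniProj (s : F) : (D.uniProj ρ ψ s).map τ = D.uniProj ρ ψ (c * s) := by
  rw [uniProj, map_fourierCoeff_of_map_eq_mulShift τ hτ]
  simp only [Matrix.map_mul, hρ, D.map_centerProj ρ τ hρ hτ, mul_zero]
  rfl

end Galois

end Matrix

section SignProj

variable [Fintype F] [DecidableEq F] {E A : Type*} [Field E] [Ring A] [Algebra E A] (ρ : G →* A)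
  (ψ : AddChar F E)

/-- The part of the `z`-fixed space of `ρ` belonging to the characters `u a ↦ ψ (s * a)` of the
unipotent radical for which `s` has quadratic character `ε`. -/
def signProj (ε : ℤ) : A := ∑ s with quadraticChar F s = ε, D.uniProj ρ ψ s

theorem map_t_mul_signProj_mul (hq : Odd q) (x : Fˣ) (ε : ℤ) :
    ρ (D.t x) * D.signProj ρ ψ ε * ρ (D.t x)⁻¹ = D.signProj ρ ψ (quadraticChar F x * ε) := by
  rw [signProj, Finset.mul_sum, Finset.sum_mul]
  simp only [map_t_mul_uniProj_mul]
  rw [sum_filter_quadraticChar_eq_mul (D.uniProj ρ ψ), quadraticChar_inv_sq_div_pow hq, signProj]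

variable [CharZero E] {ψ} (hψ : ψ.IsPrimitive)

include hψ

theorem signProj_one_add_signProj_neg_one (h0 : D.uniProj ρ ψ 0 = 0) :
    D.signProj ρ ψ 1 + D.signProj ρ ψ (-1) = D.centerProj ρ ψ 0 := by
  rw [signProj, signProj, ← D.sum_uniProj ρ hψ, ← Finset.sum_union]
  · refine Finset.sum_subset (Finset.subset_univ _) fun s _ hs => ?_
    rcases eq_or_ne s 0 with rfl | hs0
    · exact h0
    · exact absurd (quadraticChar_dichotomy hs0) (by simpa using hs)
  · exact Finset.disjoint_filter.mpr fun s _ h1 h2 => by norm_num [h1] at h2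

theorem isIdempotentElem_signProj (ε : ℤ) : IsIdempotentElem (D.signProj ρ ψ ε) :=
  (D.orthogonalIdempotents_uniProj ρ hψ).isIdempotentElem_sum

theorem signProj_mul_signProj {ε ε' : ℤ} (h : ε ≠ ε') :
    D.signProj ρ ψ ε * D.signProj ρ ψ ε' = 0 := by
  rw [signProj, signProj, Finset.sum_mul_sum]
  refine Finset.sum_eq_zero fun s hs => Finset.sum_eq_zero fun s' hs' => ?_
  refine (D.orthogonalIdempotents_uniProj ρ hψ).ortho fun hss' => h ?_
  rw [← (Finset.mem_filter.mp hs).2, ← (Finset.mem_filter.mp hs').2, hss']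

theorem centerProj_zero_mul_signProj (ε : ℤ) :
    D.centerProj ρ ψ 0 * D.signProj ρ ψ ε = D.signProj ρ ψ ε := by
  rw [signProj, Finset.mul_sum]
  simp only [D.centerProj_zero_mul_uniProj ρ hψ]

end SignProj

section SignProjMatrix

variable [Fintype F] [DecidableEq F] {E : Type*} [Field E] {n : ℕ}
  (ρ : G →* Matrix (Fin n) (Fin n) E) {ψ : AddChar F E}

theorem conjTranspose_signProj_mul [StarRing E] (hψ : ∀ a, star (ψ a) = ψ (-a))
    {H : Matrix (Fin n) (Fin n) E} (hH : ∀ g, (ρ g)ᴴ * H * ρ g = H) (ε : ℤ) :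
    (D.signProj ρ ψ ε)ᴴ * H = H * D.signProj ρ ψ ε := by
  rw [signProj, conjTranspose_sum, Finset.sum_mul, Finset.mul_sum]
  exact Finset.sum_congr rfl fun s _ => D.conjTranspose_uniProj_mul ρ hψ hH s

theorem map_signProj (τ : E →+* E) (hρ : ∀ g, (ρ g).map τ = ρ g) {c : Fˣ}
    (hτ : ∀ a, τ (ψ a) = ψ (c * a)) (ε : ℤ) :
    (D.signProj ρ ψ ε).map τ = D.signProj ρ ψ (quadraticChar F c * ε) := by
  calc (D.signProj ρ ψ ε).map τ
      = ∑ s with quadraticChar F s = ε, (D.uniProj ρ ψ s).map τ := map_sum τ.mapMatrix _ _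
    _ = ∑ s with quadraticChar F s = ε, D.uniProj ρ ψ (s * c) :=
        Finset.sum_congr rfl fun s _ => by rw [D.map_uniProj ρ τ hρ hτ, mul_comm]
    _ = D.signProj ρ ψ (quadraticChar F c * ε) :=
        sum_filter_quadraticChar_eq_mul (D.uniProj ρ ψ) c ε

theorem trace_signProj_one [CharZero E] (hF : HasOddSquareCard q F) (hψ : ψ.IsPrimitive)
    (h0 : D.uniProj ρ ψ 0 = 0) {x : Fˣ} (hx : quadraticChar F x = -1)
    (htrace : (D.centerProj ρ ψ 0).trace = (q ^ 2 - 1 : ℕ)) :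
    (D.signProj ρ ψ 1).trace = ((q ^ 2 - 1) / 2 : ℕ) := by
  have hswap : (D.signProj ρ ψ (-1)).trace = (D.signProj ρ ψ 1).trace := by
    rw [← trace_map_mul_mul_map_inv ρ (D.t x) (D.signProj ρ ψ 1),
      D.map_t_mul_signProj_mul ρ ψ hF.odd, hx, mul_one]
  rw [← D.signProj_one_add_signProj_neg_one ρ hψ h0, trace_add, hswap] at htrace
  rw [Nat.cast_div hF.even_sq_sub_one.two_dvd (by simp), ← htrace]
  push_cast
  ring

end SignProjMatrix

theorem centerProj_zero_add_sum_orbit [Fintype F] {E A : Type*} [Field E] [CharZero E] [Ring A]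
    [Algebra E A] (ρ : G →* A) {ψ : AddChar F E} (hF : HasOddSquareCard q F) (hψ : ψ.IsPrimitive)
    (hfr : ∀ a, ψ (a ^ q) = ψ a) {x₀ : Fˣ} (hx₀ : orderOf x₀ = q ^ 2 - 1) {y₀ : F}
    (hy₀ : y₀ ≠ 0) (hy : y₀ ^ q = -y₀) {r : ℕ} (hr : q = r + 2) :
    D.centerProj ρ ψ 0 +
      ∑ i : Fin (r + 1), D.centerProj ρ ψ (y₀ * ↑((x₀ ^ (i : ℕ)) ^ (q + 1))⁻¹) = 1 := by
  classical
  let φ : Fin (r + 1) → F := fun i => y₀ * ↑((x₀ ^ (i : ℕ)) ^ (q + 1))⁻¹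
  have hφ : Function.Injective φ := injective_mul_inv_pow_pow hx₀ hy₀ hr
  have hzero : (0 : F) ∈ Finset.univ.filter fun a : F => a ^ q = -a := by
    rw [Finset.mem_filter_univ, neg_zero, zero_pow (by omega)]
  have himage : Finset.univ.image φ = (Finset.univ.filter fun a : F => a ^ q = -a).erase 0 := by
    refine Finset.eq_of_subset_of_card_le (fun a ha => ?_) ?_
    · obtain ⟨i, -, rfl⟩ := Finset.mem_image.mp ha
      have hnorm : ((((x₀ ^ (i : ℕ)) ^ (q + 1))⁻¹ : Fˣ) : F) ^ q =
          (((x₀ ^ (i : ℕ)) ^ (q + 1))⁻¹ : Fˣ) := by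
        rw [Units.val_inv_eq_inv_val, inv_pow, Units.val_pow_eq_pow_val, hF.norm_pow]
      simp only [Finset.mem_erase, Finset.mem_filter_univ, φ]
      exact ⟨mul_ne_zero hy₀ (Units.ne_zero _), by rw [mul_pow, hy, hnorm, neg_mul]⟩
    · rw [Finset.card_image_of_injective _ hφ,
        Finset.card_erase_of_mem hzero,
        hF.card_filter_pow_eq_neg, Finset.card_univ, Fintype.card_fin]
      omega
  calc D.centerProj ρ ψ 0 + ∑ i, D.centerProj ρ ψ (φ i)
      = D.centerProj ρ ψ 0 +
          ∑ y ∈ (Finset.univ.filter fun a : F => a ^ q = -a).erase 0, D.centerProj ρ ψ y := by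
        rw [← himage, Finset.sum_image hφ.injOn]
    _ = ∑ y with y ^ q = -y, D.centerProj ρ ψ y :=
        Finset.add_sum_erase _ _ hzero
    _ = ∑ y, D.centerProj ρ ψ y :=
        Finset.sum_subset (Finset.subset_univ _) fun y _ hy =>
          D.centerProj_eq_zero ρ hF hψ hfr (by simpa using hy)
    _ = 1 := D.sum_centerProj ρ hψ

end BorelData

section Factor

variable {R : Type*} [Ring R] {n m : Type*} [Fintype n] [Fintype m] [DecidableEq m]

theorem mul_eq_self_of_factor {e : Matrix n n R} {b : Matrix n m R} {b' : Matrix m n R}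
    (hbb' : b * b' = e) (hb'b : b' * b = 1) : e * b = b := by
  rw [← hbb', Matrix.mul_assoc, hb'b, Matrix.mul_one]

end Factor

/-- Column bases of the parts `signProj 1` and `centerProj y` of a representation, with the dual
bases that recover the two projections. Their translates under the torus give a basis of the whole
space. -/
structure BorelFrame {q : ℕ} {F G : Type*} [Field F] [Group G] [Fintype F] [DecidableEq F]
    (D : BorelData q F G) {E : Type*} [Field E] {n : ℕ} (ρ : G →* Matrix (Fin n) (Fin n) E)
    (ψ : AddChar F E) (y : F) (s m : ℕ) where
  signBasis : Matrix (Fin n) (Fin s) E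
  signDual : Matrix (Fin s) (Fin n) E
  signBasis_mul_signDual : signBasis * signDual = D.signProj ρ ψ 1
  signDual_mul_signBasis : signDual * signBasis = 1
  centerBasis : Matrix (Fin n) (Fin m) E
  centerDual : Matrix (Fin m) (Fin n) E
  centerBasis_mul_centerDual : centerBasis * centerDual = D.centerProj ρ ψ y
  centerDual_mul_centerBasis : centerDual * centerBasis = 1

namespace BorelFrame

variable {q : ℕ} {F G : Type*} [Field F] [Group G] [Fintype F] [DecidableEq F]
  {D : BorelData q F G} {E : Type*} [Field E] {n : ℕ} {ρ : G →* Matrix (Fin n) (Fin n) E}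
  {ψ : AddChar F E} {y : F} {s m : ℕ} (B : BorelFrame D ρ ψ y s m)

theorem centerProj_mul_map_t_mul_centerBasis (x : Fˣ) :
    D.centerProj ρ ψ (y * ↑(x ^ (q + 1))⁻¹) * (ρ (D.t x) * B.centerBasis) =
      ρ (D.t x) * B.centerBasis := by
  rw [← Matrix.mul_assoc, ← D.map_t_mul_centerProj, Matrix.mul_assoc,
    mul_eq_self_of_factor B.centerBasis_mul_centerDual B.centerDual_mul_centerBasis]

theorem map_t_mul_centerBasis {x : Fˣ} (hx : x ^ (q + 1) = 1) : ρ (D.t x) * B.centerBasis =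
    B.centerBasis * (B.centerDual * ρ (D.t x) * B.centerBasis) := by
  have h := B.centerProj_mul_map_t_mul_centerBasis x
  rw [hx, inv_one, Units.val_one, mul_one, ← B.centerBasis_mul_centerDual] at h
  rw [Matrix.mul_assoc B.centerDual, ← Matrix.mul_assoc B.centerBasis, h]

theorem signProj_mul_map_t_mul_signBasis (hq : Odd q) (x : Fˣ) :
    D.signProj ρ ψ (quadraticChar F x) * (ρ (D.t x) * B.signBasis) = ρ (D.t x) * B.signBasis := by
  have h := D.map_t_mul_signProj_mul ρ ψ hq x 1
  rw [mul_one] at h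
  rw [← h, ← Matrix.mul_assoc, Matrix.mul_assoc _ _ (ρ (D.t x)),
    map_mul_eq_one ρ (inv_mul_cancel _), Matrix.mul_one, Matrix.mul_assoc,
    mul_eq_self_of_factor B.signBasis_mul_signDual B.signDual_mul_signBasis]

section Primitive

variable [CharZero E] (hψ : ψ.IsPrimitive)

include hψ

theorem centerProj_zero_mul_map_t_mul_signBasis (hq : Odd q) (x : Fˣ) :
    D.centerProj ρ ψ 0 * (ρ (D.t x) * B.signBasis) = ρ (D.t x) * B.signBasis := by
  rw [← B.signProj_mul_map_t_mul_signBasis hq, ← Matrix.mul_assoc,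
    D.centerProj_zero_mul_signProj ρ hψ]

theorem centerProj_zero_mul_map_t_mul_centerBasis (hy : y ≠ 0) (x : Fˣ) :
    D.centerProj ρ ψ 0 * (ρ (D.t x) * B.centerBasis) = 0 := by
  rw [← B.centerProj_mul_map_t_mul_centerBasis, ← Matrix.mul_assoc,
    (D.orthogonalIdempotents_centerProj ρ hψ).ortho (mul_ne_zero hy (Units.ne_zero _)).symm,
    Matrix.zero_mul]

end Primitive

/-- The matrix comparing the Galois conjugate of the basis of `centerProj y` with its translate
under an element of the torus. -/
def comparison (τ : E →+* E) (x : Fˣ) : Matrix (Fin m) (Fin m) E :=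
  B.centerDual * ρ (D.t x) * B.centerBasis.map τ

section Galois

variable {τ : E →+* E} (hρ : ∀ g, (ρ g).map τ = ρ g) {x : Fˣ}
  (hτ : ∀ a, τ (ψ a) = ψ ((x : F) ^ (q + 1) * a))

include hρ hτ

theorem centerBasis_mul_comparison :
    B.centerBasis * B.comparison τ x = ρ (D.t x) * B.centerBasis.map τ := by
  have hfix : D.centerProj ρ ψ ((x : F) ^ (q + 1) * y) * B.centerBasis.map τ =
      B.centerBasis.map τ := by
    rw [← D.map_centerProj ρ τ hρ hτ, ← Matrix.map_mul,
      mul_eq_self_of_factor B.centerBasis_mul_centerDual B.centerDual_mul_centerBasis]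
  have hcomm := D.map_t_mul_centerProj ρ ψ x ((x : F) ^ (q + 1) * y)
  rw [mul_right_comm, ← Units.val_pow_eq_pow_val, Units.mul_inv, one_mul,
    Units.val_pow_eq_pow_val] at hcomm
  rw [comparison, ← Matrix.mul_assoc, ← Matrix.mul_assoc, B.centerBasis_mul_centerDual,
    ← hcomm, Matrix.mul_assoc, hfix]

theorem map_centerBasis :
    B.centerBasis.map τ = ρ (D.t x⁻¹) * (B.centerBasis * B.comparison τ x) := by
  rw [B.centerBasis_mul_comparison hρ hτ, ← Matrix.mul_assoc, map_inv,
    map_mul_eq_one ρ (inv_mul_cancel _), Matrix.one_mul]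

theorem det_comparison_ne_zero : (B.comparison τ x).det ≠ 0 := by
  have hinv : B.centerDual.map τ * ρ (D.t x⁻¹) * B.centerBasis * B.comparison τ x = 1 := by
    rw [Matrix.mul_assoc, Matrix.mul_assoc, ← B.map_centerBasis hρ hτ, ← Matrix.map_mul,
      B.centerDual_mul_centerBasis, Matrix.map_one _ (map_zero τ) (map_one τ)]
  exact ((isUnit_iff_isUnit_det _).mp (IsUnit.of_mul_eq_one_right _ hinv)).ne_zero

end Galois

theorem det_comparison_comp (hψ : ψ.IsPrimitive)
    (hdet : ∀ x : Fˣ, x ^ (q + 1) = 1 → (B.centerDual * ρ (D.t x) * B.centerBasis).det = 1)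
    {τ υ : E →+* E} (hρτ : ∀ g, (ρ g).map τ = ρ g) (hρυ : ∀ g, (ρ g).map υ = ρ g) {x x' x'' : Fˣ}
    (hτ : ∀ a, τ (ψ a) = ψ ((x : F) ^ (q + 1) * a))
    (hυ : ∀ a, υ (ψ a) = ψ ((x' : F) ^ (q + 1) * a))
    (hτυ : ∀ a, τ (υ (ψ a)) = ψ ((x'' : F) ^ (q + 1) * a)) :
    (B.comparison (τ.comp υ) x'').det = τ (B.comparison υ x').det * (B.comparison τ x).det := by
  have hnorm : x'' ^ (q + 1) = x ^ (q + 1) * x' ^ (q + 1) := by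
    refine Units.ext (AddChar.to_mulShift_inj_of_isPrimitive hψ (DFunLike.ext _ _ fun a => ?_))
    simp only [AddChar.mulShift_apply, Units.val_mul, Units.val_pow_eq_pow_val]
    rw [← hτυ, hυ, hτ, mul_assoc]
  have hone : (x'' * x'⁻¹ * x⁻¹) ^ (q + 1) = 1 := by
    rw [mul_pow, mul_pow, hnorm, inv_pow, inv_pow, mul_inv_cancel_right, mul_inv_cancel]
  have hcomp : B.comparison (τ.comp υ) x'' =
      B.centerDual * ρ (D.t (x'' * x'⁻¹ * x⁻¹)) * B.centerBasis * B.comparison τ x *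
        (B.comparison υ x').map τ := by
    have hmap : B.centerBasis.map (τ.comp υ) = (B.centerBasis.map υ).map τ := rfl
    rw [comparison, hmap, B.map_centerBasis hρυ hυ, Matrix.map_mul, hρτ, Matrix.map_mul,
      B.map_centerBasis hρτ hτ]
    simp only [map_mul, Matrix.mul_assoc]
  rw [hcomp, det_mul, det_mul, hdet _ hone, one_mul, mul_comm, RingHom.map_det]
  rfl

theorem det_centerDual_mul_map_t_mul_centerBasis (hF : HasOddSquareCard q F) {x₀ : Fˣ}
    (hx₀ : ∀ x, x ∈ Submonoid.powers x₀)
    (hdet : (B.centerDual * ρ (D.t (x₀ ^ (q - 1))) * B.centerBasis).det = 1) {x : Fˣ}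
    (hx : x ^ (q + 1) = 1) : (B.centerDual * ρ (D.t x) * B.centerBasis).det = 1 := by
  obtain ⟨j, rfl⟩ := hx₀ x
  obtain ⟨l, rfl⟩ : q - 1 ∣ j := by
    have hdvd := orderOf_dvd_of_pow_eq_one ((pow_mul x₀ j (q + 1)).trans hx)
    rw [hF.orderOf_eq_of_forall_mem_powers hx₀, sq_sub_one_eq_mul, mul_comm] at hdvd
    exact Nat.dvd_of_mul_dvd_mul_right (Nat.succ_pos q) hdvd
  have hnorm : (x₀ ^ (q - 1)) ^ (q + 1) = 1 := by
    rw [← pow_mul, mul_comm, ← sq_sub_one_eq_mul, ← hF.orderOf_eq_of_forall_mem_powers hx₀,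
      pow_orderOf_eq_one]
  set C := B.centerDual * ρ (D.t (x₀ ^ (q - 1))) * B.centerBasis with hC
  have hpow : ∀ l : ℕ, ρ (D.t (x₀ ^ ((q - 1) * l))) * B.centerBasis = B.centerBasis * C ^ l := by
    intro l
    induction l with
    | zero => simp
    | succ l ih =>
      rw [mul_add, mul_one, pow_add, map_mul, map_mul, Matrix.mul_assoc,
        B.map_t_mul_centerBasis hnorm, ← hC, ← Matrix.mul_assoc, ih, Matrix.mul_assoc, ← pow_succ]
  rw [Matrix.mul_assoc, hpow, ← Matrix.mul_assoc, B.centerDual_mul_centerBasis, Matrix.one_mul,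
    det_pow, hdet, one_pow]

/-- The determinant of the basis `X, tX, b, tb, …, t ^ r b`, where `X` and `b` are the two bases of
the frame and `t` is the torus element of parameter `x₀`. -/
def orbitDet {r : ℕ} (ε : Fin n ≃ (Fin s × Fin 2) ⊕ (Fin m × Fin (r + 1))) (x₀ : Fˣ) : E :=
  frameDet ε (fun i => ρ (D.t x₀) ^ (i : ℕ) * B.signBasis) fun i =>
    ρ (D.t x₀) ^ (i : ℕ) * B.centerBasis

section OrbitDet

variable [CharZero E] (hF : HasOddSquareCard q F) (hψ : ψ.IsPrimitive) {x₀ : Fˣ}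
  (hx₀ : ∀ x, x ∈ Submonoid.powers x₀) (hy0 : y ≠ 0) {r : ℕ} (hr : q = r + 2)
  (ε : Fin n ≃ (Fin s × Fin 2) ⊕ (Fin m × Fin (r + 1)))

include hF hψ hx₀ hy0 hr in
theorem orbitDet_ne_zero (hfr : ∀ a, ψ (a ^ q) = ψ a) (hy : y ^ q = -y)
    (h0 : D.uniProj ρ ψ 0 = 0) : B.orbitDet ε x₀ ≠ 0 := by
  refine frameDet_ne_zero ε _ _ (fun i => B.signDual * ρ (D.t (x₀ ^ (i : ℕ)))⁻¹)
    (fun i => B.centerDual * ρ (D.t (x₀ ^ (i : ℕ)))⁻¹) ?_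
  have hsign : ∀ x : Fˣ, ρ (D.t x) * B.signBasis * (B.signDual * ρ (D.t x)⁻¹) =
      D.signProj ρ ψ (quadraticChar F x) := fun x => by
    rw [← mul_one (quadraticChar F x), ← D.map_t_mul_signProj_mul ρ ψ hF.odd,
      ← B.signBasis_mul_signDual]
    simp only [Matrix.mul_assoc]
  have hcenter : ∀ x : Fˣ, ρ (D.t x) * B.centerBasis * (B.centerDual * ρ (D.t x)⁻¹) =
      D.centerProj ρ ψ (y * ↑(x ^ (q + 1))⁻¹) := fun x => by
    rw [← D.map_t_mul_centerProj_mul ρ ψ, ← B.centerBasis_mul_centerDual]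
    simp only [Matrix.mul_assoc]
  simp only [← map_pow, hsign, hcenter, Fin.sum_univ_two]
  rw [← D.centerProj_zero_add_sum_orbit ρ hF hψ hfr (hF.orderOf_eq_of_forall_mem_powers hx₀) hy0 hy
    hr, ← D.signProj_one_add_signProj_neg_one ρ hψ h0]
  simp [quadraticChar_eq_neg_one_of_forall_mem_powers hF.ringChar_ne_two hx₀]

include hF hψ hx₀ hy0 hr in
theorem det_mul_orbitDet_mul_star [StarRing E] (hstar : ∀ a, star (ψ a) = ψ (-a))
    {H : Matrix (Fin n) (Fin n) E} (hH : ∀ g, (ρ g)ᴴ * H * ρ g = H) :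
    H.det * (B.orbitDet ε x₀ * star (B.orbitDet ε x₀)) =
      (B.signBasisᴴ * H * B.signBasis).det ^ 2 *
        (B.centerBasisᴴ * H * B.centerBasis).det ^ (r + 1) := by
  have hχ := quadraticChar_eq_neg_one_of_forall_mem_powers hF.ringChar_ne_two hx₀
  have horb := injective_mul_inv_pow_pow (hF.orderOf_eq_of_forall_mem_powers hx₀) hy0 hr
  have horth {y y' : F} (h : y ≠ y') := (D.orthogonalIdempotents_centerProj ρ hψ).ortho h
  have hsign (i : ℕ) := B.signProj_mul_map_t_mul_signBasis hF.odd (x₀ ^ i)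
  have hfix (i : ℕ) := B.centerProj_zero_mul_map_t_mul_signBasis hψ hF.odd (x₀ ^ i)
  have hcenter (i : ℕ) := B.centerProj_mul_map_t_mul_centerBasis (x₀ ^ i)
  have hadj (y : F) := D.conjTranspose_centerProj_mul ρ hstar hH y
  have hχinj : ∀ i j : Fin 2, i ≠ j →
      quadraticChar F (x₀ ^ (i : ℕ) : Fˣ) ≠ quadraticChar F (x₀ ^ (j : ℕ) : Fˣ) := by
    intro i j hij
    fin_cases i <;> fin_cases j <;> simp_all
  have hdet := det_mul_frameDet_mul_star ε
    (fun i : Fin 2 => ρ (D.t (x₀ ^ (i : ℕ))) * B.signBasis)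
    (fun i : Fin (r + 1) => ρ (D.t (x₀ ^ (i : ℕ))) * B.centerBasis) H
    (h := B.signBasisᴴ * H * B.signBasis) (k := B.centerBasisᴴ * H * B.centerBasis)
    (fun i j => by
      split_ifs with h
      · rw [h, conjTranspose_mul_mul_mul (hH _)]
      · exact conjTranspose_mul_mul_eq_zero_of_mul_eq_zero
          (D.conjTranspose_signProj_mul ρ hstar hH _)
          (D.signProj_mul_signProj ρ hψ (hχinj i j h)) (hsign i) (hsign j))
    (fun i j => by
      split_ifs with h
      · rw [h, conjTranspose_mul_mul_mul (hH _)]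
      · exact conjTranspose_mul_mul_eq_zero_of_mul_eq_zero (hadj _) (horth (horb.ne h))
          (hcenter i) (hcenter j))
    (fun i j => conjTranspose_mul_mul_eq_zero_of_mul_eq_zero (hadj 0)
      (horth (mul_ne_zero hy0 (Units.ne_zero _)).symm) (hfix i) (hcenter j))
    (fun i j => conjTranspose_mul_mul_eq_zero_of_mul_eq_zero (hadj _)
      (horth (mul_ne_zero hy0 (Units.ne_zero _))) (hcenter i) (hfix j))
  simpa only [orbitDet, map_pow, Fintype.card_fin] using hdet

variable (hdet : (D.torusOffFixed ρ hψ x₀).det = -1)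

include hF hx₀ hy0 hdet

include hr in
theorem det_centerDual_mul_map_t_mul_centerBasis_eq_one (hm : Odd m)
    (h0 : B.orbitDet ε x₀ ≠ 0) {x : Fˣ} (hx : x ^ (q + 1) = 1) :
    (B.centerDual * ρ (D.t x) * B.centerBasis).det = 1 := by
  have hnorm : (x₀ ^ (r + 1)) ^ (q + 1) = 1 := by
    rw [← pow_mul, mul_comm, show r + 1 = q - 1 by omega, ← sq_sub_one_eq_mul,
      ← hF.orderOf_eq_of_forall_mem_powers hx₀, pow_orderOf_eq_one]
  have hrodd : Odd r := by
    have := hF.odd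
    rw [hr] at this
    exact (Nat.odd_add.mp this).mpr even_two
  refine B.det_centerDual_mul_map_t_mul_centerBasis hF hx₀ ?_ hx
  rw [show q - 1 = r + 1 by omega]
  refine det_eq_one_of_cyclic (N := D.torusOffFixed ρ hψ x₀) (fun i => ?_) (fun i => ?_) ?_ hrodd
    (by rwa [Fintype.card_fin]) hdet h0
  · rw [← map_pow, ← map_pow]
    exact D.torusOffFixed_mul_of_fixed ρ hψ x₀
      (B.centerProj_zero_mul_map_t_mul_signBasis hψ hF.odd _)
  · rw [← map_pow, ← map_pow, D.torusOffFixed_mul_of_centerProj_mul_eq_zero ρ hψ x₀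
      (B.centerProj_zero_mul_map_t_mul_centerBasis hψ hy0 _), ← Matrix.mul_assoc, ← map_mul,
      ← map_mul, ← pow_succ', map_pow, map_pow]
  · rw [← map_pow, ← map_pow]
    exact B.map_t_mul_centerBasis hnorm

theorem map_orbitDet {τ : E →+* E} (hρ : ∀ g, (ρ g).map τ = ρ g)
    (hX : B.signBasis.map τ = B.signBasis) {x : Fˣ}
    (hτ : ∀ a, τ (ψ a) = ψ ((x : F) ^ (q + 1) * a)) :
    τ (B.orbitDet ε x₀) =
      (quadraticChar F x : E) * B.orbitDet ε x₀ * (B.comparison τ x).det ^ (r + 1) := by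
  have hχ := quadraticChar_eq_neg_one_of_forall_mem_powers hF.ringChar_ne_two hx₀
  have hsign : ∀ i : Fin 2, (ρ (D.t x₀) ^ (i : ℕ) * B.signBasis).map τ =
      D.torusOffFixed ρ hψ x⁻¹ * (ρ (D.t x₀) ^ (i : ℕ) * B.signBasis) := fun i => by
    rw [← map_pow, ← map_pow, D.torusOffFixed_mul_of_fixed ρ hψ _
      (B.centerProj_zero_mul_map_t_mul_signBasis hψ hF.odd _), Matrix.map_mul, hρ, hX]
  have hcenter : ∀ i : Fin (r + 1), (ρ (D.t x₀) ^ (i : ℕ) * B.centerBasis).map τ =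
      D.torusOffFixed ρ hψ x⁻¹ *
        (ρ (D.t x₀) ^ (i : ℕ) * B.centerBasis * B.comparison τ x) := fun i => by
    rw [← Matrix.mul_assoc, ← map_pow, ← map_pow,
      D.torusOffFixed_mul_of_centerProj_mul_eq_zero ρ hψ _
        (B.centerProj_zero_mul_map_t_mul_centerBasis hψ hy0 _), Matrix.map_mul, hρ,
      B.map_centerBasis hρ hτ]
    simp only [← Matrix.mul_assoc, ← map_mul]
    rw [mul_comm x⁻¹]
  have hinv : quadraticChar F (x⁻¹ : Fˣ) = quadraticChar F x := by
    rw [Units.val_inv_eq_inv_val, ← MulChar.inv_apply', (quadraticChar_isQuadratic F).inv]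
  rw [orbitDet, map_frameDet, funext hsign, funext hcenter, frameDet_mul_left, frameDet_mul_right,
    D.det_torusOffFixed ρ hψ hx₀ hχ hdet, hinv, Finset.prod_const, Finset.card_univ,
    Fintype.card_fin, mul_assoc]

end OrbitDet

end BorelFrame

section Descent

variable {L E : Type*} [Field L] [Field E] [Algebra L E] [FiniteDimensional L E]

theorem exists_mul_eq_of_isMulCocycle {c : (E ≃ₐ[L] E) → E} (hc : ∀ γ, c γ ≠ 0)
    (hmul : ∀ γ γ', c (γ * γ') = γ (c γ') * c γ) : ∃ β : E, β ≠ 0 ∧ ∀ γ, c γ * β = γ β := by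
  obtain ⟨β, hβ⟩ := groupCohomology.isMulCoboundary₁_of_isMulCocycle₁_of_aut_to_units
    (fun γ => Units.mk0 (c γ) (hc γ)) fun γ γ' => Units.ext (by simpa using hmul γ γ')
  refine ⟨β, β.ne_zero, fun γ => ?_⟩
  simpa using (congrArg Units.val (div_eq_iff_eq_mul.mp (hβ γ))).symm

variable [IsGalois L E]

theorem exists_map_algebraMap_eq {m n : Type*} {M : Matrix m n E}
    (hM : ∀ γ : E ≃ₐ[L] E, M.map γ = M) : ∃ M₀ : Matrix m n L, M₀.map (algebraMap L E) = M := by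
  have hrange : ∀ i j, ∃ x : L, algebraMap L E x = M i j := fun i j =>
    (IsGalois.mem_range_algebraMap_iff_fixed (M i j)).mpr fun γ => congrFun₂ (hM γ) i j
  choose M₀ hM₀ using hrange
  exact ⟨of M₀, by ext i j; exact hM₀ i j⟩

theorem exists_map_eq_factor_of_trace_eq [CharZero L] {n r : ℕ} {e : Matrix (Fin n) (Fin n) E}
    (he : IsIdempotentElem e) (hγ : ∀ γ : E ≃ₐ[L] E, e.map γ = e) (hr : e.trace = r) :
    ∃ b : Matrix (Fin n) (Fin r) E, ∃ b' : Matrix (Fin r) (Fin n) E,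
      b * b' = e ∧ b' * b = 1 ∧ ∀ γ : E ≃ₐ[L] E, b.map γ = b := by
  have hinj := (algebraMap L E).injective
  obtain ⟨e₀, rfl⟩ := exists_map_algebraMap_eq hγ
  have he₀ : IsIdempotentElem e₀ :=
    Matrix.map_injective hinj ((Matrix.map_mul (f := algebraMap L E)).trans he)
  have hr₀ : e₀.trace = r :=
    hinj ((AddMonoidHom.map_trace (algebraMap L E) e₀).trans (hr.trans (map_natCast _ r).symm))
  obtain ⟨b, b', hbb', hb'b⟩ := exists_factor_of_trace_eq he₀ hr₀
  refine ⟨b.map (algebraMap L E), b'.map (algebraMap L E), ?_, ?_, fun γ => ?_⟩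
  · rw [← Matrix.map_mul, hbb']
  · rw [← Matrix.map_mul, hb'b, Matrix.map_one _ (map_zero _) (map_one _)]
  · ext i j
    simp

-- The Galois-fixed witness is `δ₁ δ ^ h β ^ h g / ((star β) ^ h Δ q)`: the factor `β` absorbs the
-- cocycle `c` and `g` absorbs the character `χ`.
theorem exists_eq_natCast_mul_norm [CharZero E] [StarRing E]
    (hstar : ∀ (γ : E ≃ₐ[L] E) x, γ (star x) = star (γ x)) {d Δ δ₁ δ β g : E} {q h : ℕ}
    {c χ : (E ≃ₐ[L] E) → E} (hd : d * (Δ * star Δ) = δ₁ ^ 2 * δ ^ (2 * h)) (hδ₁ : star δ₁ = δ₁)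
    (hδ : star δ = δ) (hγδ₁ : ∀ γ : E ≃ₐ[L] E, γ δ₁ = δ₁)
    (hγδ : ∀ γ : E ≃ₐ[L] E, γ δ = star (c γ) * δ * c γ)
    (hγΔ : ∀ γ : E ≃ₐ[L] E, γ Δ = χ γ * Δ * c γ ^ (2 * h)) (hβ : β ≠ 0)
    (hγβ : ∀ γ : E ≃ₐ[L] E, c γ * β = γ β) (hg : g * star g = q)
    (hγg : ∀ γ : E ≃ₐ[L] E, γ g = χ γ * g) (hq : q ≠ 0) (hd0 : d ≠ 0) (hΔ0 : Δ ≠ 0) :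
    ∃ z : L, z ≠ 0 ∧ d = q * (algebraMap L E z * star (algebraMap L E z)) := by
  have hqE : (q : E) ≠ 0 := Nat.cast_ne_zero.mpr hq
  have hg0 : g ≠ 0 := by rintro rfl; exact hqE (by rw [← hg, zero_mul])
  have hβ' : star β ≠ 0 := star_ne_zero.mpr hβ
  have hΔ' : star Δ ≠ 0 := star_ne_zero.mpr hΔ0
  let w := δ₁ * δ ^ h * β ^ h * g / (star β ^ h * Δ * q)
  have hw : ∀ γ : E ≃ₐ[L] E, γ w = w := by
    intro γ
    have hχ : χ γ ≠ 0 := fun h0 => hg0 <| (map_eq_zero γ).mp (by rw [hγg, h0, zero_mul])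
    have hc : c γ ≠ 0 := fun h0 => hβ <| (map_eq_zero γ).mp (by rw [← hγβ, h0, zero_mul])
    have hc' : star (c γ) ≠ 0 := star_ne_zero.mpr hc
    simp only [w, map_div₀, map_mul, map_pow, map_natCast, hstar, hγδ₁, hγδ, hγΔ, hγg, ← hγβ,
      star_mul']
    field_simp
    ring
  have hnorm : d = q * (w * star w) := by
    simp only [w, star_div₀, star_mul', star_pow, star_natCast, star_star, hδ₁, hδ]
    field_simp
    linear_combination (exp := 1) q * hd - δ₁ ^ 2 * δ ^ (2 * h) * hg
  obtain ⟨z, hz⟩ := (IsGalois.mem_range_algebraMap_iff_fixed w).mpr hw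
  rw [← hz] at hnorm
  exact ⟨z, by rintro rfl; exact hd0 (by simpa using hnorm), hnorm⟩

end Descent

section GramDet

variable {R : Type*} [CommRing R] [StarRing R] {m s : Type*} [Fintype m] [Fintype s]
  [DecidableEq s] {H : Matrix m m R}

theorem star_det_conjTranspose_mul_mul (hH : Hᴴ = H) (U : Matrix m s R) :
    star (Uᴴ * H * U).det = (Uᴴ * H * U).det := by
  rw [← det_conjTranspose, (isHermitian_conjTranspose_mul_mul U hH).eq]

theorem map_det_conjTranspose_mul_mul {τ : R →+* R} (hτ : ∀ x, τ (star x) = star (τ x))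
    (hH : H.map τ = H) (U : Matrix m s R) :
    τ (Uᴴ * H * U).det = ((U.map τ)ᴴ * H * U.map τ).det := by
  rw [RingHom.map_det, RingHom.mapMatrix_apply, Matrix.map_mul, Matrix.map_mul, hH,
    conjTranspose_map τ fun x => (hτ x)]

end GramDet

theorem degree_eq_of_odd {q r : ℕ} (hq : q = r + 2) (hr : Odd r) :
    (q - 1) * (q ^ 2 - q + 1) = (q ^ 2 - 1) / 2 * 2 + q * (q - 2) * (r + 1) := by
  obtain ⟨l, rfl⟩ := hr
  subst hq
  have hsq : (2 * l + 1 + 2) ^ 2 - 1 = (2 * l ^ 2 + 6 * l + 4) * 2 := by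
    rw [Nat.sub_eq_iff_eq_add (Nat.one_le_pow _ _ (by omega))]
    ring
  have hsub : (2 * l + 1 + 2) ^ 2 - (2 * l + 1 + 2) = 4 * l ^ 2 + 10 * l + 6 := by
    rw [Nat.sub_eq_iff_eq_add (Nat.le_self_pow two_ne_zero _)]
    ring
  rw [hsq, hsub, Nat.mul_div_cancel _ two_pos, Nat.add_sub_cancel,
    show 2 * l + 1 + 2 - 1 = 2 * l + 2 by omega]
  ring

section Core

variable {q : ℕ} {F G : Type*} [Field F] [Group G] [Fintype F]
  {D : BorelData q F G} {L E : Type*} [Field L] [Field E] [Algebra L E]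
  {n : ℕ} {ρ : G →* Matrix (Fin n) (Fin n) E}
  {ψ : AddChar F E}

theorem BorelFrame.map_det_conjTranspose_centerBasis [DecidableEq F] [StarRing E] {y : F} {s m : ℕ}
    (B : BorelFrame D ρ ψ y s m) {τ : E →+* E} (hρ : ∀ g, (ρ g).map τ = ρ g) {x : Fˣ}
    (hτ : ∀ a, τ (ψ a) = ψ ((x : F) ^ (q + 1) * a)) (hstar : ∀ x, τ (star x) = star (τ x))
    {H : Matrix (Fin n) (Fin n) E} (hHτ : H.map τ = H) (hH : ∀ g, (ρ g)ᴴ * H * ρ g = H) :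
    τ (B.centerBasisᴴ * H * B.centerBasis).det =
      star (B.comparison τ x).det * (B.centerBasisᴴ * H * B.centerBasis).det *
        (B.comparison τ x).det := by
  rw [map_det_conjTranspose_mul_mul hstar hHτ, B.map_centerBasis hρ hτ,
    conjTranspose_mul_mul_mul (hH _), ← det_conjTranspose, ← det_mul, ← det_mul,
    conjTranspose_mul]
  simp only [Matrix.mul_assoc]

variable [FiniteDimensional L E]

theorem BorelFrame.exists_det_comparison_mul_eq [DecidableEq F] (hψ : ψ.IsPrimitive) {y : F}
    {s m : ℕ} (B : BorelFrame D ρ ψ y s m)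
    (hdet : ∀ x : Fˣ, x ^ (q + 1) = 1 → (B.centerDual * ρ (D.t x) * B.centerBasis).det = 1)
    (hγρ : ∀ (γ : E ≃ₐ[L] E) g, (ρ g).map γ = ρ g) {x : (E ≃ₐ[L] E) → Fˣ}
    (hx : ∀ γ a, γ (ψ a) = ψ ((x γ : F) ^ (q + 1) * a)) :
    ∃ β : E, β ≠ 0 ∧ ∀ γ : E ≃ₐ[L] E, (B.comparison (γ : E →+* E) (x γ)).det * β = γ β := by
  refine exists_mul_eq_of_isMulCocycle
    (fun γ => B.det_comparison_ne_zero (τ := (γ : E →+* E)) (hγρ γ) (hx γ)) fun γ γ' => ?_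
  have hcomp : ((γ * γ' : E ≃ₐ[L] E) : E →+* E) = (γ : E →+* E).comp (γ' : E →+* E) :=
    RingHom.ext fun _ => rfl
  rw [hcomp]
  exact B.det_comparison_comp hψ hdet (hγρ γ) (hγρ γ') (hx γ) (hx γ') (hx (γ * γ'))

variable [CharZero E] [IsGalois L E]

theorem BorelFrame.exists_map_signBasis_eq [CharZero L] [DecidableEq F]
    (hF : HasOddSquareCard q F) (hψ : ψ.IsPrimitive)
    (hγρ : ∀ (γ : E ≃ₐ[L] E) g, (ρ g).map γ = ρ g)
    (hγψ : ∀ γ : E ≃ₐ[L] E, ∃ x : Fˣ, ∀ a, γ (ψ a) = ψ ((x : F) ^ (q + 1) * a))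
    (h0 : D.uniProj ρ ψ 0 = 0) (htrace0 : (D.centerProj ρ ψ 0).trace = (q ^ 2 - 1 : ℕ)) {y : F}
    {m : ℕ} (htrace : (D.centerProj ρ ψ y).trace = m) :
    ∃ B : BorelFrame D ρ ψ y ((q ^ 2 - 1) / 2) m,
      ∀ γ : E ≃ₐ[L] E, B.signBasis.map γ = B.signBasis := by
  have hγsign : ∀ γ : E ≃ₐ[L] E, (D.signProj ρ ψ 1).map γ = D.signProj ρ ψ 1 := fun γ => by
    obtain ⟨x, hx⟩ := hγψ γ
    have hχ : quadraticChar F ↑(x ^ (q + 1)) = 1 := by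
      rw [Units.val_pow_eq_pow_val, quadraticChar_pow_of_even x hF.odd.add_one]
    have hmap := D.map_signProj ρ (γ : E →+* E) (hγρ γ) (c := x ^ (q + 1))
      (fun a => by simpa using hx a) 1
    rwa [hχ, mul_one] at hmap
  obtain ⟨ξ, hξ⟩ := quadraticChar_exists_neg_one hF.ringChar_ne_two
  have hξ0 : ξ ≠ 0 := by rintro rfl; simp at hξ
  obtain ⟨X, X', hX, hX', hγX⟩ := exists_map_eq_factor_of_trace_eq
    (D.isIdempotentElem_signProj ρ hψ 1) hγsign
    (D.trace_signProj_one ρ hF hψ h0 (x := Units.mk0 ξ hξ0) hξ htrace0)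
  obtain ⟨b, b', hb, hb'⟩ := exists_factor_of_trace_eq
    ((D.orthogonalIdempotents_centerProj ρ hψ).idem y) htrace
  exact ⟨⟨X, X', hX, hX', b, b', hb, hb'⟩, hγX⟩

variable [StarRing E] (hF : HasOddSquareCard q F) (hψ : ψ.IsPrimitive)
  (hfr : ∀ a, ψ (a ^ q) = ψ a) (hstar : ∀ (γ : E ≃ₐ[L] E) x, γ (star x) = star (γ x))
  (hstarψ : ∀ a, star (ψ a) = ψ (-a))
  (hγψ : ∀ γ : E ≃ₐ[L] E, ∃ x : Fˣ, ∀ a, γ (ψ a) = ψ ((x : F) ^ (q + 1) * a))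
  (hγρ : ∀ (γ : E ≃ₐ[L] E) g, (ρ g).map γ = ρ g) {H : Matrix (Fin n) (Fin n) E}
  (hγH : ∀ γ : E ≃ₐ[L] E, H.map γ = H) (hHdet : H.det ≠ 0) (hHherm : Hᴴ = H)
  (hH : ∀ g, (ρ g)ᴴ * H * ρ g = H) (h0 : D.uniProj ρ ψ 0 = 0)

include hF hfr hstar hstarψ hγψ hγρ hγH hHdet hHherm hH h0

theorem BorelFrame.exists_det_eq_natCast_mul_norm [DecidableEq F] {x₀ : Fˣ}
    (hx₀ : ∀ x, x ∈ Submonoid.powers x₀) (hdet : (D.torusOffFixed ρ hψ x₀).det = -1) {y : F}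
    (hy0 : y ≠ 0) (hy : y ^ q = -y) {r s m : ℕ} (hr : q = r + 2) (hm : Odd m)
    (ε : Fin n ≃ (Fin s × Fin 2) ⊕ (Fin m × Fin (r + 1))) (B : BorelFrame D ρ ψ y s m)
    (hγX : ∀ γ : E ≃ₐ[L] E, B.signBasis.map γ = B.signBasis) :
    ∃ z : L, z ≠ 0 ∧ H.det = q * (algebraMap L E z * star (algebraMap L E z)) := by
  obtain ⟨h, hh⟩ : ∃ h, r + 1 = 2 * h := by
    obtain ⟨l, hl⟩ := hF.odd
    exact ⟨l, by omega⟩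
  have hΔ := B.orbitDet_ne_zero hF hψ hx₀ hy0 hr ε hfr hy h0
  have hcentral : ∀ x : Fˣ, x ^ (q + 1) = 1 →
      (B.centerDual * ρ (D.t x) * B.centerBasis).det = 1 := fun x =>
    B.det_centerDual_mul_map_t_mul_centerBasis_eq_one hF hψ hx₀ hy0 hr ε hdet hm hΔ
  choose x hx using hγψ
  obtain ⟨β, hβ, hγβ⟩ := B.exists_det_comparison_mul_eq hψ hcentral hγρ hx
  have hd := B.det_mul_orbitDet_mul_star hF hψ hx₀ hy0 hr ε hstarψ hH
  have hγΔ : ∀ γ : E ≃ₐ[L] E, γ (B.orbitDet ε x₀) = (quadraticChar F (x γ) : E) *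
      B.orbitDet ε x₀ * (B.comparison (γ : E →+* E) (x γ)).det ^ (r + 1) := fun γ =>
    B.map_orbitDet hF hψ hx₀ hy0 ε hdet (τ := (γ : E →+* E)) (hγρ γ) (hγX γ) (hx γ)
  have hγδ₁ : ∀ γ : E ≃ₐ[L] E, γ (B.signBasisᴴ * H * B.signBasis).det =
      (B.signBasisᴴ * H * B.signBasis).det := fun γ => by
    refine (map_det_conjTranspose_mul_mul (τ := (γ : E →+* E)) (hstar γ) (hγH γ) _).trans ?_
    rw [show B.signBasis.map (γ : E →+* E) = _ from hγX γ]
  rw [hh] at hd hγΔ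
  exact exists_eq_natCast_mul_norm hstar hd (star_det_conjTranspose_mul_mul hHherm _)
    (star_det_conjTranspose_mul_mul hHherm _) hγδ₁
    (fun γ => B.map_det_conjTranspose_centerBasis (τ := (γ : E →+* E)) (hγρ γ) (hx γ) (hstar γ)
      (hγH γ) hH) hγΔ hβ hγβ
    (hF.quadraticGaussSum_mul_star hψ hfr hstarψ)
    (fun γ => hF.map_quadraticGaussSum (γ : E →+* E) (x γ) (hx γ)) (by omega) hHdet hΔ

theorem BorelData.exists_det_eq_natCast_mul_norm [CharZero L]
    (hn : n = (q - 1) * (q ^ 2 - q + 1))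
    (htrace0 : (D.centerProj ρ ψ 0).trace = (q ^ 2 - 1 : ℕ))
    (htrace : ∀ y : F, y ≠ 0 → y ^ q = -y → (D.centerProj ρ ψ y).trace = (q * (q - 2) : ℕ))
    (hdet : ∀ x₀ : Fˣ, orderOf x₀ = q ^ 2 - 1 → (D.torusOffFixed ρ hψ x₀).det = -1) :
    ∃ z : L, z ≠ 0 ∧ H.det = q * (algebraMap L E z * star (algebraMap L E z)) := by
  classical
  obtain ⟨r, hr⟩ : ∃ r, q = r + 2 := ⟨q - 2, by have := hF.three_le; omega⟩
  have hrodd : Odd r := by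
    obtain ⟨l, hl⟩ := hF.odd
    exact ⟨l - 1, by omega⟩
  obtain ⟨x₀, hx₀⟩ := IsCyclic.exists_monoid_generator (α := Fˣ)
  obtain ⟨y, hy0, hy⟩ := hF.exists_ne_zero_pow_eq_neg
  obtain ⟨B, hγX⟩ := BorelFrame.exists_map_signBasis_eq hF hψ hγρ hγψ h0 htrace0 (htrace y hy0 hy)
  obtain ⟨ε⟩ : Nonempty
      (Fin n ≃ (Fin ((q ^ 2 - 1) / 2) × Fin 2) ⊕ (Fin (q * (q - 2)) × Fin (r + 1))) :=
    Fintype.card_eq.mp (by rw [hn, degree_eq_of_odd hr hrodd]; simp)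
  exact B.exists_det_eq_natCast_mul_norm hF hψ hfr hstar hstarψ hγψ hγρ hγH hHdet hHherm hH h0 hx₀
    (hdet x₀ (hF.orderOf_eq_of_forall_mem_powers hx₀)) hy0 hy hr
    (hF.odd.mul (by rwa [hr, Nat.add_sub_cancel])) ε hγX

end Core

open IntermediateField in
theorem isCyclotomicExtension_adjoin {k : Type*} [Field k] {L : Subfield k} {ζ : k} {p : ℕ}
    [NeZero p] (hζ : IsPrimitiveRoot ζ p) :
    IsCyclotomicExtension {p} L L⟮ζ⟯ := by
  change IsCyclotomicExtension {p} L L⟮ζ⟯.toSubalgebra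
  rw [adjoin_simple_toSubalgebra_of_isAlgebraic
    (hζ.isIntegral (NeZero.pos p)).tower_top.isAlgebraic]
  exact hζ.adjoin_isCyclotomicExtension L

theorem exists_coprime_map_eq_pow {E : Type*} [CommRing E] [IsDomain E] {z : E} {p : ℕ} [NeZero p]
    (hz : IsPrimitiveRoot z p) {f : E →+* E} (hf : Function.Injective f) :
    ∃ m : ℕ, m.Coprime p ∧ f z = z ^ m := by
  obtain ⟨m, -, hm, h⟩ := hz.isPrimitiveRoot_iff.mp (hz.map_of_injective hf)
  exact ⟨m, hm, h.symm⟩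

section StarField

variable {k : Type*} [Field k] [StarRing k]

theorem star_mem_closure {s : Set k} (hs : ∀ x ∈ s, star x ∈ s) :
    ∀ x ∈ Subfield.closure s, star x ∈ Subfield.closure s := by
  have h : Subfield.closure s ≤ (Subfield.closure s).comap (starRingEnd k) :=
    Subfield.closure_le.mpr fun x hx => Subfield.subset_closure (hs x hx)
  exact h

variable {L : Subfield k} {ζ : k}

open IntermediateField

theorem star_mem_adjoin (hL : ∀ x ∈ L, star x ∈ L) (hζ : star ζ = ζ⁻¹) :
    ∀ x ∈ L⟮ζ⟯, star x ∈ L⟮ζ⟯ := by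
  intro x hx
  induction hx using adjoin_induction with
  | mem x hx =>
    rw [Set.mem_singleton_iff.mp hx, hζ]
    exact inv_mem (mem_adjoin_simple_self L ζ)
  | algebraMap x => exact L⟮ζ⟯.algebraMap_mem ⟨_, hL x x.2⟩
  | add x y _ _ hx hy => rw [star_add]; exact add_mem hx hy
  | inv x _ hx => rw [star_inv₀]; exact inv_mem hx
  | mul x y _ _ hx hy => rw [star_mul]; exact mul_mem hy hx

/-- The involution of `k`, restricted to `L(ζ)`; it is not an instance because it depends on the
stability of `L` and on the value of the involution at `ζ`. -/
@[reducible] def starRingAdjoin (hL : ∀ x ∈ L, star x ∈ L) (hζ : star ζ = ζ⁻¹) :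
    StarRing L⟮ζ⟯ where
  star x := ⟨star x, star_mem_adjoin hL hζ x x.2⟩
  star_involutive x := Subtype.ext (star_star (x : k))
  star_mul x y := Subtype.ext (star_mul (x : k) y)
  star_add x y := Subtype.ext (star_add (x : k) y)

theorem algEquiv_star (hL : ∀ x ∈ L, star x ∈ L) (hζ : star ζ = ζ⁻¹) {p : ℕ} [NeZero p]
    (hp : IsPrimitiveRoot (AdjoinSimple.gen L ζ) p) (γ : L⟮ζ⟯ ≃ₐ[L] L⟮ζ⟯) :
    letI := starRingAdjoin hL hζ
    ∀ x, γ (star x) = star (γ x) := by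
  let _ := starRingAdjoin hL hζ
  let f : L⟮ζ⟯ →ₐ[L] L⟮ζ⟯ :=
    { toRingHom := ((starRingEnd L⟮ζ⟯).comp (γ : L⟮ζ⟯ →+* L⟮ζ⟯)).comp (starRingEnd L⟮ζ⟯)
      commutes' := fun x => congrArg star (γ.commutes ⟨star (x : k), hL x x.2⟩) |>.trans
        (Subtype.ext (star_star (x : k))) }
  obtain ⟨m, -, hγ : γ _ = _⟩ :=
    exists_coprime_map_eq_pow hp (f := (γ : L⟮ζ⟯ →+* L⟮ζ⟯)) γ.injective
  have hgen : star (AdjoinSimple.gen L ζ) = (AdjoinSimple.gen L ζ)⁻¹ := Subtype.ext hζ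
  have hf : f = γ.toAlgHom := by
    refine adjoin_algHom_ext L ?_
    rintro _ rfl
    change star (γ (star (AdjoinSimple.gen L _))) = γ (AdjoinSimple.gen L _)
    rw [hgen, map_inv₀, hγ, star_inv₀, star_pow, hgen, inv_pow, inv_inv]
  intro x
  have h : star (γ (star (star x))) = γ (star x) := DFunLike.congr_fun hf (star x)
  rw [← h, star_star]

end StarField

section TraceAddChar

variable {p : ℕ} [Fact p.Prime] (F : Type*) [Field F] [Algebra (ZMod p) F] {E : Type*} [Field E]
  {z : E}

/-- The additive character `a ↦ z ^ Tr a` of a finite field of characteristic `p`. -/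
def traceAddChar (hz : z ^ p = 1) : AddChar F E :=
  (AddChar.zmodChar p hz).compAddMonoidHom (Algebra.trace (ZMod p) F).toAddMonoidHom

variable {F}

theorem traceAddChar_apply (hz : z ^ p = 1) (a : F) :
    traceAddChar F hz a = z ^ (Algebra.trace (ZMod p) F a).val :=
  AddChar.zmodChar_apply hz _

theorem map_traceAddChar {E' : Type*} [Field E'] {z' : E'} (hz : z ^ p = 1) (hz' : z' ^ p = 1)
    (τ : E →+* E') {m : ℤ} (hτ : τ z = z' ^ m) (a : F) :
    τ (traceAddChar F hz a) = traceAddChar F hz' (m * a) := by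
  rw [← zsmul_eq_mul, AddChar.map_zsmul_eq_zpow, traceAddChar_apply, traceAddChar_apply, map_pow,
    hτ, ← zpow_natCast, ← zpow_natCast, zpow_comm]

theorem star_traceAddChar [StarRing E] (hz : z ^ p = 1) (hstar : star z = z⁻¹) (a : F) :
    star (traceAddChar F hz a) = traceAddChar F hz (-a) := by
  simpa [starRingEnd_apply] using map_traceAddChar hz hz (starRingEnd E) (m := -1)
    (hstar.trans (_root_.zpow_neg_one z).symm) a

variable [Finite F]

theorem traceAddChar_isPrimitive (hz : IsPrimitiveRoot z p) :
    (traceAddChar F hz.pow_eq_one).IsPrimitive := by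
  have hp := (Fact.out : p.Prime).one_lt
  have : Fact (1 < p) := ⟨hp⟩
  obtain ⟨a, ha⟩ := Algebra.trace_surjective (ZMod p) F 1
  refine AddChar.IsPrimitive.of_ne_one fun h => hz.ne_one hp ?_
  simpa [traceAddChar_apply, ha, ZMod.val_one] using DFunLike.congr_fun h a

theorem traceAddChar_pow_char_pow (hz : z ^ p = 1) (k : ℕ) (a : F) :
    traceAddChar F hz (a ^ p ^ k) = traceAddChar F hz a := by
  induction k generalizing a with
  | zero => simp
  | succ k ih =>
    have : CharP F p := charP_of_injective_algebraMap (algebraMap (ZMod p) F).injective p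
    have h := Algebra.trace_eq_of_algEquiv (FiniteField.frobeniusAlgEquiv (ZMod p) F p) (a ^ p ^ k)
    rw [FiniteField.frobeniusAlgEquiv_apply, ZMod.card] at h
    rw [pow_succ, pow_mul, traceAddChar_apply, h, ← traceAddChar_apply hz, ih]

theorem HasOddSquareCard.exists_map_traceAddChar_eq {k q : ℕ} {F : Type*} [Field F] [Fintype F]
    [Algebra (ZMod p) F] (hF : HasOddSquareCard q F) (hq : q = p ^ k) (hz : IsPrimitiveRoot z p)
    (γ : E →+* E) : ∃ x : Fˣ, ∀ a : F, γ (traceAddChar F hz.pow_eq_one a) =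
      traceAddChar F hz.pow_eq_one ((x : F) ^ (q + 1) * a) := by
  have : CharP F p := charP_of_injective_algebraMap (algebraMap (ZMod p) F).injective p
  have : NeZero p := ⟨(Fact.out : p.Prime).ne_zero⟩
  obtain ⟨m, hm, hγ⟩ := exists_coprime_map_eq_pow hz γ.injective
  have hm0 : (m : F) ≠ 0 := fun h => (Fact.out : p.Prime).ne_one
    (Nat.eq_one_of_dvd_coprimes hm.symm dvd_rfl ((CharP.cast_eq_zero_iff F p m).mp h))
  obtain ⟨x, hx⟩ := hF.exists_norm_eq hm0 (by rw [hq, ← iterateFrobenius_def, map_natCast])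
  refine ⟨x, fun a => ?_⟩
  rw [hx, map_traceAddChar hz.pow_eq_one hz.pow_eq_one γ (hγ.trans (zpow_natCast z m).symm),
    Int.cast_natCast]

end TraceAddChar

section CuspidalRestriction

variable {q : ℕ} {F G : Type*} [Field F] [Fintype F] [Group G] {n : ℕ}

/-- The properties of the restriction to the Borel subgroup of a character of degree
`(q - 1) * (q ^ 2 - q + 1)` that determine its unitary discriminant: the unipotent radical fixes no
vector, and the isotypic components for the center of the unipotent radical have the dimensions and
the torus determinant that irreducibility forces. -/
structure BorelData.HasCuspidalRestriction {E : Type*} [Field E] [CharZero E]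
    (D : BorelData q F G) (ρ : G →* Matrix (Fin n) (Fin n) E) {ψ : AddChar F E}
    (hψ : ψ.IsPrimitive) : Prop where
  uniProj_zero : D.uniProj ρ ψ 0 = 0
  trace_centerProj_zero : (D.centerProj ρ ψ 0).trace = (q ^ 2 - 1 : ℕ)
  trace_centerProj {y : F} :
    y ≠ 0 → y ^ q = -y → (D.centerProj ρ ψ y).trace = (q * (q - 2) : ℕ)
  det_torusOffFixed {x₀ : Fˣ} :
    orderOf x₀ = q ^ 2 - 1 → (D.torusOffFixed ρ hψ x₀).det = -1

theorem BruhatData.hasCuspidalRestriction [Fintype G] (D : BruhatData q F G)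
    (hF : HasOddSquareCard q F) (ρ : G →* Matrix (Fin n) (Fin n) ℂ) [(columnRep ρ).IsIrreducible]
    (hρ : ∑ g, ‖(ρ g).trace‖ ^ 2 = Fintype.card G) (hn : n = (q - 1) * (q ^ 2 - q + 1))
    {ψ : AddChar F ℂ} (hψ : ψ.IsPrimitive) (hfr : ∀ a, ψ (a ^ q) = ψ a) :
    D.HasCuspidalRestriction ρ hψ :=
  have ⟨h0, htrace⟩ := D.uniProj_zero_eq_zero_and_trace_centerProj_zero hF hψ
    (D.trace_centerProj_zero_eq_or_eq hF ρ hψ hfr hn hρ)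
  { uniProj_zero := h0
    trace_centerProj_zero := htrace
    trace_centerProj := D.trace_centerProj_eq_mul_sub_two ρ hF hψ hfr hn htrace
    det_torusOffFixed := D.det_map_t_mul_one_sub_centerProj_zero hF ρ hψ h0 htrace }

namespace BorelData

variable {E E' : Type*} [Field E] [Field E'] (D : BorelData q F G)
  {ρ : G →* Matrix (Fin n) (Fin n) E} {ψ : AddChar F E}
  {ρ' : G →* Matrix (Fin n) (Fin n) E'} {ψ' : AddChar F E'} (f : E →+* E')
  (hρ' : ∀ g, ρ' g = (ρ g).map f) (hψ' : ∀ a, ψ' a = f (ψ a))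
include hρ' hψ'

theorem centerProj_eq_map (y : F) : D.centerProj ρ' ψ' y = (D.centerProj ρ ψ y).map f := by
  simp only [centerProj, hρ', map_fourierCoeff f hψ']

theorem uniProj_eq_map (s : F) : D.uniProj ρ' ψ' s = (D.uniProj ρ ψ s).map f := by
  simp only [uniProj, map_fourierCoeff f hψ', Matrix.map_mul, hρ', D.centerProj_eq_map f hρ' hψ']

theorem HasCuspidalRestriction.of_map [CharZero E] [CharZero E'] {hψp : ψ'.IsPrimitive}
    (h : D.HasCuspidalRestriction ρ' hψp) (hψ : ψ.IsPrimitive) :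
    D.HasCuspidalRestriction ρ hψ where
  uniProj_zero := map_injective f.injective <| by
    change (D.uniProj ρ ψ 0).map f = Matrix.map 0 f
    rw [← D.uniProj_eq_map f hρ' hψ', h.uniProj_zero, Matrix.map_zero _ (map_zero f)]
  trace_centerProj_zero := f.injective <| by
    rw [AddMonoidHom.map_trace f, ← D.centerProj_eq_map f hρ' hψ', h.trace_centerProj_zero,
      map_natCast]
  trace_centerProj hy0 hy := f.injective <| by
    rw [AddMonoidHom.map_trace f, ← D.centerProj_eq_map f hρ' hψ', h.trace_centerProj hy0 hy,
      map_natCast]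
  det_torusOffFixed {x₀} hx₀ := f.injective <| by
    rw [map_neg, map_one, ← h.det_torusOffFixed hx₀, f.map_det, torusOffFixed_apply,
      torusOffFixed_apply, map_add, map_mul, map_sub, map_one, hρ',
      D.centerProj_eq_map f hρ' hψ']
    rfl

end BorelData

end CuspidalRestriction

section Descent

open IntermediateField

theorem sum_norm_trace_sq_eq_card {G : Type*} [Group G] [Fintype G] {n : ℕ}
    (ρ : G →* Matrix (Fin n) (Fin n) ℂ) [(columnRep ρ).IsIrreducible]
    {H : Matrix (Fin n) (Fin n) ℂ} (hHdet : IsUnit H.det) (hH : ∀ g, (ρ g)ᴴ * H * ρ g = H) :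
    ∑ g, ‖(ρ g).trace‖ ^ 2 = Fintype.card G := by
  have h := sum_trace_mul_trace_inv_eq_card ρ
  simp only [← star_trace_eq_trace_inv ρ hHdet hH, ← starRingEnd_apply, Complex.mul_conj'] at h
  exact_mod_cast h

theorem exists_monoidHom_map_eq {G k : Type*} [Monoid G] [Field k] {n : ℕ} {L : Subfield k}
    {ρ : G →* Matrix (Fin n) (Fin n) k} (hρ : ∀ g i j, ρ g i j ∈ L) :
    ∃ ρ₀ : G →* Matrix (Fin n) (Fin n) L, ∀ g, ρ g = (ρ₀ g).map L.subtype := by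
  let f : Matrix (Fin n) (Fin n) L →+* Matrix (Fin n) (Fin n) k := L.subtype.mapMatrix
  have hf : Function.Injective f := map_injective L.subtype.injective
  let ρ₀ (g : G) : Matrix (Fin n) (Fin n) L := of fun i j => ⟨ρ g i j, hρ g i j⟩
  exact ⟨{
    toFun := ρ₀
    map_one' := hf <| (map_one ρ).trans (map_one f).symm
    map_mul' := fun g h => hf <| (map_mul ρ g h).trans (map_mul f (ρ₀ g) (ρ₀ h)).symm },
    fun _ => rfl⟩

section DetEq

variable {p k q n : ℕ} [Fact p.Prime] {F G : Type*} [Field F] [Fintype F] [Group G]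
  (hq : q = p ^ k) (hF : HasOddSquareCard q F) {L : Subfield ℂ} (hL : ∀ x ∈ L, star x ∈ L)
  {ρ : G →* Matrix (Fin n) (Fin n) ℂ} (hn : n = (q - 1) * (q ^ 2 - q + 1))
  (hρL : ∀ g i j, ρ g i j ∈ L) {H : Matrix (Fin n) (Fin n) ℂ} (hHL : ∀ i j, H i j ∈ L)
  (hHdet : IsUnit H.det) (hHherm : Hᴴ = H) (hH : ∀ g, (ρ g)ᴴ * H * ρ g = H)

include hq hF hL hn hρL hHL hHdet hHherm hH

theorem BorelData.HasCuspidalRestriction.exists_det_eq_natCast_mul_norm [Algebra (ZMod p) F]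
    {D : BorelData q F G} {ζ : ℂ} (hζ : IsPrimitiveRoot ζ p)
    {hψζ : (traceAddChar F hζ.pow_eq_one).IsPrimitive} (hD : D.HasCuspidalRestriction ρ hψζ) :
    ∃ z ∈ L, z ≠ 0 ∧ H.det = q * (z * star z) := by
  have hp := (Fact.out : p.Prime).ne_zero
  have : NeZero p := ⟨hp⟩
  have hζstar : star ζ = ζ⁻¹ := (Complex.inv_eq_conj (hζ.norm'_eq_one hp)).symm
  let _ := starRingAdjoin hL hζstar
  have := isCyclotomicExtension_adjoin (L := L) hζ
  have := IsCyclotomicExtension.isGalois {p} L L⟮ζ⟯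
  have := IsCyclotomicExtension.finiteDimensional {p} L L⟮ζ⟯
  have hgen : IsPrimitiveRoot (AdjoinSimple.gen L ζ) p :=
    IsPrimitiveRoot.coe_submonoidClass_iff.mp hζ
  let ι := algebraMap L⟮ζ⟯ ℂ
  have hψ := traceAddChar_isPrimitive (F := F) hgen
  have hψι (a : F) : ι (traceAddChar F hgen.pow_eq_one a) = traceAddChar F hζ.pow_eq_one a := by
    simpa using map_traceAddChar hgen.pow_eq_one hζ.pow_eq_one ι (m := 1) (zpow_one ζ).symm a
  obtain ⟨ρ₀, hρ₀⟩ := exists_monoidHom_map_eq hρL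
  let ρE := (algebraMap L L⟮ζ⟯).mapMatrix.toMonoidHom.comp ρ₀
  let HE : Matrix (Fin n) (Fin n) L⟮ζ⟯ := of fun i j => algebraMap L L⟮ζ⟯ ⟨H i j, hHL i j⟩
  have hinj := map_injective (m := Fin n) (n := Fin n) ι.injective
  have hDE : D.HasCuspidalRestriction ρE hψ := hD.of_map _ ι hρ₀ (fun a => (hψι a).symm) hψ
  have hHE (g : G) : (ρE g)ᴴ * HE * ρE g = HE := hinj <| by
    refine Eq.trans ?_ (hH g)
    simp only [Matrix.map_mul]
    rw [hρ₀]
    rfl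
  obtain ⟨z, hz0, hz⟩ := D.exists_det_eq_natCast_mul_norm (ρ := ρE) (H := HE) hF hψ
    (by simp [hq, traceAddChar_pow_char_pow]) (algEquiv_star hL hζstar hgen)
    (star_traceAddChar hgen.pow_eq_one (Subtype.ext hζstar))
    (fun γ => hF.exists_map_traceAddChar_eq hq hgen (γ : L⟮ζ⟯ →+* L⟮ζ⟯))
    (fun γ g => by ext i j; exact congrArg Subtype.val (γ.commutes _))
    (fun γ => by ext i j; exact congrArg Subtype.val (γ.commutes _))
    (fun h => hHdet.ne_zero ((ι.map_det HE).symm.trans (by rw [h, map_zero])))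
    (hinj hHherm) hHE hDE.uniProj_zero hn hDE.trace_centerProj_zero
    (fun _ => hDE.trace_centerProj) (fun _ => hDE.det_torusOffFixed)
  refine ⟨z, z.2, fun h => hz0 (Subtype.ext h), (ι.map_det HE).symm.trans ?_⟩
  rw [hz, map_mul, map_natCast, map_mul]
  rfl

theorem BruhatData.exists_det_eq_natCast_mul_norm [CharP F p] [Finite G]
    (D : BruhatData q F G) [(columnRep ρ).IsIrreducible] :
    ∃ z ∈ L, z ≠ 0 ∧ H.det = q * (z * star z) := by
  have := Fintype.ofFinite G
  let _ := ZMod.algebra F p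
  have hζ := Complex.isPrimitiveRoot_exp p (Fact.out : p.Prime).ne_zero
  exact BorelData.HasCuspidalRestriction.exists_det_eq_natCast_mul_norm hq hF hL hn hρL hHL hHdet
    hHherm hH hζ <| D.hasCuspidalRestriction hF ρ (sum_norm_trace_sq_eq_card ρ hHdet hH) hn
      (traceAddChar_isPrimitive hζ) (by simp [hq, traceAddChar_pow_char_pow])

end DetEq

end Descent

section Characters

variable {G : Type} [Group G] {n : ℕ} {ρ : G →* GL (Fin n) ℂ}

theorem IsIrredRep.isIrreducible_columnRep (hρ : IsIrredRep ρ) :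
    (columnRep ((Units.coeHom _).comp ρ)).IsIrreducible where
  exists_pair_ne := by
    have : Nonempty (Fin n) := ⟨0, hρ.1⟩
    refine ⟨⊥, ⊤, fun h => ?_⟩
    exact bot_ne_top (congrArg Subrepresentation.toSubmodule h)
  eq_bot_or_eq_top W := (hρ.2 W.toSubmodule fun g _ hv =>
    W.apply_mem_toSubmodule g hv).imp (fun h => Subrepresentation.toSubmodule_injective h)
    fun h => Subrepresentation.toSubmodule_injective h

theorem IsIrrChar.isIrreducible_columnRep [Finite G] (h : IsIrrChar (charOf ρ)) :
    (columnRep ((Units.coeHom _).comp ρ)).IsIrreducible := by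
  obtain ⟨_, σ, hσ, hρσ⟩ := h
  have := hσ.isIrreducible_columnRep
  refine isIrreducible_of_character_eq (ρ := columnRep ((Units.coeHom _).comp σ)) ?_
  ext g
  rw [character_columnRep, character_columnRep]
  exact congrFun hρσ g

theorem star_mem_charField {H : Matrix (Fin n) (Fin n) ℂ} (hHdet : IsUnit H.det)
    (hH : ∀ g, (ρ g : Matrix (Fin n) (Fin n) ℂ)ᴴ * H * ρ g = H) :
    ∀ x ∈ charField (charOf ρ), star x ∈ charField (charOf ρ) :=
  star_mem_closure <| by
    rintro _ ⟨g, rfl⟩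
    exact ⟨g⁻¹, (star_trace_eq_trace_inv ((Units.coeHom _).comp ρ) hHdet hH g).symm⟩

theorem charOf_one (ρ : G →* GL (Fin n) ℂ) : charOf ρ 1 = n := by
  simp [charOf]

end Characters

section Sign

theorem degree_mod_four {q : ℕ} (hq : Odd q) :
    (q - 1) * (q ^ 2 - q + 1) % 4 = (q - 1) % 4 := by
  obtain ⟨l, rfl⟩ := hq
  have hsq : (2 * l + 1) ^ 2 - (2 * l + 1) = (2 * l + 1) * (2 * l) := by
    rw [sq, ← Nat.mul_sub_one, Nat.add_sub_cancel]
  rw [hsq, Nat.add_sub_cancel, show 2 * l * ((2 * l + 1) * (2 * l) + 1) =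
    2 * l + 4 * (l ^ 2 * (2 * l + 1)) by ring, Nat.add_mul_mod_self_left]

variable {R : Type*} [Ring R] {n : ℕ}

theorem neg_one_pow_triangle_of_mod_four_eq_zero (hn : n % 4 = 0) :
    (-1 : R) ^ (n * (n - 1) / 2) = 1 := by
  obtain ⟨m, rfl⟩ := Nat.dvd_of_mod_eq_zero hn
  rw [show 4 * m * (4 * m - 1) = 2 * (2 * (m * (4 * m - 1))) by ring,
    Nat.mul_div_cancel_left _ two_pos]
  exact (even_two_mul _).neg_one_pow

theorem neg_one_pow_triangle_of_mod_four_eq_two (hn : n % 4 = 2) :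
    (-1 : R) ^ (n * (n - 1) / 2) = -1 := by
  obtain ⟨m, rfl⟩ : ∃ m, n = 4 * m + 2 := ⟨n / 4, by omega⟩
  rw [show (4 * m + 2) * (4 * m + 2 - 1) = 2 * (2 * (4 * m ^ 2 + 3 * m) + 1) by
    rw [Nat.add_sub_assoc one_le_two]; ring, Nat.mul_div_cancel_left _ two_pos]
  exact (odd_two_mul_add_one _).neg_one_pow

end Sign

theorem SU3.hasUnitaryDisc {p k q n : ℕ} [Fact p.Prime] (hpodd : Odd p) (hq : q = p ^ k)
    {F : Type} [Field F] [Fintype F] [ExpChar F p] (hF : Fintype.card F = q ^ 2)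
    {χ : SU3 p k F → ℂ} (hχ : IsIrrChar χ) (hn : n = (q - 1) * (q ^ 2 - q + 1)) (hdeg : χ 1 = n) :
    HasUnitaryDisc χ ((-1) ^ (n * (n - 1) / 2) * q) := by
  rintro m ρ rfl hρL H hHL hHdet hHherm hH
  obtain rfl : m = n := by exact_mod_cast (charOf_one ρ).symm.trans hdeg
  have : CharP F p := by
    obtain ⟨_⟩ | _ := ‹ExpChar F p›
    exacts [absurd rfl (Fact.out : Nat.Prime 1).ne_one, ‹_›]
  have hFq : HasOddSquareCard q F := ⟨hq ▸ hpodd.pow, hF⟩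
  have := hχ.isIrreducible_columnRep
  obtain ⟨z, hzL, hz0, hz⟩ := BruhatData.exists_det_eq_natCast_mul_norm (p := p) hq hFq
    (star_mem_charField hHdet hH) (ρ := (Units.coeHom _).comp ρ) hn hρL hHL hHdet hHherm hH
    (SU3.bruhatData hq hFq)
  exact ⟨z, hzL, hz0, by rw [hz, mul_assoc, starRingEnd_apply]⟩

theorem stmt14_general (p k q : ℕ) (hp : p.Prime) (hpodd : Odd p) (hq : q = p ^ k)
    (F : Type) [Field F] [Fintype F] [ExpChar F p] (hF : Fintype.card F = q ^ 2)
    (χ : ↥(SU3 p k F) → ℂ) (hχ : IsIrrChar χ)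
    (hdeg : χ 1 = (((q - 1) * (q ^ 2 - q + 1) : ℕ) : ℂ)) :
    (q % 4 = 1 → HasUnitaryDisc χ (q : ℂ)) ∧
    (q % 4 = 3 → HasUnitaryDisc χ (-(q : ℂ))) := by
  have : Fact p.Prime := ⟨hp⟩
  have hmod := degree_mod_four (q := q) (hq ▸ hpodd.pow)
  have hdisc := SU3.hasUnitaryDisc hpodd hq hF hχ rfl hdeg
  refine ⟨fun h => ?_, fun h => ?_⟩
  · rwa [neg_one_pow_triangle_of_mod_four_eq_zero (by omega), one_mul] at hdisc
  · rwa [neg_one_pow_triangle_of_mod_four_eq_two (by omega), neg_one_mul] at hdisc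

/-- every irreducible character of `SU₃(q)`, `q` odd, of degree
`(q-1)(q²-q+1)` with non-real character field has unitary discriminant `q` if
`q ≡ 1 (mod 4)` and `-q` if `q ≡ 3 (mod 4)`. -/
theorem stmt14 (p k q : ℕ) (hp : p.Prime) (hpodd : Odd p) (hk : 0 < k) (hq : q = p ^ k)
    (F : Type) [Field F] [Fintype F] [ExpChar F p] (hF : Fintype.card F = q ^ 2)
    (χ : ↥(SU3 p k F) → ℂ) (hχ : IsIrrChar χ)
    (hdeg : χ 1 = (((q - 1) * (q ^ 2 - q + 1) : ℕ) : ℂ))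
    (hnr : NotReal χ) :
    (q % 4 = 1 → HasUnitaryDisc χ (q : ℂ)) ∧
    (q % 4 = 3 → HasUnitaryDisc χ (-(q : ℂ))) :=
  stmt14_general p k q hp hpodd hq F hF χ hχ hdeg

end Paper
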